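/- Let N ≥ 3, let K ⊂ ℝ^N be a nonempty finite set of points, let p > 0, let γ ∈ (0,1), and let φ : (0,∞) → (0,∞) be locally γ-Hölder continuous, monotone on [r₁,∞) for some r₁ > 0, and satisfying ∫₁^∞ r·φ(r) dr < ∞ and ∫₀¹ r^{(1+p)(N−2)+1} φ(r) dr < ∞. Then there exists a twice continuously differentiable function ũ : ℝ^N \ K → ℝ with ũ > 0, satisfying −Δũ(x) = φ(dist(x,K)) ũ(x)^{−p} for all x ∈ ℝ^N \ K and ũ(x) → 0 as |x| → ∞, which is minimal: for every C² positive solution u of the inequality −Δu ≥ φ(dist(x,K)) u^{−p} on ℝ^N \ K one has ũ ≤ u on ℝ^N \ K. Moreover, ũ extends to a continuous positive function on all of ℝ^N if and only if ∫₀¹ r·φ(r) dr < ∞. -/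

import Mathlib

open Metric Set MeasureTheory Filter

noncomputable def laplacian {N : ℕ} (u : EuclideanSpace ℝ (Fin N) → ℝ)
    (x : EuclideanSpace ℝ (Fin N)) : ℝ :=
  ∑ i, iteratedFDeriv ℝ 2 u x ![EuclideanSpace.single i 1, EuclideanSpace.single i 1]


/-- Euclidean space abbreviation. -/
abbrev Eu (N : ℕ) := EuclideanSpace ℝ (Fin N)

noncomputable def th0 {N : ℕ} (z : Eu N) : ℝ := expNegInvGlue (1 - ‖z‖^2)
noncomputable def rh0 {N : ℕ} (z : Eu N) : ℝ :=
  2 * (((1 - ‖z‖^2)⁻¹)^2 * expNegInvGlue (1 - ‖z‖^2))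

theorem th0_contDiff {N : ℕ} {n : ℕ∞} : ContDiff ℝ n (th0 (N := N)) :=
  expNegInvGlue.contDiff.comp (contDiff_const.sub (contDiff_norm_sq ℝ))

theorem rh0_contDiff {N : ℕ} {n : ℕ∞} : ContDiff ℝ n (rh0 (N := N)) := by
  have h := (expNegInvGlue.contDiff_polynomial_eval_inv_mul (n := n) (Polynomial.X ^ 2)).comp
    ((contDiff_const (c := (1:ℝ))).sub (contDiff_norm_sq ℝ (E := Eu N) (n := n)))
  have h2 := contDiff_const (c := (2:ℝ)) (E := Eu N) (𝕜 := ℝ) (n := n) |>.mul h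
  have e : (rh0 (N := N)) = fun x => 2 * ((fun x => Polynomial.eval x⁻¹ (Polynomial.X ^ 2) * expNegInvGlue x) ∘
      (fun z : Eu N => 1 - ‖z‖^2)) x := by
    funext z; simp [rh0]
  rw [e]; exact h2

theorem th0_hasFDerivAt {N : ℕ} (z : Eu N) :
    HasFDerivAt (th0 (N := N)) (-(rh0 z) • innerSL ℝ z) z := by
  have h1 := expNegInvGlue.hasDerivAt_polynomial_eval_inv_mul 1 (1 - ‖z‖^2)
  have h2 : HasFDerivAt (fun z : Eu N => 1 - ‖z‖^2) (-((2:ℕ) • innerSL ℝ z)) z :=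
    ((hasStrictFDerivAt_norm_sq z).hasFDerivAt).const_sub 1
  have h3 := h1.comp_hasFDerivAt z h2
  have e : (th0 (N := N)) = (fun x => Polynomial.eval x⁻¹ 1 * expNegInvGlue x) ∘ (fun z : Eu N => 1 - ‖z‖^2) := by
    ext z; simp [th0]
  rw [e]
  refine h3.congr_fderiv ?_
  refine ContinuousLinearMap.ext fun v => ?_
  simp [rh0]
  ring

theorem th0_nonneg {N : ℕ} (z : Eu N) : 0 ≤ th0 z := expNegInvGlue.nonneg _
theorem rh0_nonneg {N : ℕ} (z : Eu N) : 0 ≤ rh0 z := by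
  have := expNegInvGlue.nonneg (1 - ‖z‖^2)
  unfold rh0; positivity
theorem th0_zero {N : ℕ} {z : Eu N} (h : 1 ≤ ‖z‖) : th0 z = 0 := 
  expNegInvGlue.zero_of_nonpos (by nlinarith)
theorem rh0_zero {N : ℕ} {z : Eu N} (h : 1 ≤ ‖z‖) : rh0 z = 0 := by
  rw [rh0, expNegInvGlue.zero_of_nonpos (by nlinarith)]; simp
theorem th0_pos {N : ℕ} {z : Eu N} (h : ‖z‖ < 1) : 0 < th0 z := 
  expNegInvGlue.pos_of_pos (by nlinarith [norm_nonneg z])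
theorem rh0_pos {N : ℕ} {z : Eu N} (h : ‖z‖ < 1) : 0 < rh0 z := by
  have h1 : 0 < 1 - ‖z‖^2 := by nlinarith [norm_nonneg z]
  have := expNegInvGlue.pos_of_pos h1
  unfold rh0; positivity

theorem rh0_compact {N : ℕ} : HasCompactSupport (rh0 (N := N)) :=
  HasCompactSupport.intro (isCompact_closedBall 0 1) (fun z hz => rh0_zero (by
    simp at hz; exact hz.le))
theorem th0_compact {N : ℕ} : HasCompactSupport (th0 (N := N)) :=
  HasCompactSupport.intro (isCompact_closedBall 0 1) (fun z hz => th0_zero (by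
    simp at hz; exact hz.le))

theorem rh0_int_pos {N : ℕ} : 0 < ∫ z : Eu N, rh0 z := by
  refine Continuous.integral_pos_of_hasCompactSupport_nonneg_nonzero (x := 0)
    (rh0_contDiff (n := 0)).continuous rh0_compact (fun z => rh0_nonneg z) ?_
  exact (rh0_pos (by simp)).ne'

noncomputable def theta {N : ℕ} (z : Eu N) : ℝ := (∫ z : Eu N, rh0 z)⁻¹ * th0 z
noncomputable def rho {N : ℕ} (z : Eu N) : ℝ := (∫ z : Eu N, rh0 z)⁻¹ * rh0 z

theorem theta_contDiff {N : ℕ} {n : ℕ∞} : ContDiff ℝ n (theta (N := N)) :=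
  contDiff_const.mul th0_contDiff
theorem rho_contDiff {N : ℕ} {n : ℕ∞} : ContDiff ℝ n (rho (N := N)) :=
  contDiff_const.mul rh0_contDiff
theorem theta_continuous {N : ℕ} : Continuous (theta (N := N)) := (theta_contDiff (n := 0)).continuous
theorem rho_continuous {N : ℕ} : Continuous (rho (N := N)) := (rho_contDiff (n := 0)).continuous
theorem theta_nonneg {N : ℕ} (z : Eu N) : 0 ≤ theta z :=
  mul_nonneg (inv_nonneg.2 rh0_int_pos.le) (th0_nonneg z)
theorem rho_nonneg {N : ℕ} (z : Eu N) : 0 ≤ rho z :=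
  mul_nonneg (inv_nonneg.2 rh0_int_pos.le) (rh0_nonneg z)
theorem theta_pos {N : ℕ} {z : Eu N} (h : ‖z‖ < 1) : 0 < theta z :=
  mul_pos (inv_pos.2 rh0_int_pos) (th0_pos h)
theorem rho_pos {N : ℕ} {z : Eu N} (h : ‖z‖ < 1) : 0 < rho z :=
  mul_pos (inv_pos.2 rh0_int_pos) (rh0_pos h)
theorem theta_zero {N : ℕ} {z : Eu N} (h : 1 ≤ ‖z‖) : theta z = 0 := by simp [theta, th0_zero h]
theorem rho_zero {N : ℕ} {z : Eu N} (h : 1 ≤ ‖z‖) : rho z = 0 := by simp [rho, rh0_zero h]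
theorem rho_compact {N : ℕ} : HasCompactSupport (rho (N := N)) :=
  HasCompactSupport.intro (isCompact_closedBall 0 1) (fun z hz => rho_zero (by
    simp at hz; exact hz.le))
theorem theta_compact {N : ℕ} : HasCompactSupport (theta (N := N)) :=
  HasCompactSupport.intro (isCompact_closedBall 0 1) (fun z hz => theta_zero (by
    simp at hz; exact hz.le))
theorem rho_integral {N : ℕ} : ∫ z : Eu N, rho z = 1 := by
  unfold rho
  rw [integral_const_mul]
  exact inv_mul_cancel₀ rh0_int_pos.ne'
theorem theta_int_pos {N : ℕ} : 0 < ∫ z : Eu N, theta z := by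
  refine Continuous.integral_pos_of_hasCompactSupport_nonneg_nonzero (x := 0)
    theta_continuous theta_compact (fun z => theta_nonneg z) ?_
  exact (theta_pos (by simp)).ne'
theorem theta_hasFDerivAt {N : ℕ} (z : Eu N) :
    HasFDerivAt (theta (N := N)) (-(rho z) • innerSL ℝ z) z := by
  have := (th0_hasFDerivAt z).const_mul ((∫ z : Eu N, rh0 z)⁻¹)
  unfold theta
  refine this.congr_fderiv ?_
  refine ContinuousLinearMap.ext fun v => ?_
  simp [rho]; ring
theorem rho_integrable {N : ℕ} : Integrable (rho (N := N)) :=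
  rho_continuous.integrable_of_hasCompactSupport rho_compact
theorem theta_integrable {N : ℕ} : Integrable (theta (N := N)) :=
  theta_continuous.integrable_of_hasCompactSupport theta_compact


/-- averaging measure at scale `r` -/
noncomputable def mm {N : ℕ} (r : ℝ) : Measure (Eu N) :=
  Measure.map (fun z => r • z) (volume.withDensity (fun z => ENNReal.ofReal (rho z)))

noncomputable def qq {N : ℕ} (r : ℝ) : Measure (Eu N) :=
  Measure.map (fun p : ℝ × Eu N => p.1 • p.2)
    (((volume.restrict (Ioc 0 r)).prod volume).withDensity
      (fun p => ENNReal.ofReal (p.1 * theta p.2)))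

instance mm_finite {N : ℕ} (r : ℝ) : IsFiniteMeasure (mm (N := N) r) := by
  have : IsFiniteMeasure ((volume : Measure (Eu N)).withDensity (fun z => ENNReal.ofReal (rho z))) :=
    isFiniteMeasure_withDensity_ofReal rho_integrable.2
  unfold mm
  infer_instance

theorem sth_integrable {N : ℕ} (r : ℝ) : Integrable (fun p : ℝ × Eu N => p.1 * theta p.2)
    ((volume.restrict (Ioc 0 r)).prod volume) := by
  have h1 : Integrable (fun s : ℝ => s) (volume.restrict (Ioc 0 r)) :=
    (continuous_id.integrableOn_Icc (a := 0) (b := r)).mono_set Ioc_subset_Icc_self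
  exact h1.mul_prod theta_integrable

instance qq_finite {N : ℕ} (r : ℝ) : IsFiniteMeasure (qq (N := N) r) := by
  have : IsFiniteMeasure (((volume.restrict (Ioc 0 r)).prod (volume : Measure (Eu N))).withDensity
      (fun p => ENNReal.ofReal (p.1 * theta p.2))) :=
    isFiniteMeasure_withDensity_ofReal (sth_integrable r).2
  unfold qq
  infer_instance

def SB {N : ℕ} (ν : Measure (Eu N)) (r : ℝ) : Prop := ν (closedBall 0 r)ᶜ = 0

theorem mm_SB {N : ℕ} {r : ℝ} (hr : 0 < r) : SB (mm (N := N) r) r := by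
  unfold SB mm
  rw [Measure.map_apply (by fun_prop) isClosed_closedBall.measurableSet.compl]
  rw [withDensity_apply _ (by
    apply MeasurableSet.preimage isClosed_closedBall.measurableSet.compl; fun_prop)]
  rw [setLIntegral_eq_zero_iff (by
    apply MeasurableSet.preimage isClosed_closedBall.measurableSet.compl; fun_prop) 
    (by exact rho_continuous.measurable.ennreal_ofReal)]
  refine ae_of_all _ fun z hz => ?_
  have : 1 ≤ ‖z‖ := by
    simp [norm_smul, abs_of_pos hr] at hz
    by_contra h
    nlinarith
  simp [rho_zero this]

theorem theta_meas {N : ℕ} : Measurable (fun p : ℝ × Eu N => p.1 * theta p.2) :=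
  (continuous_fst.mul (theta_continuous.comp continuous_snd)).measurable

theorem qq_SB {N : ℕ} {r : ℝ} : SB (qq (N := N) r) r := by
  unfold SB qq
  have hm : Measurable (fun p : ℝ × Eu N => p.1 • p.2) := by fun_prop
  have hms : MeasurableSet ((fun p : ℝ × Eu N => p.1 • p.2) ⁻¹' (closedBall 0 r)ᶜ) :=
    hm isClosed_closedBall.measurableSet.compl
  rw [Measure.map_apply hm isClosed_closedBall.measurableSet.compl,
    withDensity_apply _ hms, setLIntegral_eq_zero_iff hms theta_meas.ennreal_ofReal]
  have h : ∀ᵐ p : ℝ × Eu N ∂((volume.restrict (Ioc 0 r)).prod volume), p.1 ∈ Ioc 0 r := by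
    have := ae_restrict_mem (μ := (volume : Measure ℝ)) (measurableSet_Ioc (a := (0:ℝ)) (b := r))
    exact Measure.quasiMeasurePreserving_fst.ae this
  filter_upwards [h] with p hp hz
  have : 1 ≤ ‖p.2‖ := by
    simp [norm_smul, abs_of_pos hp.1] at hz
    by_contra h
    have := hp.2
    have := hp.1
    nlinarith [norm_nonneg p.2]
  simp [theta_zero this]

section gen
variable {N : ℕ} {ν : Measure (Eu N)} {r : ℝ} {x : Eu N} {f g : Eu N → ℝ}

theorem SB.ae (h : SB ν r) : ∀ᵐ y ∂ν, x + y ∈ closedBall x r := by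
  have : ∀ᵐ y ∂ν, y ∈ closedBall (0 : Eu N) r := by
    rw [ae_iff]; exact h
  filter_upwards [this] with y hy
  simpa using hy

theorem SB.integrable [IsFiniteMeasure ν] (h : SB ν r) (hf : ContinuousOn f (closedBall x r)) :
    Integrable (fun y => f (x + y)) ν := by
  have e : ν.restrict (closedBall 0 r) = ν := by
    apply Measure.restrict_eq_self_of_ae_mem
    rw [ae_iff]; exact h
  rw [← e]
  refine ContinuousOn.integrableOn_compact (isCompact_closedBall 0 r) ?_
  refine hf.comp (by fun_prop) ?_
  intro y hy
  simpa using hy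

theorem SB.congr (h : SB ν r) (hfg : ∀ y ∈ closedBall x r, f y = g y) :
    ∫ y, f (x + y) ∂ν = ∫ y, g (x + y) ∂ν := by
  apply integral_congr_ae
  filter_upwards [h.ae (x := x)] with y hy using hfg _ hy

theorem SB.mono [IsFiniteMeasure ν] (h : SB ν r) (hf : ContinuousOn f (closedBall x r))
    (hg : ContinuousOn g (closedBall x r)) (hfg : ∀ y ∈ closedBall x r, f y ≤ g y) :
    ∫ y, f (x + y) ∂ν ≤ ∫ y, g (x + y) ∂ν := by
  apply integral_mono_ae (h.integrable hf) (h.integrable hg)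
  filter_upwards [h.ae (x := x)] with y hy using hfg _ hy

theorem SB.sub [IsFiniteMeasure ν] (h : SB ν r) (hf : ContinuousOn f (closedBall x r))
    (hg : ContinuousOn g (closedBall x r)) :
    ∫ y, (f - g) (x + y) ∂ν = ∫ y, f (x + y) ∂ν - ∫ y, g (x + y) ∂ν :=
  integral_sub (h.integrable hf) (h.integrable hg)

theorem SB.add [IsFiniteMeasure ν] (h : SB ν r) (hf : ContinuousOn f (closedBall x r))
    (hg : ContinuousOn g (closedBall x r)) :
    ∫ y, (f + g) (x + y) ∂ν = ∫ y, f (x + y) ∂ν + ∫ y, g (x + y) ∂ν :=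
  integral_add (h.integrable hf) (h.integrable hg)

theorem SB.smul (c : ℝ) :
    ∫ y, (c • f) (x + y) ∂ν = c * ∫ y, f (x + y) ∂ν :=
  integral_const_mul c _

theorem SB.dct [IsFiniteMeasure ν] (h : SB ν r) {F : ℕ → Eu N → ℝ} {B : ℝ}
    (hF : ∀ n, ContinuousOn (F n) (closedBall x r))
    (hB : ∀ n, ∀ y ∈ closedBall x r, |F n y| ≤ B)
    (hl : ∀ y ∈ closedBall x r, Tendsto (fun n => F n y) atTop (nhds (f y))) :
    Tendsto (fun n => ∫ y, F n (x + y) ∂ν) atTop (nhds (∫ y, f (x + y) ∂ν)) := by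
  refine tendsto_integral_of_dominated_convergence (fun _ => B) 
    (fun n => (h.integrable (hF n)).1) (integrable_const _) ?_ ?_
  · intro n
    filter_upwards [h.ae (x := x)] with y hy using hB n _ hy
  · filter_upwards [h.ae (x := x)] with y hy using hl _ hy

end gen

noncomputable def MM {N : ℕ} (r : ℝ) (f : Eu N → ℝ) (x : Eu N) : ℝ := ∫ y, f (x + y) ∂(mm r)
noncomputable def QQ {N : ℕ} (r : ℝ) (f : Eu N → ℝ) (x : Eu N) : ℝ := ∫ y, f (x + y) ∂(qq r)

theorem MM_eq {N : ℕ} {r : ℝ} (hr : 0 < r) (f : Eu N → ℝ) (x : Eu N) :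
    MM r f x = ∫ z, rho z * f (x + r • z) := by
  unfold MM mm
  have he : MeasurableEmbedding (fun z : Eu N => r • z) :=
    (Homeomorph.smulOfNeZero r hr.ne').measurableEmbedding
  rw [he.integral_map, integral_withDensity_eq_integral_toReal_smul
    rho_continuous.measurable.ennreal_ofReal (by simp)]
  simp [ENNReal.toReal_ofReal (rho_nonneg _)]

theorem QQ_eq {N : ℕ} {r : ℝ} (hr : 0 < r) {f : Eu N → ℝ} (hf : Continuous f) (x : Eu N) :
    QQ r f x = ∫ s in (0)..r, s * ∫ z, theta z * f (x + s • z) := by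
  have hm : Measurable (fun p : ℝ × Eu N => p.1 • p.2) := by fun_prop
  have hi : Integrable (fun y => f (x + y)) (qq r) := qq_SB.integrable hf.continuousOn
  unfold QQ
  unfold qq at hi ⊢
  rw [integrable_map_measure (by fun_prop) hm.aemeasurable,
    integrable_withDensity_iff_integrable_smul' theta_meas.ennreal_ofReal (by simp)] at hi
  simp only [Function.comp_def] at hi
  rw [integral_map hm.aemeasurable (by fun_prop), 
    integral_withDensity_eq_integral_toReal_smul theta_meas.ennreal_ofReal (by simp),
    integral_prod _ hi, intervalIntegral.integral_of_le hr.le]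
  apply setIntegral_congr_fun measurableSet_Ioc
  intro s hs
  simp only [smul_eq_mul]
  rw [← integral_const_mul]
  congr 1
  ext z
  rw [ENNReal.toReal_ofReal (mul_nonneg hs.1.le (theta_nonneg _))]
  ring

theorem mm_univ {N : ℕ} {r : ℝ} (hr : 0 < r) : (mm (N := N) r).real univ = 1 := by
  have h := MM_eq hr (fun _ => (1:ℝ)) (0 : Eu N)
  simpa [MM, rho_integral] using h

theorem qq_univ {N : ℕ} {r : ℝ} (hr : 0 < r) : 
    (qq (N := N) r).real univ = r ^ 2 / 2 * ∫ z : Eu N, theta z := by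
  have h := QQ_eq hr (f := fun _ => (1:ℝ)) continuous_const (0 : Eu N)
  simpa [QQ] using h

theorem qq_univ_pos {N : ℕ} {r : ℝ} (hr : 0 < r) : 0 < (qq (N := N) r).real univ := by
  rw [qq_univ hr]; have := theta_int_pos (N := N); positivity

/-- positivity of `MM` -/
theorem MM_pos {N : ℕ} {r : ℝ} (hr : 0 < r) {f : Eu N → ℝ} (hf : Continuous f) (h0 : ∀ y, 0 ≤ f y)
    {x x₁ : Eu N} (h1 : 0 < f x₁) (hd : ‖x₁ - x‖ < r) : 0 < MM r f x := by
  rw [MM_eq hr]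
  refine Continuous.integral_pos_of_hasCompactSupport_nonneg_nonzero (x := r⁻¹ • (x₁ - x))
    (rho_continuous.mul (by fun_prop)) rho_compact.mul_right (fun z => mul_nonneg (rho_nonneg z) (h0 _)) ?_
  have h2 : 0 < rho (r⁻¹ • (x₁ - x)) := by
    apply rho_pos
    rw [norm_smul, norm_inv, Real.norm_of_nonneg hr.le, inv_mul_lt_iff₀ hr]; simpa using hd
  have h3 : x + r • (r⁻¹ • (x₁ - x)) = x₁ := by
    rw [smul_smul, mul_inv_cancel₀ hr.ne']; simp
  simp only [h3]
  positivity

theorem MM_congr {N : ℕ} {r : ℝ} (hr : 0 < r) {f g : Eu N → ℝ} {x : Eu N}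
    (hfg : ∀ y ∈ closedBall x r, f y = g y) : MM r f x = MM r g x := (mm_SB hr).congr hfg
theorem QQ_congr {N : ℕ} {r : ℝ} {f g : Eu N → ℝ} {x : Eu N}
    (hfg : ∀ y ∈ closedBall x r, f y = g y) : QQ r f x = QQ r g x := qq_SB.congr hfg
theorem MM_mono {N : ℕ} {r : ℝ} (hr : 0 < r) {f g : Eu N → ℝ} {x : Eu N}
    (hf : ContinuousOn f (closedBall x r)) (hg : ContinuousOn g (closedBall x r))
    (hfg : ∀ y ∈ closedBall x r, f y ≤ g y) : MM r f x ≤ MM r g x := (mm_SB hr).mono hf hg hfg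
theorem QQ_mono {N : ℕ} {r : ℝ} {f g : Eu N → ℝ} {x : Eu N}
    (hf : ContinuousOn f (closedBall x r)) (hg : ContinuousOn g (closedBall x r))
    (hfg : ∀ y ∈ closedBall x r, f y ≤ g y) : QQ r f x ≤ QQ r g x := qq_SB.mono hf hg hfg
theorem MM_sub {N : ℕ} {r : ℝ} (hr : 0 < r) {f g : Eu N → ℝ} {x : Eu N}
    (hf : ContinuousOn f (closedBall x r)) (hg : ContinuousOn g (closedBall x r)) :
    MM r (fun y => f y - g y) x = MM r f x - MM r g x := (mm_SB hr).sub hf hg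
theorem QQ_sub {N : ℕ} {r : ℝ} {f g : Eu N → ℝ} {x : Eu N}
    (hf : ContinuousOn f (closedBall x r)) (hg : ContinuousOn g (closedBall x r)) :
    QQ r (fun y => f y - g y) x = QQ r f x - QQ r g x := qq_SB.sub hf hg
theorem MM_smul {N : ℕ} {r : ℝ} (c : ℝ) {f : Eu N → ℝ} {x : Eu N} :
    MM r (fun y => c * f y) x = c * MM r f x := integral_const_mul c _
theorem QQ_smul {N : ℕ} {r : ℝ} (c : ℝ) {f : Eu N → ℝ} {x : Eu N} :
    QQ r (fun y => c * f y) x = c * QQ r f x := integral_const_mul c _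
theorem MM_const {N : ℕ} {r : ℝ} (hr : 0 < r) (c : ℝ) {x : Eu N} :
    MM r (fun _ => c) x = c := by simp [MM, mm_univ hr]
theorem QQ_const {N : ℕ} {r : ℝ} (c : ℝ) {x : Eu N} :
    QQ r (fun _ => c) x = (qq (N := N) r).real univ * c := by simp [QQ]


theorem av_continuous {N : ℕ} {X : Type*} [TopologicalSpace X] [FirstCountableTopology X]
    [LocallyCompactSpace X] {F : Type*} [NormedAddCommGroup F] [NormedSpace ℝ F]
    {k : X → Eu N → F} (hk : Continuous (Function.uncurry k))
    (h0 : ∀ x z, 1 ≤ ‖z‖ → k x z = 0) : Continuous (fun x => ∫ z, k x z) := by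
  have := continuous_parametric_integral_of_continuous (μ := volume) hk (isCompact_closedBall (0 : Eu N) 1)
  convert this using 2 with x
  rw [setIntegral_eq_integral_of_forall_compl_eq_zero]
  intro z hz
  apply h0
  simp at hz; exact hz.le

theorem integrable_of_zero {N : ℕ} {F : Type*} [NormedAddCommGroup F] 
    {k : Eu N → F} (hk : Continuous k) (h0 : ∀ z, 1 ≤ ‖z‖ → k z = 0) : Integrable k := by
  refine hk.integrable_of_hasCompactSupport (HasCompactSupport.intro (isCompact_closedBall 0 1) ?_)
  intro z hz
  apply h0
  simp at hz; exact hz.le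

theorem laplacian_eq {N : ℕ} (w : Eu N → ℝ) (x : Eu N) : laplacian w x =
    ∑ i, fderiv ℝ (fderiv ℝ w) x (EuclideanSpace.single i 1) (EuclideanSpace.single i 1) := by
  simp [laplacian, iteratedFDeriv_two_apply]

theorem laplacian_congr {N : ℕ} {w v : Eu N → ℝ} {x : Eu N} (h : w =ᶠ[nhds x] v) :
    laplacian w x = laplacian v x := by
  rw [laplacian_eq, laplacian_eq]
  have := (h.fderiv (𝕜 := ℝ)).fderiv_eq (𝕜 := ℝ)
  rw [this]

theorem fderiv_contDiff1 {N : ℕ} {w : Eu N → ℝ} (hw : ContDiff ℝ 2 w) : ContDiff ℝ 1 (fderiv ℝ w) :=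
  hw.fderiv_right (by norm_num)

theorem laplacian_continuous {N : ℕ} {w : Eu N → ℝ} (hw : ContDiff ℝ 2 w) :
    Continuous (laplacian w) := by
  have h1 : Continuous (fderiv ℝ (fderiv ℝ w)) := (fderiv_contDiff1 hw).continuous_fderiv (by norm_num)
  have : laplacian w = fun x => ∑ i, fderiv ℝ (fderiv ℝ w) x (EuclideanSpace.single i 1) (EuclideanSpace.single i 1) := by
    ext x; exact laplacian_eq w x
  rw [this]
  fun_prop

theorem ibp_identity {N : ℕ} {w : Eu N → ℝ} (hw : ContDiff ℝ 2 w) (x : Eu N) (s : ℝ) :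
    ∫ z, rho z * fderiv ℝ w (x + s • z) z = s * ∫ z, theta z * laplacian w (x + s • z) := by
  have hc1 : Continuous (fderiv ℝ w) := hw.continuous_fderiv (by norm_num)
  have hd : ContDiff ℝ 1 (fderiv ℝ w) := fderiv_contDiff1 hw
  have hc2 : Continuous (fderiv ℝ (fderiv ℝ w)) := hd.continuous_fderiv (by norm_num)
  have hfd : ∀ (i : Fin N) (z : Eu N), fderiv ℝ (theta (N := N)) z (EuclideanSpace.single i 1) = - (rho z * z i) := by
    intro i z
    rw [(theta_hasFDerivAt z).fderiv]
    simp [EuclideanSpace.inner_single_right]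
  have hdz : ∀ (i : Fin N) (z : Eu N), HasFDerivAt (fun z => fderiv ℝ w (x + s • z) (EuclideanSpace.single i 1))
      (s • ((fderiv ℝ (fderiv ℝ w) (x + s • z)).flip (EuclideanSpace.single i 1))) z := by
    intro i z
    have h1 : HasFDerivAt (fun z : Eu N => x + s • z) (s • ContinuousLinearMap.id ℝ (Eu N)) z :=
      ((hasFDerivAt_id z).const_smul s).const_add x
    have h2 := ((hd.differentiable (by norm_num)) (x + s • z)).hasFDerivAt.comp z h1
    have h3 := h2.clm_apply (hasFDerivAt_const (EuclideanSpace.single i (1:ℝ)) z)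
    refine h3.congr_fderiv (ContinuousLinearMap.ext fun v => ?_)
    simp
  have key : ∀ i : Fin N, ∫ z, rho z * z i * fderiv ℝ w (x + s • z) (EuclideanSpace.single i 1) =
      s * ∫ z, theta z * fderiv ℝ (fderiv ℝ w) (x + s • z) (EuclideanSpace.single i 1) (EuclideanSpace.single i 1) := by
    intro i
    have hfc : ∀ z, fderiv ℝ (fun z => fderiv ℝ w (x + s • z) (EuclideanSpace.single i 1)) z (EuclideanSpace.single i 1)
      = s * fderiv ℝ (fderiv ℝ w) (x + s • z) (EuclideanSpace.single i 1) (EuclideanSpace.single i 1) := by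
      intro z
      rw [(hdz i z).fderiv]; simp
    have hz : ∀ i : Fin N, Continuous (fun z : Eu N => z i) := fun i => by fun_prop
    have h := integral_mul_fderiv_eq_neg_fderiv_mul_of_integrable (μ := (volume : Measure (Eu N)))
      (f := theta) (g := fun z => fderiv ℝ w (x + s • z) (EuclideanSpace.single i 1))
      (v := EuclideanSpace.single i 1) ?_ ?_ ?_ ?_ ?_
    · simp only [hfc, hfd] at h
      rw [← integral_neg] at h
      rw [← integral_const_mul]
      calc _ = _ := by congr 1; ext z; ring
        _ = _ := h.symm
        _ = _ := by congr 1; ext z; ring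
    · simp only [hfd]
      apply integrable_of_zero
      · have := rho_continuous (N := N); have := hz i; fun_prop
      · intro z hz; simp [rho_zero hz]
    · simp only [hfc]
      apply integrable_of_zero
      · have := theta_continuous (N := N); fun_prop
      · intro z hz; simp [theta_zero hz]
    · apply integrable_of_zero
      · have := theta_continuous (N := N); fun_prop
      · intro z hz; simp [theta_zero hz]
    · intro z _; exact (theta_hasFDerivAt z).differentiableAt
    · intro z _; exact (hdz i z).differentiableAt
  have hz : ∀ i : Fin N, Continuous (fun z : Eu N => z i) := fun i => by fun_prop
  calc _ = ∫ z, ∑ i, rho z * z i * fderiv ℝ w (x + s • z) (EuclideanSpace.single i 1) := by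
        congr 1; ext z
        have hz2 : z = ∑ i, z i • (EuclideanSpace.single i (1:ℝ) : Eu N) := by
          have := (EuclideanSpace.basisFun (Fin N) ℝ).sum_repr z
          simpa using this.symm
        conv_lhs => rw [show fderiv ℝ w (x + s • z) z = fderiv ℝ w (x + s • z) (∑ i, z i • (EuclideanSpace.single i (1:ℝ) : Eu N)) from by rw [← hz2]]
        rw [map_sum, Finset.mul_sum]
        apply Finset.sum_congr rfl
        intro i _
        simp; ring
    _ = ∑ i, s * ∫ z, theta z * fderiv ℝ (fderiv ℝ w) (x + s • z) (EuclideanSpace.single i 1) (EuclideanSpace.single i 1) := by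
        rw [integral_finsetSum]
        · exact Finset.sum_congr rfl fun i _ => key i
        · intro i _
          apply integrable_of_zero
          · have := rho_continuous (N := N); have := hz i; fun_prop
          · intro z hz; simp [rho_zero hz]
    _ = _ := by
        rw [← Finset.mul_sum, ← integral_finsetSum]
        · congr 2; ext z
          rw [laplacian_eq, Finset.mul_sum]
        · intro i _
          apply integrable_of_zero
          · have := theta_continuous (N := N); fun_prop
          · intro z hz; simp [theta_zero hz]

theorem mv_global {N : ℕ} {w : Eu N → ℝ} (hw : ContDiff ℝ 2 w) {r : ℝ} (hr : 0 < r) (x : Eu N) :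
    w x = MM r w x + QQ r (fun y => -laplacian w y) x := by
  have hwc := hw.continuous
  have hc1 : Continuous (fderiv ℝ w) := hw.continuous_fderiv (by norm_num)
  have hlc := laplacian_continuous hw
  have hrc := rho_continuous (N := N)
  have htc := theta_continuous (N := N)
  have hF : ∀ s : ℝ, HasDerivAt (fun s => ∫ z, rho z * w (x + s • z))
      (s * ∫ z, theta z * laplacian w (x + s • z)) s := by
    intro s
    rw [← ibp_identity hw]
    obtain ⟨C, hC⟩ := (isCompact_closedBall x (|s| + 1)).exists_bound_of_continuousOn hc1.continuousOn
    refine (hasDerivAt_integral_of_dominated_loc_of_deriv_le (bound := fun z => rho z * C)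
      (F := fun s z => rho z * w (x + s • z)) (F' := fun s z => rho z * fderiv ℝ w (x + s • z) z)
      (ball_mem_nhds s one_pos) ?_ ?_ ?_ ?_ ?_ ?_).2
    · exact Eventually.of_forall fun s => (by fun_prop : Continuous _).aestronglyMeasurable
    · apply integrable_of_zero (by fun_prop)
      intro z hz; simp [rho_zero hz]
    · exact (by fun_prop : Continuous _).aestronglyMeasurable
    · refine ae_of_all _ fun z s' hs' => ?_
      rw [norm_mul, Real.norm_of_nonneg (rho_nonneg z)]
      rcases le_or_gt 1 ‖z‖ with h | h
      · simp [rho_zero h]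
      · apply mul_le_mul_of_nonneg_left _ (rho_nonneg z)
        have h1 : x + s' • z ∈ closedBall x (|s| + 1) := by
          simp [norm_smul]
          have : |s'| ≤ |s| + 1 := by
            have : |s' - s| < 1 := by simpa [Real.dist_eq] using hs'
            have := abs_sub_abs_le_abs_sub s' s
            linarith
          nlinarith [norm_nonneg z, abs_nonneg s']
        have h2 := hC _ h1
        calc _ ≤ ‖fderiv ℝ w (x + s' • z)‖ * ‖z‖ := ContinuousLinearMap.le_opNorm _ _
          _ ≤ C * 1 := by
            apply mul_le_mul h2 h.le (norm_nonneg _) ((norm_nonneg _).trans h2)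
          _ = C := mul_one _
    · exact rho_integrable.mul_const C
    · refine ae_of_all _ fun z s' hs' => ?_
      apply HasDerivAt.const_mul
      have h1 : HasDerivAt (fun s : ℝ => x + s • z) z s' := by
        simpa using ((hasDerivAt_id s').smul_const z).const_add x
      exact ((hw.differentiable (by norm_num)) (x + s' • z)).hasFDerivAt.comp_hasDerivAt s' h1
  have hcont : Continuous (fun s => s * ∫ z, theta z * laplacian w (x + s • z)) := by
    apply continuous_id.mul
    apply av_continuous (k := fun (s : ℝ) z => theta z * laplacian w (x + s • z))
    · simp only [Function.uncurry_def]; fun_prop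
    · intro s z hz; simp [theta_zero hz]
  have h := intervalIntegral.integral_eq_sub_of_hasDerivAt (a := 0) (b := r) (fun s _ => hF s)
    (hcont.intervalIntegrable _ _)
  rw [MM_eq hr, QQ_eq hr (f := fun y => -laplacian w y) hlc.neg]
  simp only [mul_neg, integral_neg, intervalIntegral.integral_neg]
  rw [h]
  simp [integral_mul_const, rho_integral]

theorem exists_cutoff {N : ℕ} {w : Eu N → ℝ} {Ω : Set (Eu N)} (hΩ : IsOpen Ω)
    (hw : ContDiffOn ℝ 2 w Ω) {r : ℝ} (hr : 0 < r) {x : Eu N} (hx : closedBall x (2 * r) ⊆ Ω) :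
    ∃ v : Eu N → ℝ, ContDiff ℝ 2 v ∧ ∀ y ∈ closedBall x (3 / 2 * r), v y = w y := by
  let b : ContDiffBump x := ⟨3 / 2 * r, 2 * r, by positivity, by linarith⟩
  refine ⟨fun y => b y * w y, ?_, ?_⟩
  · rw [contDiff_iff_contDiffAt]
    intro y
    by_cases hy : y ∈ tsupport (fun y => b y * w y)
    swap
    · rw [notMem_tsupport_iff_eventuallyEq] at hy
      exact contDiffAt_const.congr_of_eventuallyEq hy
    have hy' : y ∈ closedBall x (2 * r) := by
      have := closure_mono (Function.support_mul_subset_left b w) hy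
      rw [← tsupport, b.tsupport_eq] at this
      exact this
    exact b.contDiffAt.mul (hw.contDiffAt (hΩ.mem_nhds (hx hy')))
  · intro y hy
    have : b y = 1 := b.one_of_mem_closedBall hy
    simp [this]

theorem mv_local {N : ℕ} {w : Eu N → ℝ} {Ω : Set (Eu N)} (hΩ : IsOpen Ω)
    (hw : ContDiffOn ℝ 2 w Ω) {r : ℝ} (hr : 0 < r) {x : Eu N} (hx : closedBall x (2 * r) ⊆ Ω) :
    w x = MM r w x + QQ r (fun y => -laplacian w y) x := by
  obtain ⟨v, hv, hvw⟩ := exists_cutoff hΩ hw hr hx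
  have h := mv_global hv hr x
  have hs : closedBall x r ⊆ closedBall x (3 / 2 * r) := closedBall_subset_closedBall (by linarith)
  rw [hvw x (by simp; positivity)] at h
  rw [h]
  congr 1
  · exact MM_congr hr fun y hy => hvw y (hs hy)
  · refine QQ_congr fun y hy => ?_
    congr 1
    apply laplacian_congr
    have hy' : y ∈ ball x (3 / 2 * r) := by
      have : dist y x ≤ r := hy
      simp only [mem_ball]; linarith
    filter_upwards [isOpen_ball.mem_nhds hy'] with y' h'
    exact hvw _ (ball_subset_closedBall h')

theorem laplacian_continuousOn {N : ℕ} {w : Eu N → ℝ} {Ω : Set (Eu N)} (hΩ : IsOpen Ω)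
    (hw : ContDiffOn ℝ 2 w Ω) : ContinuousOn (laplacian w) Ω := by
  intro x hx
  apply ContinuousAt.continuousWithinAt
  obtain ⟨ε, hε, h⟩ := Metric.isOpen_iff.1 hΩ x hx
  have h' : closedBall x (2 * (ε / 4)) ⊆ Ω := (closedBall_subset_ball (by linarith)).trans h
  obtain ⟨v, hv, hvw⟩ := exists_cutoff hΩ hw (by positivity) h'
  apply (laplacian_continuous hv).continuousAt.congr
  have : ball x (3 / 2 * (ε / 4)) ∈ nhds x := ball_mem_nhds _ (by positivity)
  filter_upwards [this] with y hy
  apply laplacian_congr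
  filter_upwards [isOpen_ball.mem_nhds hy] with z hz
  exact hvw _ (ball_subset_closedBall hz)


theorem laplacian_add {N : ℕ} {u v : Eu N → ℝ} {x : Eu N} (hu : ContDiffAt ℝ 2 u x)
    (hv : ContDiffAt ℝ 2 v x) : laplacian (fun y => u y + v y) x = laplacian u x + laplacian v x := by
  unfold laplacian
  rw [← Finset.sum_add_distrib]
  apply Finset.sum_congr rfl
  intro i _
  have := iteratedFDeriv_add_apply (i := 2) hu hv
  change iteratedFDeriv ℝ 2 (u + v) x _ = _
  rw [this]; rfl

theorem laplacian_const_mul {N : ℕ} {u : Eu N → ℝ} {x : Eu N} (c : ℝ) (hu : ContDiffAt ℝ 2 u x) :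
    laplacian (fun y => c * u y) x = c * laplacian u x := by
  unfold laplacian
  rw [Finset.mul_sum]
  apply Finset.sum_congr rfl
  intro i _
  have := iteratedFDeriv_const_smul_apply (i := 2) (a := c) hu
  change iteratedFDeriv ℝ 2 (c • u) x _ = _
  rw [this]; rfl

theorem laplacian_sum {N : ℕ} {ι : Type*} (s : Finset ι) {u : ι → Eu N → ℝ} {x : Eu N}
    (hu : ∀ i ∈ s, ContDiffAt ℝ 2 (u i) x) :
    laplacian (fun y => ∑ i ∈ s, u i y) x = ∑ i ∈ s, laplacian (u i) x := by
  classical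
  induction s using Finset.induction_on with
  | empty => 
    simp only [Finset.sum_empty]
    rw [laplacian_eq]; simp
  | insert a s ha ih =>
    simp only [Finset.sum_insert ha]
    rw [laplacian_add (hu a (by simp)) (ContDiffAt.sum fun i hi => hu i (by simp [hi])),
      ih fun i hi => hu i (by simp [hi])]

theorem radial_contDiffAt {N : ℕ} {h : ℝ → ℝ} {k x : Eu N} (hx : x ≠ k)
    (hh : ContDiffOn ℝ 2 h (Ioi 0)) : ContDiffAt ℝ 2 (fun y => h (‖y - k‖^2)) x := by
  have hpos : 0 < ‖x - k‖^2 := by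
    have := norm_pos_iff.2 (sub_ne_zero.2 hx); positivity
  have h1 : ContDiffAt ℝ 2 h (‖x - k‖^2) := hh.contDiffAt (Ioi_mem_nhds hpos)
  exact h1.comp x (f := fun y => ‖y - k‖^2) ((contDiff_norm_sq ℝ).comp (contDiff_id.sub contDiff_const)).contDiffAt

theorem norm_sub_sq_hasFDerivAt {N : ℕ} (k y : Eu N) :
    HasFDerivAt (fun y => ‖y - k‖^2) ((2:ℝ) • innerSL ℝ (y - k)) y := by
  have h1 := (hasStrictFDerivAt_norm_sq (y - k)).hasFDerivAt.comp y ((hasFDerivAt_id y).sub_const k)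
  refine h1.congr_fderiv (ContinuousLinearMap.ext fun v => ?_)
  simp

theorem radial_laplacian {N : ℕ} {h h1 : ℝ → ℝ} {h2 : ℝ} {k x : Eu N} (hx : x ≠ k)
    (hh : ∀ s, 0 < s → HasDerivAt h (h1 s) s) (hh1 : HasDerivAt h1 h2 (‖x - k‖^2)) :
    laplacian (fun y => h (‖y - k‖^2)) x = 4 * ‖x - k‖^2 * h2 + 2 * N * h1 (‖x - k‖^2) := by
  have hf : ∀ y : Eu N, y ≠ k → fderiv ℝ (fun y => h (‖y - k‖^2)) y = (2 * h1 (‖y - k‖^2)) • innerSL ℝ (y - k) := by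
    intro y hy
    have hpos : 0 < ‖y - k‖^2 := by
      have := norm_pos_iff.2 (sub_ne_zero.2 hy); positivity
    have : HasFDerivAt (fun y => h (‖y - k‖^2)) _ y :=
      (hh _ hpos).comp_hasFDerivAt y (norm_sub_sq_hasFDerivAt k y)
    rw [this.fderiv]
    refine ContinuousLinearMap.ext fun v => ?_
    simp; ring
  have hev : fderiv ℝ (fun y => h (‖y - k‖^2)) =ᶠ[nhds x] fun y => (2 * h1 (‖y - k‖^2)) • innerSL ℝ (y - k) := by
    filter_upwards [isOpen_ne.mem_nhds hx] with y hy using hf y hy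
  let L : Eu N →L[ℝ] (Eu N →L[ℝ] ℝ) := LinearMap.toContinuousLinearMap
    { toFun := fun v => innerSL ℝ v
      map_add' := fun a b => by simp
      map_smul' := fun a b => by simp }
  have hLa : ∀ v, L v = innerSL ℝ v := fun v => rfl
  have hd : HasFDerivAt (fun y => (2 * h1 (‖y - k‖^2)) • innerSL ℝ (y - k)) 
      ((2 * h1 (‖x - k‖^2)) • L +
        ((2:ℝ) • (h2 • ((2:ℝ) • innerSL ℝ (x - k)))).smulRight (innerSL ℝ (x - k))) x := by
    have ha := (hh1.comp_hasFDerivAt x (norm_sub_sq_hasFDerivAt k x)).const_mul 2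
    have hb : HasFDerivAt (fun y : Eu N => innerSL ℝ (y - k)) L x := by
      have := L.hasFDerivAt (x := x - k)
      exact this.comp x ((hasFDerivAt_id x).sub_const k)
    exact ha.smul hb
  rw [laplacian_eq, hev.fderiv_eq, hd.fderiv]
  simp only [ContinuousLinearMap.add_apply, ContinuousLinearMap.smul_apply, ContinuousLinearMap.smulRight_apply, hLa,
    innerSL_apply_apply, smul_eq_mul]
  rw [Finset.sum_add_distrib, ← Finset.mul_sum]
  have e1 : ∑ i : Fin N, inner ℝ (EuclideanSpace.single i (1:ℝ) : Eu N) (EuclideanSpace.single i 1) = N := by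
    simp
  have e2 : ∑ i : Fin N, 2 * (h2 * (2 * inner ℝ (x - k) (EuclideanSpace.single i (1:ℝ) : Eu N))) * inner ℝ (x - k) (EuclideanSpace.single i (1:ℝ) : Eu N)
      = 4 * h2 * ‖x - k‖^2 := by
    rw [EuclideanSpace.norm_sq_eq, Finset.mul_sum]
    apply Finset.sum_congr rfl
    intro i _
    simp [EuclideanSpace.inner_single_right]; ring
  rw [e1, e2]; ring

/-- barrier -/
noncomputable def barr {N : ℕ} (k x : Eu N) : ℝ := (‖x - k‖^2) ^ (-(1/4) : ℝ)

theorem rpow_hasDerivAt' {a s : ℝ} (hs : 0 < s) : HasDerivAt (fun s : ℝ => s ^ a) (a * s ^ (a - 1)) s :=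
  Real.hasDerivAt_rpow_const (Or.inl hs.ne')

theorem rpow_contDiffOn (a : ℝ) : ContDiffOn ℝ 2 (fun s : ℝ => s ^ a) (Ioi 0) := by
  intro s hs
  exact (Real.contDiffAt_rpow_const_of_ne (ne_of_gt hs)).contDiffWithinAt

theorem barr_contDiffOn {N : ℕ} (k : Eu N) : ContDiffOn ℝ 2 (barr k) {k}ᶜ := fun x hx =>
  (radial_contDiffAt (k := k) hx (rpow_contDiffOn (-(1/4)))).contDiffWithinAt

theorem barr_lap {N : ℕ} (hN : 3 ≤ N) {k x : Eu N} (hx : x ≠ k) : 0 < - laplacian (barr k) x := by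
  have hpos : 0 < ‖x - k‖^2 := by
    have := norm_pos_iff.2 (sub_ne_zero.2 hx); positivity
  have h := radial_laplacian (h := fun s => s ^ (-(1/4) : ℝ)) (k := k) hx (fun s hs => rpow_hasDerivAt' hs)
    (HasDerivAt.const_mul _ (rpow_hasDerivAt' hpos))
  unfold barr
  rw [h]
  set s := ‖x - k‖^2
  have e : s ^ (-(1/4) - 1 - 1 : ℝ) * s = s ^ (-(1/4) - 1 : ℝ) := by
    rw [← Real.rpow_add_one hpos.ne']; congr 1; ring
  have hN' : (3:ℝ) ≤ N := by exact_mod_cast hN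
  have hp : 0 < s ^ (-(1/4) - 1 : ℝ) := Real.rpow_pos_of_pos hpos _
  have : 4 * s * (-(1 / 4) * ((-(1 / 4) - 1) * s ^ (-(1/4) - 1 - 1 : ℝ))) = 5/4 * (s ^ (-(1/4) - 1 - 1 : ℝ) * s) := by ring
  rw [this, e]
  nlinarith

theorem barr_nonneg {N : ℕ} (k x : Eu N) : 0 ≤ barr k x := by unfold barr; positivity

theorem barr_strict {N : ℕ} (hN : 3 ≤ N) {k x : Eu N} {r : ℝ} (hr : 0 < r) 
    (hx : closedBall x (2 * r) ⊆ {k}ᶜ) : MM r (barr k) x < barr k x := by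
  have hc := barr_contDiffOn k
  rw [mv_local isOpen_compl_singleton hc hr hx]
  have hs : closedBall x r ⊆ {k}ᶜ := (closedBall_subset_closedBall (by linarith)).trans hx
  have hl : ContinuousOn (fun y => -laplacian (barr k) y) (closedBall x r) :=
    ((laplacian_continuousOn isOpen_compl_singleton hc).mono hs).neg
  obtain ⟨y0, hy0, hmin⟩ := (isCompact_closedBall x r).exists_isMinOn ⟨x, by simp [hr.le]⟩ hl
  have h0 : 0 < -laplacian (barr k) y0 := barr_lap hN (hs hy0)
  have h1 : QQ r (fun _ => -laplacian (barr k) y0) x ≤ QQ r (fun y => -laplacian (barr k) y) x :=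
    QQ_mono continuousOn_const hl fun y hy => hmin hy
  rw [QQ_const] at h1
  have := mul_pos (qq_univ_pos (N := N) hr) h0
  linarith

theorem barr_blowup {N : ℕ} (k : Eu N) (C : ℝ) : ∃ δ > 0, ∀ x, x ≠ k → ‖x - k‖ < δ → C < barr k x := by
  have h1 : Tendsto (fun s : ℝ => s ^ (-(1/4) : ℝ)) (nhdsWithin 0 (Ioi 0)) atTop :=
    tendsto_rpow_neg_nhdsGT_zero (by norm_num)
  have h2 := h1.eventually (eventually_gt_atTop C)
  rw [eventually_nhdsWithin_iff, Metric.eventually_nhds_iff] at h2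
  obtain ⟨ε, hε, h⟩ := h2
  refine ⟨Real.sqrt ε, Real.sqrt_pos.2 hε, fun x hx hd => ?_⟩
  have hpos := norm_pos_iff.2 (sub_ne_zero.2 hx)
  apply h
  · simp only [dist_zero_right, norm_pow, norm_norm]
    have := Real.sq_sqrt hε.le
    have := Real.sqrt_pos.2 hε
    nlinarith
  · simp only [mem_Ioi]; positivity

theorem exists_ball_compl {N : ℕ} {Ω : Set (Eu N)} (hΩ : IsOpen Ω) {x : Eu N} (hx : x ∈ Ω) :
    ∃ r₀ > 0, ∀ r, r < r₀ → closedBall x (2 * r) ⊆ Ω := by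
  obtain ⟨ε, hε, h⟩ := Metric.isOpen_iff.1 hΩ x hx
  exact ⟨ε / 2, by positivity, fun r hr => (closedBall_subset_ball (by linarith)).trans h⟩

theorem max_principle {N : ℕ} (hN : 3 ≤ N) {K : Set (Eu N)} (hK : K.Finite) (hne : K.Nonempty)
    {D : Eu N → ℝ} (hD : ContinuousOn D Kᶜ) {B : ℝ} (hB : ∀ x ∈ Kᶜ, D x ≤ B)
    (hinf : ∀ ε > 0, ∀ᶠ x in cocompact (Eu N), D x ≤ ε)
    (hsub : ∀ x ∈ Kᶜ, 0 < D x → ∃ r₀ > 0, ∀ r, 0 < r → r < r₀ → D x ≤ MM r D x) :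
    ∀ x ∈ Kᶜ, D x ≤ 0 := by
  have hopen : IsOpen Kᶜ := hK.isClosed.isOpen_compl
  set H : Eu N → ℝ := fun x => ∑ k ∈ hK.toFinset, barr k x with hH
  have hHc : ContinuousOn H Kᶜ := by
    apply continuousOn_finsetSum
    intro k hk
    refine (barr_contDiffOn k).continuousOn.mono ?_
    intro x hx hxk
    rw [hxk] at hx
    exact hx (by simpa using hk)
  have hH0 : ∀ x, 0 ≤ H x := fun x => Finset.sum_nonneg fun k _ => barr_nonneg k x
  intro x₁ hx₁
  by_contra hcon
  push Not at hcon
  -- choose epsilon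
  obtain ⟨ε, hε, hεH⟩ : ∃ ε > 0, ε * H x₁ < D x₁ := by
    refine ⟨D x₁ / (H x₁ + 1) , by have := hH0 x₁; positivity, ?_⟩
    have := hH0 x₁
    rw [div_mul_eq_mul_div, div_lt_iff₀ (by positivity)]
    nlinarith
  set η := D x₁ - ε * H x₁ with hη
  have hηpos : 0 < η := by linarith
  have hinf' := hinf (η / 2) (by positivity)
  obtain ⟨S, hS, hSD⟩ := Filter.mem_cocompact.1 hinf'
  -- uniform delta
  have hδ : ∃ δ > 0, ∀ k ∈ K, ∀ x, x ≠ k → ‖x - k‖ < δ → (B - η) / ε < barr k x := by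
    choose δ hδ hδ' using fun k : Eu N => barr_blowup k ((B - η) / ε)
    have hne' : hK.toFinset.Nonempty := by simpa using hne
    refine ⟨hK.toFinset.inf' hne' δ, ?_, ?_⟩
    · rw [gt_iff_lt, Finset.lt_inf'_iff]; exact fun k _ => hδ k
    · intro k hk x hx hxk
      exact hδ' k x hx (hxk.trans_le (Finset.inf'_le _ (by simpa using hk)))
  obtain ⟨δ, hδ, hδ'⟩ := hδ
  set C : Set (Eu N) := S \ ⋃ k ∈ K, ball k δ with hC
  have hCc : IsCompact C := hS.diff (isOpen_biUnion fun k _ => isOpen_ball)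
  have hCK : C ⊆ Kᶜ := by
    intro x hx hxK
    exact hx.2 (mem_biUnion hxK (mem_ball_self hδ))
  set De : Eu N → ℝ := fun x => D x - ε * H x with hDe
  have hout : ∀ x ∈ Kᶜ, x ∉ C → De x < η := by
    intro x hx hxC
    by_cases hxS : x ∈ S
    · have : x ∈ ⋃ k ∈ K, ball k δ := by
        by_contra h; exact hxC ⟨hxS, h⟩
      simp only [mem_iUnion, exists_prop] at this
      obtain ⟨k, hk, hxk⟩ := this
      have hxk' : x ≠ k := fun h => hx (h ▸ hk)
      have h1 := hδ' k hk x hxk' (by simpa [dist_eq_norm] using hxk)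
      have h2 : barr k x ≤ H x := Finset.single_le_sum (f := fun k => barr k x) (fun k _ => barr_nonneg k x) (by simpa using hk)
      have h3 := hB x hx
      rw [div_lt_iff₀ hε] at h1
      simp only [hDe]
      nlinarith
    · have h1 : D x ≤ η / 2 := hSD hxS
      have := hH0 x
      simp only [hDe]
      nlinarith
  have hx₁C : x₁ ∈ C := by
    by_contra h
    exact lt_irrefl _ (hout x₁ hx₁ h)
  have hDec : ContinuousOn De Kᶜ := hD.sub (continuousOn_const.mul hHc)
  obtain ⟨x₀, hx₀, hmax⟩ := hCc.exists_isMaxOn ⟨x₁, hx₁C⟩ (hDec.mono hCK)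
  have hge : η ≤ De x₀ := hmax hx₁C
  have hglob : ∀ x ∈ Kᶜ, De x ≤ De x₀ := by
    intro x hx
    by_cases h : x ∈ C
    · exact hmax h
    · exact (hout x hx h).le.trans hge
  have hx₀K := hCK hx₀
  have hDx₀ : 0 < D x₀ := by
    have := hH0 x₀
    simp only [hDe] at hge
    nlinarith
  obtain ⟨r₁, hr₁, h₁⟩ := hsub x₀ hx₀K hDx₀
  obtain ⟨r₂, hr₂, h₂⟩ := exists_ball_compl hopen hx₀K
  obtain ⟨r, hr, hrlt⟩ := exists_between (lt_min hr₁ hr₂)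
  have hrr1 := hrlt.trans_le (min_le_left _ _)
  have hball := h₂ r (hrlt.trans_le (min_le_right _ _))
  have hball' : closedBall x₀ r ⊆ Kᶜ := (closedBall_subset_closedBall (by linarith)).trans hball
  have hM1 := h₁ r hr hrr1
  have hHlt : MM r H x₀ < H x₀ := by
    have : MM r H x₀ = ∑ k ∈ hK.toFinset, MM r (barr k) x₀ := by
      unfold MM
      simp only [hH]
      rw [integral_finsetSum]
      intro k hk
      refine (mm_SB hr).integrable ((barr_contDiffOn k).continuousOn.mono ?_)
      intro x hx hxk
      rw [hxk] at hx
      exact hball' hx (by simpa using hk)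
    rw [this]
    apply Finset.sum_lt_sum_of_nonempty (by simpa using hne)
    intro k hk
    apply barr_strict hN hr
    intro x hx hxk
    rw [hxk] at hx
    exact hball hx (by simpa using hk)
  have hM2 : MM r De x₀ = MM r D x₀ - ε * MM r H x₀ := by
    simp only [hDe]
    rw [MM_sub hr (f := D) (g := fun x => ε * H x) (hD.mono hball') ((continuousOn_const.mul hHc).mono hball'), MM_smul]
  have hM3 : MM r De x₀ ≤ De x₀ := by
    have := MM_mono hr (hDec.mono hball') (continuousOn_const (c := De x₀)) (fun y hy => hglob y (hball' hy))
    rwa [MM_const hr] at this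
  have : De x₀ = D x₀ - ε * H x₀ := rfl
  nlinarith


theorem SB.restrict_eq {N : ℕ} {ν : Measure (Eu N)} {r : ℝ} (h : SB ν r) :
    ν.restrict (closedBall 0 r) = ν := by
  apply Measure.restrict_eq_self_of_ae_mem
  rw [ae_iff]; exact h

theorem SB.cont {N : ℕ} {ν : Measure (Eu N)} [IsFiniteMeasure ν] {r : ℝ} (h : SB ν r)
    {f : Eu N → ℝ} (hf : Continuous f) : Continuous (fun x => ∫ y, f (x + y) ∂ν) := by
  have := continuous_parametric_integral_of_continuous (μ := ν)
    (f := fun x y => f (x + y)) (by fun_prop) (isCompact_closedBall (0 : Eu N) r)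
  rwa [h.restrict_eq] at this

theorem MM_cont {N : ℕ} {r : ℝ} (hr : 0 < r) {f : Eu N → ℝ} (hf : Continuous f) :
    Continuous (MM r f) := (mm_SB hr).cont hf
theorem QQ_cont {N : ℕ} {r : ℝ} {f : Eu N → ℝ} (hf : Continuous f) :
    Continuous (QQ r f) := qq_SB.cont hf

theorem SB.swap {N : ℕ} {ν μ : Measure (Eu N)} [IsFiniteMeasure ν] [IsFiniteMeasure μ] {r R : ℝ}
    (h : SB ν r) (h' : SB μ R) {f : Eu N → ℝ} (hf : Continuous f) (x : Eu N) :
    ∫ y, (∫ z, f (x + y + z) ∂μ) ∂ν = ∫ z, (∫ y, f (x + z + y) ∂ν) ∂μ := by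
  rw [integral_integral_swap]
  · simp only [add_right_comm]
  · have hc : Continuous (Function.uncurry fun y z : Eu N => f (x + y + z)) := by fun_prop
    have hcomp : IsCompact (closedBall (0 : Eu N) r ×ˢ closedBall (0 : Eu N) R) :=
      (isCompact_closedBall _ _).prod (isCompact_closedBall _ _)
    have := hc.continuousOn.integrableOn_compact (μ := ν.prod μ) hcomp
    rw [IntegrableOn, ← Measure.prod_restrict, h.restrict_eq, h'.restrict_eq] at this
    exact this

theorem comm_identity2 {N : ℕ} {g : Eu N → ℝ} (hg : ContDiff ℝ 2 g) {r R : ℝ} (hr : 0 < r)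
    (hR : 0 < R) (x : Eu N) :
    QQ R g x - MM r (QQ R g) x = QQ r g x - QQ r (MM R g) x := by
  have hc := hg.continuous
  set h : Eu N → ℝ := fun y => -laplacian g y
  have hh : Continuous h := (laplacian_continuous hg).neg
  have e1 : MM r (QQ R g) x = QQ R (MM r g) x := (mm_SB hr).swap qq_SB hc x
  have e2 : QQ R (QQ r h) x = QQ r (QQ R h) x := qq_SB.swap qq_SB hh x
  have e3 : QQ r h = fun y => g y - MM r g y := by
    funext y; have := mv_global hg hr y; linarith
  have e4 : QQ R h = fun y => g y - MM R g y := by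
    funext y; have := mv_global hg hR y; linarith
  rw [e3, e4, QQ_sub hc.continuousOn (MM_cont hr hc).continuousOn,
    QQ_sub hc.continuousOn (MM_cont hR hc).continuousOn] at e2
  rw [e1, e2]

theorem SB.abs_sub_le {N : ℕ} {ν : Measure (Eu N)} [IsFiniteMeasure ν] {r ε : ℝ} (h : SB ν r)
    {f g : Eu N → ℝ} {x : Eu N} (hf : ContinuousOn f (closedBall x r)) (hg : ContinuousOn g (closedBall x r))
    (hfg : ∀ y ∈ closedBall x r, |f y - g y| ≤ ε) :
    |∫ y, f (x + y) ∂ν - ∫ y, g (x + y) ∂ν| ≤ ε * ν.real univ := by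
  rw [← integral_sub (h.integrable hf) (h.integrable hg)]
  rw [← Real.norm_eq_abs]
  refine norm_integral_le_of_norm_le_const ?_
  filter_upwards [h.ae (x := x)] with y hy
  exact hfg _ hy

theorem MM_abs_sub {N : ℕ} {r ε : ℝ} (hr : 0 < r) {f g : Eu N → ℝ} {x : Eu N} 
    (hf : ContinuousOn f (closedBall x r)) (hg : ContinuousOn g (closedBall x r))
    (hfg : ∀ y ∈ closedBall x r, |f y - g y| ≤ ε) : |MM r f x - MM r g x| ≤ ε := by
  have := (mm_SB hr).abs_sub_le hf hg hfg
  rwa [mm_univ hr, mul_one] at this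

theorem comm_identity {N : ℕ} {f : Eu N → ℝ} (hf : Continuous f) {r R : ℝ} (hr : 0 < r)
    (hR : 0 < R) (x : Eu N) :
    QQ R f x - MM r (QQ R f) x = QQ r f x - QQ r (MM R f) x := by
  have key : ∀ ε > 0, |(QQ R f x - MM r (QQ R f) x) - (QQ r f x - QQ r (MM R f) x)| ≤
      ε * (2 * (qq (N := N) R).real univ + 2 * (qq (N := N) r).real univ) := by
    intro ε hε
    obtain ⟨g, hg, hgf, -⟩ := hf.exists_contDiff_approx 2 (ε := fun _ => ε) continuous_const (fun _ => hε)
    have hg2 : ContDiff ℝ 2 g := hg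
    have hgc := hg2.continuous
    have hd : ∀ y, |f y - g y| ≤ ε := fun y => by
      have := (hgf y).le; rwa [dist_comm, Real.dist_eq] at this
    have h1 : ∀ y, |QQ R f y - QQ R g y| ≤ ε * (qq (N := N) R).real univ := fun y =>
      qq_SB.abs_sub_le hf.continuousOn hgc.continuousOn fun y _ => hd y
    have h2 : |MM r (QQ R f) x - MM r (QQ R g) x| ≤ ε * (qq (N := N) R).real univ :=
      MM_abs_sub hr (QQ_cont hf).continuousOn (QQ_cont hgc).continuousOn fun y _ => h1 y
    have h3 : ∀ y, |QQ r f y - QQ r g y| ≤ ε * (qq (N := N) r).real univ := fun y =>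
      qq_SB.abs_sub_le hf.continuousOn hgc.continuousOn fun y _ => hd y
    have h4 : |QQ r (MM R f) x - QQ r (MM R g) x| ≤ ε * (qq (N := N) r).real univ :=
      qq_SB.abs_sub_le (MM_cont hR hf).continuousOn (MM_cont hR hgc).continuousOn
        fun y _ => MM_abs_sub hR hf.continuousOn hgc.continuousOn fun y _ => hd y
    have h5 := comm_identity2 hg2 hr hR x
    have := h1 x
    have := h3 x
    simp only [abs_le] at *
    constructor <;> nlinarith
  set C := (2 * (qq (N := N) R).real univ + 2 * (qq (N := N) r).real univ)
  have hC : 0 ≤ C := by positivity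
  have h0 : |(QQ R f x - MM r (QQ R f) x) - (QQ r f x - QQ r (MM R f) x)| ≤ 0 := by
    apply le_of_forall_pos_le_add
    intro ε hε
    have := key (ε / (C + 1)) (by positivity)
    refine this.trans ?_
    rw [div_mul_eq_mul_div, div_le_iff₀ (by positivity)]
    nlinarith
  exact sub_eq_zero.1 (abs_nonpos_iff.1 h0)

theorem bounded_of_compact {N : ℕ} {f : Eu N → ℝ} (hf : Continuous f) (hs : HasCompactSupport f) :
    ∃ C, 0 ≤ C ∧ ∀ x, |f x| ≤ C := by
  obtain ⟨C, hC⟩ := hs.exists_bound_of_continuous hf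
  exact ⟨C, (norm_nonneg _).trans (hC 0), hC⟩

theorem av_bound {N : ℕ} {κ f : Eu N → ℝ} (hf : Continuous f) (hs : HasCompactSupport f)
    {B : ℝ} (hB : ∀ z, |κ z| ≤ B) {s : ℝ} (h0 : 0 < s) (x : Eu N) :
    |∫ z, κ z * f (x + s • z)| ≤ B * (s ^ N)⁻¹ * ∫ y, |f y| := by
  have hInt : Integrable f := hf.integrable_of_hasCompactSupport hs
  have h1 : ∫ z, |f (x + s • z)| = (s^N)⁻¹ * ∫ y, |f y| := by
    have := Measure.integral_comp_smul (volume : Measure (Eu N)) (fun y => |f (x + y)|) s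
    rw [this, integral_add_left_eq_self (fun y => |f y|) x]
    simp [abs_of_pos h0]
  have hi : Integrable (fun z => f (x + s • z)) := by
    have := (hInt.comp_add_left x)
    exact (integrable_comp_smul_iff volume _ h0.ne').2 this
  calc |∫ z, κ z * f (x + s • z)| ≤ ∫ z, B * |f (x + s • z)| := by
        rw [← Real.norm_eq_abs]
        refine norm_integral_le_of_norm_le (hi.abs.const_mul B) (ae_of_all _ fun z => ?_)
        rw [norm_mul]
        exact mul_le_mul_of_nonneg_right (hB z) (norm_nonneg _)
    _ = _ := by rw [integral_const_mul, h1]; ring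

noncomputable def Av {N : ℕ} (f : Eu N → ℝ) (s : ℝ) (x : Eu N) : ℝ := ∫ z, theta z * f (x + s • z)

noncomputable def GG {N : ℕ} (f : Eu N → ℝ) (x : Eu N) : ℝ := ∫ s in Ioi (0:ℝ), s * Av f s x

theorem Av_cont {N : ℕ} {f : Eu N → ℝ} (hf : Continuous f) :
    Continuous (fun p : ℝ × Eu N => Av f p.1 p.2) := by
  unfold Av
  refine av_continuous (k := fun (p : ℝ × Eu N) z => theta z * f (p.2 + p.1 • z)) ?_ ?_
  · have := theta_continuous (N := N)
    fun_prop
  · intro p z hz; rw [theta_zero hz, zero_mul]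

theorem theta_bdd {N : ℕ} : ∃ B, 0 ≤ B ∧ ∀ z : Eu N, |theta z| ≤ B :=
  bounded_of_compact theta_continuous theta_compact
theorem rho_bdd {N : ℕ} : ∃ B, 0 ≤ B ∧ ∀ z : Eu N, |rho z| ≤ B :=
  bounded_of_compact rho_continuous rho_compact

theorem Av_bound {N : ℕ} (hN : 3 ≤ N) {f : Eu N → ℝ} (hf : Continuous f) (hs : HasCompactSupport f) :
    ∃ C, 0 ≤ C ∧ ∀ s x, 0 < s → |s * Av f s x| ≤ C * (1 + s^2)⁻¹ := by
  obtain ⟨B, hB0, hB⟩ := theta_bdd (N := N)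
  obtain ⟨F, hF0, hF⟩ := bounded_of_compact hf hs
  set T := ∫ z : Eu N, theta z
  have hT : 0 < T := theta_int_pos
  set I := ∫ y, |f y|
  have hI : 0 ≤ I := integral_nonneg fun y => abs_nonneg _
  have h1 : ∀ s x, |Av f s x| ≤ F * T := by
    intro s x
    unfold Av
    rw [← Real.norm_eq_abs]
    calc ‖∫ z, theta z * f (x + s • z)‖ ≤ ∫ z : Eu N, F * theta z := by
          refine norm_integral_le_of_norm_le (theta_integrable.const_mul F) (ae_of_all _ fun z => ?_)
          rw [norm_mul, mul_comm, Real.norm_eq_abs, Real.norm_eq_abs, abs_of_nonneg (theta_nonneg z)]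
          exact mul_le_mul_of_nonneg_right (hF _) (theta_nonneg z)
      _ = _ := integral_const_mul _ _
  refine ⟨2 * (F * T + B * I), by positivity, fun s x h0 => ?_⟩
  rw [abs_mul, abs_of_pos h0, ← div_eq_mul_inv, le_div_iff₀ (by positivity)]
  have ha := h1 s x
  have hn := abs_nonneg (Av f s x)
  rcases le_or_gt s 1 with h | h
  · have : s * |Av f s x| ≤ F * T := by nlinarith
    have h3 : 1 + s^2 ≤ 2 := by nlinarith
    have : 0 ≤ B * I := by positivity
    have : s * |Av f s x| * (1 + s^2) ≤ s * |Av f s x| * 2 := by gcongr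
    nlinarith
  · have h2 := av_bound hf hs hB h0 x
    change |Av f s x| ≤ _ at h2
    have h3 : s ^ 3 ≤ s ^ N := pow_le_pow_right₀ h.le hN
    have h4 : (s^N)⁻¹ ≤ (s^3)⁻¹ := inv_anti₀ (by positivity) h3
    have h5 : |Av f s x| ≤ B * (s^3)⁻¹ * I := h2.trans (by gcongr)
    have h6 : |Av f s x| * s^3 ≤ B * I := by
      calc |Av f s x| * s^3 ≤ B * (s^3)⁻¹ * I * s^3 := by gcongr
        _ = B * I := by field_simp
    have h7 : s * |Av f s x| * (1 + s^2) ≤ s * |Av f s x| * (2 * s^2) := by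
      gcongr; nlinarith
    have : 0 ≤ F * T := by positivity
    nlinarith

theorem dom_integrable (C : ℝ) : IntegrableOn (fun s : ℝ => C * (1 + s^2)⁻¹) (Ioi 0) :=
  (integrable_inv_one_add_sq.const_mul C).integrableOn

theorem sAv_meas {N : ℕ} {f : Eu N → ℝ} (hf : Continuous f) (x : Eu N) :
    Continuous (fun s => s * Av f s x) := by
  have : Continuous (fun s => Av f s x) := (Av_cont hf).comp (by fun_prop : Continuous fun s : ℝ => (s, x))
  fun_prop

theorem sAv_integrable {N : ℕ} (hN : 3 ≤ N) {f : Eu N → ℝ} (hf : Continuous f) (hs : HasCompactSupport f)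
    (x : Eu N) : IntegrableOn (fun s => s * Av f s x) (Ioi 0) := by
  obtain ⟨C, -, hC⟩ := Av_bound hN hf hs
  refine (dom_integrable C).mono' (sAv_meas hf x).aestronglyMeasurable ?_
  rw [ae_restrict_iff' measurableSet_Ioi]
  exact ae_of_all _ fun s h => hC s x h

theorem GG_cont {N : ℕ} (hN : 3 ≤ N) {f : Eu N → ℝ} (hf : Continuous f) (hs : HasCompactSupport f) :
    Continuous (GG f) := by
  obtain ⟨C, -, hC⟩ := Av_bound hN hf hs
  unfold GG
  refine continuous_of_dominated (bound := fun s => C * (1 + s^2)⁻¹) 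
    (fun x => (sAv_meas hf x).aestronglyMeasurable) ?_ (dom_integrable C) ?_
  · intro x
    rw [ae_restrict_iff' measurableSet_Ioi]
    exact ae_of_all _ fun s h => hC s x h
  · refine ae_of_all _ fun s => ?_
    have : Continuous (fun x => Av f s x) := (Av_cont hf).comp (by fun_prop : Continuous fun x : Eu N => (s, x))
    fun_prop

theorem cocompact_cg {N : ℕ} : (cocompact (Eu N)).IsCountablyGenerated := by
  rw [← Metric.cobounded_eq_cocompact, ← comap_norm_atTop]
  infer_instance

theorem GG_tendsto {N : ℕ} (hN : 3 ≤ N) {f : Eu N → ℝ} (hf : Continuous f) (hs : HasCompactSupport f) :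
    Tendsto (GG f) (cocompact (Eu N)) (nhds 0) := by
  obtain ⟨C, -, hC⟩ := Av_bound hN hf hs
  have := cocompact_cg (N := N)
  have h := tendsto_integral_filter_of_dominated_convergence (μ := volume.restrict (Ioi (0:ℝ))) 
    (F := fun x s => s * Av f s x) (f := fun _ => 0) (l := cocompact (Eu N))
    (fun s => C * (1 + s^2)⁻¹) (Eventually.of_forall fun x => (sAv_meas hf x).aestronglyMeasurable)
    ?_ (dom_integrable C) ?_
  · simp only [integral_zero] at h
    exact h
  · refine Eventually.of_forall fun x => ?_
    rw [ae_restrict_iff' measurableSet_Ioi]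
    exact ae_of_all _ fun s h => hC s x h
  · rw [ae_restrict_iff' measurableSet_Ioi]
    refine ae_of_all _ fun s hs0 => ?_
    obtain ⟨R, hR⟩ := (hs.isCompact.isBounded).subset_closedBall (0 : Eu N)
    refine tendsto_const_nhds.congr' ?_
    have : ∀ᶠ x in cocompact (Eu N), R + s < ‖x‖ :=
      (tendsto_norm_cocompact_atTop (E := Eu N)).eventually (eventually_gt_atTop _)
    filter_upwards [this] with x hx
    have : Av f s x = 0 := by
      unfold Av
      rw [← integral_zero (Eu N) ℝ (μ := volume)]
      congr 1
      funext z
      rcases le_or_gt 1 ‖z‖ with h | h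
      · rw [theta_zero h, zero_mul]
      · have : f (x + s • z) = 0 := by
          apply image_eq_zero_of_notMem_tsupport
          intro hm
          have h1 := hR hm
          rw [mem_closedBall_zero_iff] at h1
          have h2 : ‖x‖ ≤ ‖x + s • z‖ + ‖s • z‖ := by
            have := norm_sub_le (x + s • z) (s • z); simpa using this
          rw [norm_smul, Real.norm_eq_abs, abs_of_pos hs0] at h2
          have : s * ‖z‖ < s * 1 := mul_lt_mul_of_pos_left h hs0
          linarith
        rw [this, mul_zero]
    rw [this, mul_zero]

theorem GG_bdd {N : ℕ} (hN : 3 ≤ N) {f : Eu N → ℝ} (hf : Continuous f) (hs : HasCompactSupport f) :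
    ∃ B, 0 ≤ B ∧ ∀ x, |GG f x| ≤ B := by
  obtain ⟨C, -, hC⟩ := Av_bound hN hf hs
  have h : ∀ x, |GG f x| ≤ ∫ s in Ioi (0:ℝ), C * (1 + s^2)⁻¹ := by
    intro x
    rw [← Real.norm_eq_abs]
    refine norm_integral_le_of_norm_le (dom_integrable C) ?_
    rw [ae_restrict_iff' measurableSet_Ioi]
    exact ae_of_all _ fun s h => hC s x h
  exact ⟨_, (abs_nonneg _).trans (h 0), h⟩

theorem theta_mul_integrable {N : ℕ} {f : Eu N → ℝ} (hf : Continuous f) (s : ℝ) (x : Eu N) :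
    Integrable (fun z => theta z * f (x + s • z)) := by
  have := theta_continuous (N := N)
  refine integrable_of_zero (by fun_prop) fun z hz => ?_
  rw [theta_zero hz, zero_mul]

theorem GG_sub {N : ℕ} (hN : 3 ≤ N) {f g : Eu N → ℝ} (hf : Continuous f) (hs : HasCompactSupport f)
    (hg : Continuous g) (hs' : HasCompactSupport g) (x : Eu N) : 
    GG (fun y => f y - g y) x = GG f x - GG g x := by
  unfold GG
  rw [← integral_sub (sAv_integrable hN hf hs x) (sAv_integrable hN hg hs' x)]
  congr 1; funext s
  rw [← mul_sub]; congr 1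
  unfold Av
  rw [← integral_sub (theta_mul_integrable hf s x) (theta_mul_integrable hg s x)]
  simp only [mul_sub]

theorem GG_smul {N : ℕ} (c : ℝ) {f : Eu N → ℝ} (x : Eu N) : 
    GG (fun y => c * f y) x = c * GG f x := by
  unfold GG Av
  rw [← integral_const_mul]
  congr 1; funext s
  rw [mul_left_comm, ← integral_const_mul c]
  congr 2; funext z; ring

theorem GG_mono {N : ℕ} (hN : 3 ≤ N) {f g : Eu N → ℝ} (hf : Continuous f) (hs : HasCompactSupport f)
    (hg : Continuous g) (hs' : HasCompactSupport g) (h : ∀ y, f y ≤ g y) (x : Eu N) : 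
    GG f x ≤ GG g x := by
  unfold GG
  refine setIntegral_mono_on (sAv_integrable hN hf hs x) (sAv_integrable hN hg hs' x) measurableSet_Ioi ?_
  intro s h0
  refine mul_le_mul_of_nonneg_left ?_ (le_of_lt h0)
  exact integral_mono (theta_mul_integrable hf s x) (theta_mul_integrable hg s x)
    fun z => mul_le_mul_of_nonneg_left (h _) (theta_nonneg z)

theorem QQ_tendsto {N : ℕ} (hN : 3 ≤ N) {f : Eu N → ℝ} (hf : Continuous f) (hs : HasCompactSupport f) (x : Eu N) :
    Tendsto (fun n : ℕ => QQ ((n:ℝ) + 1) f x) atTop (nhds (GG f x)) := by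
  have h := intervalIntegral_tendsto_integral_Ioi (μ := volume) (0:ℝ) (sAv_integrable hN hf hs x)
    (tendsto_atTop_add_const_right atTop (1:ℝ) (tendsto_natCast_atTop_atTop (R := ℝ)))
  refine h.congr fun n => ?_
  rw [QQ_eq (by positivity) hf]
  rfl

theorem QQ_bdd {N : ℕ} (hN : 3 ≤ N) {f : Eu N → ℝ} (hf : Continuous f) (hs : HasCompactSupport f) :
    ∃ B, ∀ (n : ℕ) x, |QQ ((n:ℝ) + 1) f x| ≤ B := by
  obtain ⟨C, -, hC⟩ := Av_bound hN hf hs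
  refine ⟨∫ s in Ioi (0:ℝ), C * (1 + s^2)⁻¹, fun n x => ?_⟩
  have hn : (0:ℝ) ≤ n + 1 := by positivity
  rw [QQ_eq (by positivity) hf, intervalIntegral.integral_of_le hn, ← Real.norm_eq_abs]
  have hC0 : ∀ s : ℝ, 0 < s → 0 ≤ C * (1 + s^2)⁻¹ := fun s hs => (abs_nonneg _).trans (hC s x hs)
  calc _ ≤ ∫ s in Ioc (0:ℝ) (n+1), C * (1 + s^2)⁻¹ := by
        refine norm_integral_le_of_norm_le ((dom_integrable C).mono_set Ioc_subset_Ioi_self) ?_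
        rw [ae_restrict_iff' measurableSet_Ioc]
        exact ae_of_all _ fun s h => hC s x h.1
    _ ≤ _ := by
        refine setIntegral_mono_set (dom_integrable C) ?_ (LE.le.eventuallyLE Ioc_subset_Ioi_self)
        rw [EventuallyLE, ae_restrict_iff' measurableSet_Ioi]
        exact ae_of_all _ fun s h => hC0 s h

theorem MM_decay {N : ℕ} (hN : 3 ≤ N) {f : Eu N → ℝ} (hf : Continuous f) (hs : HasCompactSupport f) :
    ∃ C, 0 ≤ C ∧ ∀ (n : ℕ) x, |MM ((n:ℝ) + 1) f x| ≤ C * ((n:ℝ) + 1)⁻¹ := by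
  obtain ⟨B, hB0, hB⟩ := rho_bdd (N := N)
  have hI : 0 ≤ ∫ y, |f y| := integral_nonneg fun y => abs_nonneg _
  refine ⟨B * ∫ y, |f y|, by positivity, fun n x => ?_⟩
  rw [MM_eq (by positivity)]
  refine (av_bound hf hs hB (by positivity) x).trans ?_
  have : (((n:ℝ) + 1)^N)⁻¹ ≤ ((n:ℝ)+1)⁻¹ := by
    apply inv_anti₀ (by positivity)
    exact le_self_pow₀ (by linarith [Nat.cast_nonneg (α := ℝ) n]) (by omega)
  calc _ ≤ B * ((n:ℝ)+1)⁻¹ * ∫ y, |f y| := by gcongr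
    _ = _ := by ring

theorem GG_mv {N : ℕ} (hN : 3 ≤ N) {f : Eu N → ℝ} (hf : Continuous f) (hs : HasCompactSupport f)
    {r : ℝ} (hr : 0 < r) (x : Eu N) : GG f x = MM r (GG f) x + QQ r f x := by
  obtain ⟨B, hB⟩ := QQ_bdd hN hf hs
  obtain ⟨C, hC0, hC⟩ := MM_decay hN hf hs
  have h1 := QQ_tendsto hN hf hs x
  have h2 : Tendsto (fun n : ℕ => MM r (QQ ((n:ℝ) + 1) f) x) atTop (nhds (MM r (GG f) x)) :=
    (mm_SB hr).dct (fun n => (QQ_cont hf).continuousOn) (fun n y _ => hB n y)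
      (fun y _ => QQ_tendsto hN hf hs y)
  have hi : Tendsto (fun n : ℕ => ((n:ℝ) + 1)⁻¹) atTop (nhds 0) :=
    tendsto_inv_atTop_zero.comp (tendsto_atTop_add_const_right atTop (1:ℝ) (tendsto_natCast_atTop_atTop (R := ℝ)))
  have h3 : Tendsto (fun n : ℕ => QQ r (MM ((n:ℝ) + 1) f) x) atTop (nhds (QQ r (fun _ => 0) x)) := by
    refine qq_SB.dct (B := C) (F := fun n : ℕ => MM ((n:ℝ) + 1) f) (f := fun _ => 0) (fun n => (MM_cont (by positivity) hf).continuousOn) (fun n y _ => ?_)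
      (fun y _ => ?_)
    · refine (hC n y).trans ?_
      have : ((n:ℝ)+1)⁻¹ ≤ 1 := inv_le_one_of_one_le₀ (by linarith [Nat.cast_nonneg (α := ℝ) n])
      nlinarith
    · refine squeeze_zero_norm (fun n => hC n y) ?_
      simpa using hi.const_mul C
  rw [QQ_const, mul_zero] at h3
  have h4 := (h1.sub h2)
  have h5 := (tendsto_const_nhds (x := QQ r f x)).sub h3
  have h6 := tendsto_nhds_unique h4 (h5.congr fun n => (comm_identity hf hr (by positivity) x).symm)
  linarith


theorem GG_nonpos {N : ℕ} (hN : 3 ≤ N) {f : Eu N → ℝ} (hf : Continuous f) (hs : HasCompactSupport f)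
    (h : ∀ x, 0 < GG f x → f x ≤ 0) (x : Eu N) : GG f x ≤ 0 := by
  have : Nontrivial (Eu N) := by
    have : Nonempty (Fin N) := ⟨⟨0, by omega⟩⟩
    infer_instance
  obtain ⟨y, hy⟩ := exists_ne x
  obtain ⟨B, hB0, hB⟩ := GG_bdd hN hf hs
  have hc := GG_cont hN hf hs
  refine max_principle hN (K := {y}) (finite_singleton y) (singleton_nonempty y) hc.continuousOn (B := B)
    (fun x _ => (le_abs_self _).trans (hB x)) ?_ ?_ x (by simpa using hy.symm)
  · intro ε hε
    exact ((GG_tendsto hN hf hs).eventually (gt_mem_nhds hε)).mono fun x hx => hx.le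
  · intro x _ hx
    have ho : IsOpen {x | 0 < GG f x} := isOpen_lt continuous_const hc
    obtain ⟨r₀, hr₀, hr⟩ := Metric.isOpen_iff.1 ho x hx
    refine ⟨r₀, hr₀, fun r h0 h1 => ?_⟩
    have h2 := GG_mv hN hf hs h0 x
    have h3 : QQ r f x ≤ QQ r (fun _ => 0) x := QQ_mono hf.continuousOn continuousOn_const
      fun y hy => h y (hr (closedBall_subset_ball h1 hy))
    rw [QQ_const, mul_zero] at h3
    linarith

theorem GG_le {N : ℕ} (hN : 3 ≤ N) {f g : Eu N → ℝ} (hf : Continuous f) (hs : HasCompactSupport f)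
    (hg : Continuous g) (hs' : HasCompactSupport g)
    (h : ∀ x, GG g x < GG f x → f x ≤ g x) (x : Eu N) : GG f x ≤ GG g x := by
  have := GG_nonpos hN (f := fun y => f y - g y) (hf.sub hg) (hs.sub hs') (fun x hx => by
    rw [GG_sub hN hf hs hg hs'] at hx
    have := h x (by linarith)
    linarith) x
  rw [GG_sub hN hf hs hg hs'] at this
  linarith

theorem GG_add {N : ℕ} (hN : 3 ≤ N) {f g : Eu N → ℝ} (hf : Continuous f) (hs : HasCompactSupport f)
    (hg : Continuous g) (hs' : HasCompactSupport g) (x : Eu N) : 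
    GG (fun y => f y + g y) x = GG f x + GG g x := by
  have h := GG_sub hN (f := fun y => f y + g y) (g := g) (hf.add hg) (hs.add hs') hg hs' x
  simp only [add_sub_cancel_right] at h
  linarith

theorem exists_step {N : ℕ} (hN : 3 ≤ N) {ψ : Eu N → ℝ} (hψ : Continuous ψ) (hψs : HasCompactSupport ψ)
    (hψ0 : ∀ x, 0 ≤ ψ x) {F : ℝ → ℝ} (hFa : Antitone F) {L : ℝ} (hL0 : 0 ≤ L)
    (hFL : ∀ a b, |F a - F b| ≤ L * |a - b|) {δ : ℝ} (hδ : 0 < δ)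
    (hδs : ∀ x, δ * L * GG ψ x ≤ 1 / 2) (j : ℕ) :
    ∀ h : Eu N → ℝ, Continuous h → HasCompactSupport h →
      ∃ u : Eu N → ℝ, Continuous u ∧ ∀ x, u x = GG (fun y => (j * δ) * (ψ y * F (u y)) + h y) x := by
  have hFc : Continuous F := by
    have : LipschitzWith L.toNNReal F := LipschitzWith.of_dist_le_mul fun a b => by
      rw [Real.dist_eq, Real.dist_eq, Real.coe_toNNReal _ hL0]; exact hFL a b
    exact this.continuous
  have hcs : ∀ (a : ℝ) (u : Eu N → ℝ), HasCompactSupport (fun y => a * (ψ y * F (u y))) := fun a u =>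
    (hψs.mul_right).mul_left
  induction j with
  | zero =>
    intro h hc hs
    refine ⟨GG h, GG_cont hN hc hs, fun x => ?_⟩
    simp
  | succ j ih =>
    intro h hc hs
    -- for each bounded continuous v
    have h1 : ∀ v : BoundedContinuousFunction (Eu N) ℝ, ∃ u : BoundedContinuousFunction (Eu N) ℝ,
        ∀ x, u x = GG (fun y => (j * δ) * (ψ y * F (u y)) + (δ * (ψ y * F (v y)) + h y)) x := by
      intro v
      have hvc := v.continuous
      have c1 : Continuous (fun y => δ * (ψ y * F (v y)) + h y) := by fun_prop
      have s1 : HasCompactSupport (fun y => δ * (ψ y * F (v y)) + h y) := (hcs δ v).add hs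
      obtain ⟨u, huc, hu⟩ := ih _ c1 s1
      obtain ⟨B, hB0, hB⟩ := GG_bdd hN (f := fun y => (j * δ) * (ψ y * F (u y)) + (δ * (ψ y * F (v y)) + h y)) (by fun_prop) ((hcs _ u).add s1)
      exact ⟨BoundedContinuousFunction.ofNormedAddCommGroup u huc B fun x => by rw [hu x]; exact hB x,
        fun x => hu x⟩
    choose T hT using h1
    have hone : ∀ v₁ v₂ : BoundedContinuousFunction (Eu N) ℝ, ∀ x, T v₁ x - T v₂ x ≤ 1/2 * dist v₁ v₂ := by
      intro v₁ v₂ x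
      set M := dist v₁ v₂
      have hM : 0 ≤ M := dist_nonneg
      have hv1 := v₁.continuous
      have hv2 := v₂.continuous
      have hu1 := (T v₁).continuous
      have hu2 := (T v₂).continuous
      have sg : HasCompactSupport (fun y => (δ * L * M) * ψ y) := hψs.mul_left
      have s1 := (hcs (j * δ) (T v₁)).add ((hcs δ v₁).add hs)
      have s2 := (hcs (j * δ) (T v₂)).add ((hcs δ v₂).add hs)
      have c1 : Continuous (fun y => (j * δ) * (ψ y * F (T v₁ y)) + (δ * (ψ y * F (v₁ y)) + h y)) := by fun_prop
      have c2 : Continuous (fun y => (j * δ) * (ψ y * F (T v₂ y)) + (δ * (ψ y * F (v₂ y)) + h y)) := by fun_prop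
      have cg : Continuous (fun y => (δ * L * M) * ψ y) := by fun_prop
      have hG0 : ∀ x, 0 ≤ GG ψ x := by
        intro x
        have := GG_mono hN (f := fun _ => 0) continuous_const HasCompactSupport.zero hψ hψs hψ0 x
        simpa [GG, Av] using this
      have key := GG_le hN c1 s1 (c2.add cg) (s2.add sg) (fun y hy => by
        change GG (fun y => ((j * δ) * (ψ y * F (T v₂ y)) + (δ * (ψ y * F (v₂ y)) + h y)) + (δ * L * M) * ψ y) y < _ at hy
        rw [GG_add hN c2 s2 cg sg, GG_smul, ← hT v₁ y, ← hT v₂ y] at hy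
        have h5 : 0 ≤ δ * L * M * GG ψ y := by have := hG0 y; positivity
        have h6 : F (T v₁ y) ≤ F (T v₂ y) := hFa (by linarith)
        have h7 : F (v₁ y) ≤ F (v₂ y) + L * M := by
          have := (le_abs_self _).trans (hFL (v₁ y) (v₂ y))
          have h8 : |v₁ y - v₂ y| ≤ M := by
            have := BoundedContinuousFunction.dist_coe_le_dist (f := v₁) (g := v₂) y
            rwa [Real.dist_eq] at this
          have : L * |v₁ y - v₂ y| ≤ L * M := by gcongr
          linarith
        have := hψ0 y
        have h9 : j * δ * (ψ y * F (T v₁ y)) ≤ j * δ * (ψ y * F (T v₂ y)) := by gcongr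
        have h10 : δ * (ψ y * F (v₁ y)) ≤ δ * (ψ y * (F (v₂ y) + L * M)) := by gcongr
        simp only [Pi.add_apply]
        linarith) x
      change _ ≤ GG (fun y => ((j * δ) * (ψ y * F (T v₂ y)) + (δ * (ψ y * F (v₂ y)) + h y)) + (δ * L * M) * ψ y) x at key
      rw [GG_add hN c2 s2 cg sg, GG_smul] at key
      have k1 := hT v₁ x
      have k2 := hT v₂ x
      have k3 : δ * L * M * GG ψ x ≤ 1/2 * M := by
        have := mul_le_mul_of_nonneg_right (hδs x) hM
        linarith
      rw [k1, k2]
      linarith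
    have hcontr : ContractingWith (1/2 : NNReal) T := by
      refine ⟨by rw [div_lt_one] <;> norm_num, LipschitzWith.of_dist_le_mul fun v₁ v₂ => ?_⟩
      rw [BoundedContinuousFunction.dist_le (by positivity)]
      intro x
      rw [Real.dist_eq, abs_sub_le_iff]
      have e : (((1/2 : NNReal) : ℝ)) = 1/2 := by norm_num
      rw [e]
      exact ⟨hone v₁ v₂ x, by rw [dist_comm]; exact hone v₂ v₁ x⟩
    set u := ContractingWith.fixedPoint T hcontr
    have hu : T u = u := hcontr.fixedPoint_isFixedPt
    refine ⟨u, u.continuous, fun x => ?_⟩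
    have := hT u x
    rw [hu] at this
    rw [this]
    congr 1
    funext y
    push_cast
    ring

theorem exists_approx {N : ℕ} (hN : 3 ≤ N) {ψ : Eu N → ℝ} (hψ : Continuous ψ) (hψs : HasCompactSupport ψ)
    (hψ0 : ∀ x, 0 ≤ ψ x) {F : ℝ → ℝ} (hFa : Antitone F) {L : ℝ} (hL0 : 0 ≤ L)
    (hFL : ∀ a b, |F a - F b| ≤ L * |a - b|) :
    ∃ u : Eu N → ℝ, Continuous u ∧ ∀ x, u x = GG (fun y => ψ y * F (u y)) x := by
  obtain ⟨B, hB0, hB⟩ := GG_bdd hN hψ hψs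
  obtain ⟨J, hJ⟩ := exists_nat_gt (2 * L * B)
  have hJ1 : (0:ℝ) < J + 1 := by positivity
  obtain ⟨u, hu, h⟩ := exists_step hN hψ hψs hψ0 hFa hL0 hFL (δ := 1 / ((J:ℝ) + 1)) (by positivity) (fun x => by
    have := (le_abs_self _).trans (hB x)
    have : L * GG ψ x ≤ L * B := by gcongr
    rw [mul_assoc, div_mul_eq_mul_div, div_le_iff₀ hJ1]
    linarith) (J + 1) (fun _ => 0) continuous_const HasCompactSupport.zero
  refine ⟨u, hu, fun x => ?_⟩
  rw [h x]
  congr 1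
  funext y
  push_cast
  field_simp
  ring


noncomputable def chi (n : ℕ) (t : ℝ) : ℝ := max 0 (min 1 (min (((n:ℝ)+1) * t - 1) ((n:ℝ) + 2 - t)))

theorem chi_cont (n : ℕ) : Continuous (chi n) := by unfold chi; fun_prop
theorem chi_nonneg (n : ℕ) (t : ℝ) : 0 ≤ chi n t := le_max_left _ _
theorem chi_le_one (n : ℕ) (t : ℝ) : chi n t ≤ 1 := max_le zero_le_one (min_le_left _ _)
theorem chi_zero_left {n : ℕ} {t : ℝ} (h : ((n:ℝ)+1) * t ≤ 1) : chi n t = 0 :=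
  max_eq_left ((min_le_right _ _).trans ((min_le_left _ _).trans (by linarith)))
theorem chi_zero_right {n : ℕ} {t : ℝ} (h : (n:ℝ) + 2 ≤ t) : chi n t = 0 :=
  max_eq_left ((min_le_right _ _).trans ((min_le_right _ _).trans (by linarith)))
theorem chi_nonpos {n : ℕ} {t : ℝ} (h : t ≤ 0) : chi n t = 0 :=
  chi_zero_left (by nlinarith [Nat.cast_nonneg (α := ℝ) n])
theorem chi_mono (n : ℕ) (t : ℝ) : chi n t ≤ chi (n+1) t := by
  rcases le_or_gt t 0 with h | h
  · rw [chi_nonpos h, chi_nonpos h]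
  · unfold chi
    push_cast
    gcongr <;> linarith
theorem chi_eq_one {n : ℕ} {t : ℝ} (h : 2 ≤ ((n:ℝ)+1) * t) (h' : t ≤ n + 1) : chi n t = 1 := by
  unfold chi
  rw [min_eq_left (le_min (by linarith) (by linarith))]; simp
theorem chi_tendsto {t : ℝ} (h : 0 < t) : ∀ᶠ n : ℕ in atTop, chi n t = 1 := by
  have h1 : ∀ᶠ n : ℕ in atTop, 2 / t ≤ (n:ℝ) := tendsto_natCast_atTop_atTop.eventually (eventually_ge_atTop _)
  have h2 : ∀ᶠ n : ℕ in atTop, t ≤ (n:ℝ) := tendsto_natCast_atTop_atTop.eventually (eventually_ge_atTop _)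
  filter_upwards [h1, h2] with n h1 h2
  rw [div_le_iff₀ h] at h1
  exact chi_eq_one (by nlinarith) (by linarith)

noncomputable def psi (φ : ℝ → ℝ) (n : ℕ) (t : ℝ) : ℝ := φ t * chi n t

theorem psi_cont {φ : ℝ → ℝ} (hφ : ContinuousOn φ (Ioi 0)) (n : ℕ) : Continuous (psi φ n) := by
  rw [continuous_iff_continuousAt]
  intro t
  rcases lt_or_ge 0 t with h | h
  · exact (hφ.continuousAt (Ioi_mem_nhds h)).mul (chi_cont n).continuousAt
  · have : psi φ n =ᶠ[nhds t] fun _ => 0 := by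
      have h1 : t < 1 / ((n:ℝ)+1) := h.trans_lt (by positivity)
      filter_upwards [Iio_mem_nhds h1] with s hs
      unfold psi
      rw [mem_Iio, lt_div_iff₀ (by positivity)] at hs
      rw [chi_zero_left (by linarith), mul_zero]
    exact this.continuousAt

theorem psi_nonneg {φ : ℝ → ℝ} (hφ : ∀ r, 0 < r → 0 < φ r) (n : ℕ) (t : ℝ) : 0 ≤ psi φ n t := by
  rcases lt_or_ge 0 t with h | h
  · exact mul_nonneg (hφ t h).le (chi_nonneg n t)
  · rw [psi, chi_nonpos h, mul_zero]

theorem psi_mono {φ : ℝ → ℝ} (hφ : ∀ r, 0 < r → 0 < φ r) (n : ℕ) (t : ℝ) : psi φ n t ≤ psi φ (n+1) t := by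
  rcases lt_or_ge 0 t with h | h
  · exact mul_le_mul_of_nonneg_left (chi_mono n t) (hφ t h).le
  · rw [psi, chi_nonpos h, mul_zero]
    exact psi_nonneg hφ _ _

theorem psi_le {φ : ℝ → ℝ} (hφ : ∀ r, 0 < r → 0 < φ r) (n : ℕ) {t : ℝ} (ht : 0 < t) : psi φ n t ≤ φ t := by
  have := mul_le_mul_of_nonneg_left (chi_le_one n t) (hφ t ht).le
  rwa [mul_one] at this

noncomputable def FF (p : ℝ) (n : ℕ) (u : ℝ) : ℝ := (max u 0 + 1 / ((n:ℝ) + 1)) ^ (-p)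

theorem FF_anti {p : ℝ} (hp : 0 < p) (n : ℕ) : Antitone (FF p n) := by
  intro a b hab
  unfold FF
  refine Real.rpow_le_rpow_of_nonpos (by positivity) (by gcongr) (by linarith)

theorem FF_lip {p : ℝ} (hp : 0 < p) (n : ℕ) : ∃ L, 0 ≤ L ∧ ∀ a b, |FF p n a - FF p n b| ≤ L * |a - b| := by
  set ε : ℝ := 1 / ((n:ℝ) + 1) with hε
  have hεp : 0 < ε := by positivity
  refine ⟨p * ε ^ (-p - 1), by positivity, fun a b => ?_⟩
  have h := Convex.norm_image_sub_le_of_norm_hasDerivWithin_le (f := fun s : ℝ => s ^ (-p)) 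
    (f' := fun s => (-p) * s ^ (-p - 1)) (s := Ici ε) (C := p * ε ^ (-p-1)) 
    (x := max b 0 + ε) (y := max a 0 + ε)
    (fun s hs => (rpow_hasDerivAt' (hεp.trans_le hs)).hasDerivWithinAt) (fun s hs => by
      have hs0 := hεp.trans_le hs
      rw [norm_mul, norm_neg, Real.norm_eq_abs, Real.norm_eq_abs, abs_of_pos hp, abs_of_pos (Real.rpow_pos_of_pos hs0 _)]
      exact mul_le_mul_of_nonneg_left (Real.rpow_le_rpow_of_nonpos hεp hs (by linarith)) hp.le) (convex_Ici ε)
      (by simp) (by simp)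
  rw [Real.norm_eq_abs, Real.norm_eq_abs] at h
  refine h.trans ?_
  refine mul_le_mul_of_nonneg_left ?_ (by positivity)
  have : max a 0 + ε - (max b 0 + ε) = max a 0 - max b 0 := by ring
  rw [this]
  have h2 := abs_max_sub_max_le_max a 0 b 0
  simpa using h2

theorem exists_infDist {N : ℕ} (hN : 3 ≤ N) {K : Set (Eu N)} (hK : K.Finite) (hne : K.Nonempty) {t : ℝ} (ht : 0 ≤ t) :
    ∃ x, infDist x K = t := by
  obtain ⟨k, hk⟩ := hne
  obtain ⟨R, hR⟩ := hK.isBounded.subset_closedBall (0 : Eu N)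
  have hR0 : 0 ≤ R := by
    have := hR hk
    rw [mem_closedBall_zero_iff] at this
    exact (norm_nonneg _).trans this
  have : t ∈ range (fun x => infDist x K) := by
    refine mem_range_of_exists_le_of_exists_ge (continuous_infDist_pt K) ⟨k, ?_⟩ 
      ⟨EuclideanSpace.single ⟨0, by omega⟩ (R + t), ?_⟩
    · rw [infDist_zero_of_mem hk]; exact ht
    · refine (le_infDist ⟨k, hk⟩).2 fun y hy => ?_
      have h1 := hR hy
      rw [mem_closedBall_zero_iff] at h1
      rw [dist_eq_norm]
      have := norm_sub_norm_le (EuclideanSpace.single (⟨0, by omega⟩ : Fin N) (R + t)) y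
      rw [EuclideanSpace.norm_single, Real.norm_eq_abs, abs_of_nonneg (by positivity)] at this
      linarith
  exact this

theorem infDist_bounded {N : ℕ} {K : Set (Eu N)} (hK : K.Finite) (hne : K.Nonempty) :
    ∃ R, ∀ x, ‖x‖ ≤ infDist x K + R := by
  obtain ⟨R, hR⟩ := hK.isBounded.subset_closedBall (0 : Eu N)
  refine ⟨R, fun x => ?_⟩
  obtain ⟨y, hy, h⟩ := hK.isCompact.exists_infDist_eq_dist hne x
  rw [h, dist_eq_norm]
  have h1 := hR hy
  rw [mem_closedBall_zero_iff] at h1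
  have := norm_sub_norm_le x y
  linarith

theorem infDist_pos_compl {N : ℕ} {K : Set (Eu N)} (hK : K.Finite) (hne : K.Nonempty) {x : Eu N} (hx : x ∈ Kᶜ) :
    0 < infDist x K := (hK.isClosed.notMem_iff_infDist_pos hne).1 hx

theorem psi_dist_compact {N : ℕ} {K : Set (Eu N)} (hK : K.Finite) (hne : K.Nonempty) (φ : ℝ → ℝ) (n : ℕ) :
    HasCompactSupport (fun x => psi φ n (infDist x K)) := by
  obtain ⟨R, hR⟩ := infDist_bounded hK hne
  refine HasCompactSupport.intro (isCompact_closedBall 0 (n + 2 + R)) fun x hx => ?_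
  rw [mem_closedBall_zero_iff, not_le] at hx
  have := hR x
  rw [psi, chi_zero_right (by linarith), mul_zero]

theorem approx_seq {N : ℕ} (hN : 3 ≤ N) {K : Set (Eu N)} (hK : K.Finite) (hne : K.Nonempty)
    {p : ℝ} (hp : 0 < p) {φ : ℝ → ℝ} (hφ : ∀ r, 0 < r → 0 < φ r) (hφc : ContinuousOn φ (Ioi 0)) :
    ∃ W f : ℕ → Eu N → ℝ, (∀ n, Continuous (W n)) ∧ (∀ n, Continuous (f n)) ∧
      (∀ n, HasCompactSupport (f n)) ∧ (∀ n x, W n x = GG (f n) x) ∧ (∀ n x, 0 ≤ f n x) ∧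
      (∀ n x, 0 < W n x) ∧ (∀ n x, W n x ≤ W (n+1) x) ∧ 
      (∀ n x, f n x = psi φ n (infDist x K) * (W n x + 1 / ((n:ℝ)+1)) ^ (-p)) ∧
      (∀ u : Eu N → ℝ, ContDiffOn ℝ 2 u Kᶜ → 
        (∀ x ∈ Kᶜ, 0 < u x ∧ φ (infDist x K) * u x ^ (-p) ≤ -laplacian u x) → 
        ∀ n, ∀ x ∈ Kᶜ, W n x ≤ u x) := by
  have hopen : IsOpen Kᶜ := hK.isClosed.isOpen_compl
  have hPc : ∀ n, Continuous (fun x : Eu N => psi φ n (infDist x K)) := fun n =>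
    (psi_cont hφc n).comp (continuous_infDist_pt K)
  have hex : ∀ n, ∃ u : Eu N → ℝ, Continuous u ∧ 
      ∀ x, u x = GG (fun y => psi φ n (infDist y K) * FF p n (u y)) x := by
    intro n
    obtain ⟨L, hL0, hL⟩ := FF_lip hp n
    exact exists_approx hN (hPc n) (psi_dist_compact hK hne φ n) (fun x => psi_nonneg hφ _ _) (FF_anti hp n) hL0 hL
  choose W hWc hW using hex
  set f : ℕ → Eu N → ℝ := fun n y => psi φ n (infDist y K) * FF p n (W n y) with hf
  have hFc : ∀ n, Continuous (FF p n) := by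
    intro n
    unfold FF
    refine Continuous.rpow_const (by fun_prop) fun u => Or.inl ?_
    have : 0 < max u 0 + 1 / ((n:ℝ)+1) := by positivity
    exact this.ne'
  have hFp : ∀ n u, 0 < FF p n u := fun n u => by unfold FF; positivity
  have hfc : ∀ n, Continuous (f n) := fun n => (hPc n).mul ((hFc n).comp (hWc n))
  have hfs : ∀ n, HasCompactSupport (f n) := fun n => (psi_dist_compact hK hne φ n).mul_right
  have hf0 : ∀ n x, 0 ≤ f n x := fun n x => mul_nonneg (psi_nonneg hφ _ _) (hFp _ _).le
  have hW0 : ∀ n x, 0 ≤ W n x := by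
    intro n x
    rw [hW n x]
    have := GG_mono hN (f := fun _ => 0) continuous_const HasCompactSupport.zero (hfc n) (hfs n) (hf0 n) x
    simpa [GG, Av] using this
  have hWm : ∀ n x, W n x ≤ W (n+1) x := by
    intro n x
    rw [hW n x, hW (n+1) x]
    refine GG_le hN (hfc n) (hfs n) (hfc (n+1)) (hfs (n+1)) (fun y hy => ?_) x
    change GG (fun y => psi φ (n+1) (infDist y K) * FF p (n+1) (W (n+1) y)) y < GG (fun y => psi φ n (infDist y K) * FF p n (W n y)) y at hy
    rw [← hW n y, ← hW (n+1) y] at hy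
    refine mul_le_mul (psi_mono hφ n _) ?_ (hFp _ _).le (psi_nonneg hφ _ _)
    unfold FF
    rw [max_eq_left (hW0 _ _), max_eq_left (hW0 _ _)]
    have h1 := hW0 (n+1) y
    refine Real.rpow_le_rpow_of_nonpos (by positivity) ?_ (by linarith)
    push_cast
    have : 1 / ((n:ℝ) + 1 + 1) ≤ 1 / ((n:ℝ) + 1) := one_div_le_one_div_of_le (by positivity) (by linarith)
    linarith
  have hmv : ∀ n r x, 0 < r → W n x = MM r (W n) x + QQ r (f n) x := by
    intro n r x hr
    have := GG_mv hN (hfc n) (hfs n) hr x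
    have e : GG (f n) = W n := funext fun x => (hW n x).symm
    rwa [e] at this
  have hWp0 : ∀ x, 0 < W 0 x := by
    obtain ⟨x₁, hx₁⟩ := exists_infDist hN hK hne (t := 3/2) (by norm_num)
    have h1 : 0 < f 0 x₁ := by
      refine mul_pos ?_ (hFp _ _)
      rw [hx₁]
      unfold psi chi
      have := hφ (3/2) (by norm_num)
      norm_num
      exact this
    have h2 : 0 < W 0 x₁ := by
      have ho : IsOpen {x | f 0 x₁ / 2 < f 0 x} := isOpen_lt continuous_const (hfc 0)
      obtain ⟨r, hr, hb⟩ := Metric.isOpen_iff.1 ho x₁ (by simp only [mem_setOf_eq]; linarith)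
      have h3 := hmv 0 (r/2) x₁ (by positivity)
      have h4 : MM (r/2) (fun _ => 0) x₁ ≤ MM (r/2) (W 0) x₁ := MM_mono (by positivity) continuousOn_const
        (hWc 0).continuousOn fun y _ => hW0 0 y
      have h5 : QQ (r/2) (fun _ => f 0 x₁ / 2) x₁ ≤ QQ (r/2) (f 0) x₁ := QQ_mono continuousOn_const
        (hfc 0).continuousOn fun y hy => le_of_lt (hb (closedBall_subset_ball (by linarith) hy))
      rw [MM_const (by positivity)] at h4
      rw [QQ_const] at h5
      have h6 := qq_univ_pos (N := N) (r := r/2) (by positivity)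
      have := mul_pos h6 (half_pos h1)
      linarith
    intro x
    have hr : 0 < ‖x₁ - x‖ + 1 := by positivity
    have h3 := hmv 0 _ x hr
    have h4 := MM_pos hr (hWc 0) (hW0 0) h2 (x := x) (by linarith)
    have h5 : QQ (‖x₁ - x‖ + 1) (fun _ => 0) x ≤ QQ (‖x₁ - x‖ + 1) (f 0) x := QQ_mono continuousOn_const
        (hfc 0).continuousOn fun y hy => hf0 0 y
    rw [QQ_const, mul_zero] at h5
    linarith
  have hWp : ∀ n x, 0 < W n x := by
    intro n x
    induction n with
    | zero => exact hWp0 x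
    | succ n ih => exact ih.trans_le (hWm n x)
  refine ⟨W, f, hWc, hfc, hfs, hW, hf0, hWp, hWm, ?_, ?_⟩
  · intro n x
    simp only [hf, FF]
    rw [max_eq_left (hW0 _ _)]
  · intro u hu hsup n
    obtain ⟨B, hB0, hB⟩ := GG_bdd hN (hfc n) (hfs n)
    have hB' : ∀ x, |W n x| ≤ B := fun x => by rw [hW n x]; exact hB x
    have ht : Tendsto (W n) (cocompact (Eu N)) (nhds 0) := by
      have e : GG (f n) = W n := funext fun x => (hW n x).symm
      rw [← e]
      exact GG_tendsto hN (hfc n) (hfs n)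
    have hDc : ContinuousOn (fun x => W n x - u x) Kᶜ := (hWc n).continuousOn.sub hu.continuousOn
    have := max_principle hN hK hne (D := fun x => W n x - u x) hDc
      (B := B) (fun x hx => by
        have h1 := (le_abs_self _).trans (hB' x)
        have h2 := (hsup x hx).1
        linarith) ?_ ?_
    · intro x hx
      have := this x hx
      linarith
    · intro ε hε
      have h1 := ht.eventually (gt_mem_nhds hε)
      have h2 : ∀ᶠ x in cocompact (Eu N), x ∈ Kᶜ := hK.isCompact.compl_mem_cocompact
      filter_upwards [h1, h2] with x h1 h2
      have := (hsup x h2).1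
      linarith
    · intro x hx hDx
      obtain ⟨r₁, hr₁, h₁⟩ := exists_ball_compl hopen hx
      have ho : IsOpen {y ∈ Kᶜ | 0 < W n y - u y} := hDc.isOpen_inter_preimage hopen isOpen_Ioi
      obtain ⟨r₂, hr₂, h₂⟩ := Metric.isOpen_iff.1 ho x ⟨hx, hDx⟩
      refine ⟨min r₁ r₂, lt_min hr₁ hr₂, fun r hr hrlt => ?_⟩
      have hb := h₁ r (hrlt.trans_le (min_le_left _ _))
      have hb1 : closedBall x r ⊆ Kᶜ := (closedBall_subset_closedBall (by linarith)).trans hb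
      have hb2 := (closedBall_subset_ball (hrlt.trans_le (min_le_right _ _))).trans h₂
      have e1 := hmv n r x hr
      have e2 := mv_local hopen hu hr hb
      have e3 : QQ r (f n) x ≤ QQ r (fun y => -laplacian u y) x := by
        refine QQ_mono (hfc n).continuousOn ((laplacian_continuousOn hopen hu).neg.mono hb1) fun y hy => ?_
        obtain ⟨hyK, hy1⟩ := hb2 hy
        obtain ⟨h3, h4⟩ := hsup y hyK
        refine le_trans ?_ h4
        simp only [hf, FF]
        have hd := infDist_pos_compl hK hne hyK
        refine mul_le_mul (psi_le hφ n hd) ?_ (by positivity) (hφ _ hd).le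
        refine Real.rpow_le_rpow_of_nonpos h3 ?_ (by linarith)
        have := le_max_left (W n y) 0
        have : 0 < 1 / ((n:ℝ) + 1) := by positivity
        linarith
      rw [MM_sub hr (hWc n).continuousOn (hu.continuousOn.mono hb1)]
      linarith

/-- comparison for C² functions -/
theorem cmp2 {N : ℕ} (hN : 3 ≤ N) {K : Set (Eu N)} (hK : K.Finite) (hne : K.Nonempty)
    {u v : Eu N → ℝ} (hu : ContDiffOn ℝ 2 u Kᶜ) (hv : ContDiffOn ℝ 2 v Kᶜ) {B : ℝ}
    (hB : ∀ x ∈ Kᶜ, u x - v x ≤ B) (hinf : ∀ ε > 0, ∀ᶠ x in cocompact (Eu N), u x - v x ≤ ε)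
    (hl : ∀ x ∈ Kᶜ, -laplacian u x ≤ -laplacian v x) : ∀ x ∈ Kᶜ, u x ≤ v x := by
  have hopen : IsOpen Kᶜ := hK.isClosed.isOpen_compl
  have := max_principle hN hK hne (D := fun x => u x - v x) (hu.continuousOn.sub hv.continuousOn) hB hinf ?_
  · intro x hx
    have := this x hx
    linarith
  · intro x hx _
    obtain ⟨r₁, hr₁, h₁⟩ := exists_ball_compl hopen hx
    refine ⟨r₁, hr₁, fun r hr hrlt => ?_⟩
    have hb := h₁ r hrlt
    have hb1 : closedBall x r ⊆ Kᶜ := (closedBall_subset_closedBall (by linarith)).trans hb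
    have e1 := mv_local hopen hu hr hb
    have e2 := mv_local hopen hv hr hb
    have e3 : QQ r (fun y => -laplacian u y) x ≤ QQ r (fun y => -laplacian v y) x :=
      QQ_mono ((laplacian_continuousOn hopen hu).neg.mono hb1) ((laplacian_continuousOn hopen hv).neg.mono hb1)
        fun y hy => hl y (hb1 hy)
    rw [MM_sub hr (hu.continuousOn.mono hb1) (hv.continuousOn.mono hb1)]
    linarith


structure Adm (m : ℕ) (ψ : ℝ → ℝ) : Prop where
  cont : ContinuousOn ψ (Ioi 0)
  nonneg : ∀ r, 0 < r → 0 ≤ ψ r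
  int0 : IntegrableOn (fun σ => σ ^ (m+2) * ψ σ) (Ioo 0 1)
  int1 : IntegrableOn (fun σ => σ * ψ σ) (Ioi 1)

noncomputable def JJ (m : ℕ) (ψ : ℝ → ℝ) (r : ℝ) : ℝ := ∫ σ in (0:ℝ)..r, σ ^ (m+2) * ψ σ
noncomputable def TT (ψ : ℝ → ℝ) (r : ℝ) : ℝ := ∫ σ in Ioi r, σ * ψ σ
noncomputable def II (m : ℕ) (ψ : ℝ → ℝ) (r : ℝ) : ℝ :=
  (1 / ((m:ℝ)+1)) * ((r^(m+1))⁻¹ * JJ m ψ r + TT ψ r)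

theorem intOn_extend {g : ℝ → ℝ} (hg : ContinuousOn g (Ioi 0)) (h0 : IntegrableOn g (Ioo 0 1)) (r : ℝ) :
    IntegrableOn g (Ioc 0 r) := by
  have h1 : IntegrableOn g (Icc (1/2) r) := 
    (hg.mono fun x hx => lt_of_lt_of_le (by norm_num) hx.1).integrableOn_compact isCompact_Icc
  refine (h0.union h1).mono_set fun x hx => ?_
  rcases lt_or_ge x 1 with h | h
  · exact Or.inl ⟨hx.1, h⟩
  · exact Or.inr ⟨by linarith, hx.2⟩

theorem intOn_extend' {g : ℝ → ℝ} (hg : ContinuousOn g (Ioi 0)) (h0 : IntegrableOn g (Ioi 1)) {r : ℝ} (hr : 0 < r) :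
    IntegrableOn g (Ioi r) := by
  have h1 : IntegrableOn g (Icc r 1) := 
    (hg.mono fun x hx => lt_of_lt_of_le hr hx.1).integrableOn_compact isCompact_Icc
  refine (h0.union h1).mono_set fun x hx => ?_
  rcases lt_or_ge 1 x with h | h
  · exact Or.inl h
  · exact Or.inr ⟨le_of_lt hx, h⟩


theorem Adm.c0 {m : ℕ} {ψ : ℝ → ℝ} (h : Adm m ψ) : ContinuousOn (fun σ => σ ^ (m+2) * ψ σ) (Ioi 0) :=
  (continuousOn_pow _).mul h.cont
theorem Adm.c1 {m : ℕ} {ψ : ℝ → ℝ} (h : Adm m ψ) : ContinuousOn (fun σ => σ * ψ σ) (Ioi 0) := continuousOn_id.mul h.cont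
theorem Adm.i0 {m : ℕ} {ψ : ℝ → ℝ} (h : Adm m ψ) (r : ℝ) : IntegrableOn (fun σ => σ ^ (m+2) * ψ σ) (Ioc 0 r) := intOn_extend h.c0 h.int0 r
theorem Adm.i1 {m : ℕ} {ψ : ℝ → ℝ} (h : Adm m ψ) {r : ℝ} (hr : 0 < r) : IntegrableOn (fun σ => σ * ψ σ) (Ioi r) := intOn_extend' h.c1 h.int1 hr

theorem Adm.JJ_deriv {m : ℕ} {ψ : ℝ → ℝ} (h : Adm m ψ) {r : ℝ} (hr : 0 < r) : HasDerivAt (JJ m ψ) (r ^ (m+2) * ψ r) r := by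
  refine intervalIntegral.integral_hasDerivAt_right ?_ ?_ (h.c0.continuousAt (Ioi_mem_nhds hr))
  · rw [intervalIntegrable_iff_integrableOn_Ioc_of_le hr.le]
    exact h.i0 r
  · exact h.c0.stronglyMeasurableAtFilter isOpen_Ioi r hr

theorem Adm.TT_split {m : ℕ} {ψ : ℝ → ℝ} (h : Adm m ψ) {a r : ℝ} (ha : 0 < a) (hr : a ≤ r) :
    TT ψ r = TT ψ a - ∫ σ in a..r, σ * ψ σ := by
  unfold TT
  rw [intervalIntegral.integral_of_le hr, ← Ioc_union_Ioi_eq_Ioi hr, 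
    setIntegral_union (by rw [Set.disjoint_left]; intro x hx hx'; exact absurd hx' (not_lt.2 hx.2)) measurableSet_Ioi
      ((h.i1 ha).mono_set Ioc_subset_Ioi_self) (h.i1 (ha.trans_le hr))]
  ring

theorem Adm.TT_deriv {m : ℕ} {ψ : ℝ → ℝ} (h : Adm m ψ) {r : ℝ} (hr : 0 < r) : HasDerivAt (TT ψ) (-(r * ψ r)) r := by
  have h1 : HasDerivAt (fun u => ∫ σ in (r/2)..u, σ * ψ σ) (r * ψ r) r := by
    refine intervalIntegral.integral_hasDerivAt_right ?_ ?_ (h.c1.continuousAt (Ioi_mem_nhds hr))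
    · rw [intervalIntegrable_iff_integrableOn_Ioc_of_le (by linarith)]
      exact (h.i1 (half_pos hr)).mono_set Ioc_subset_Ioi_self
    · exact h.c1.stronglyMeasurableAtFilter isOpen_Ioi r hr
  refine (h1.const_sub (TT ψ (r/2))).congr_of_eventuallyEq ?_
  filter_upwards [Ioi_mem_nhds (show r/2 < r by linarith)] with u hu
  exact h.TT_split (half_pos hr) (le_of_lt hu)

noncomputable def II1 (m : ℕ) (ψ : ℝ → ℝ) (r : ℝ) : ℝ := -((r^(m+2))⁻¹ * JJ m ψ r)

theorem Adm.II_deriv {m : ℕ} {ψ : ℝ → ℝ} (h : Adm m ψ) {r : ℝ} (hr : 0 < r) : HasDerivAt (II m ψ) (II1 m ψ r) r := by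
  have h1 : HasDerivAt (fun r : ℝ => (r^(m+1))⁻¹) (-(((m+1:ℕ):ℝ) * r^m) / (r^(m+1))^2) r :=
    (hasDerivAt_pow (m+1) r).inv (by positivity)
  have h2 := ((h1.mul (h.JJ_deriv hr)).add (h.TT_deriv hr)).const_mul (1 / ((m:ℝ)+1))
  refine h2.congr_deriv ?_
  unfold II1
  push_cast
  have : r^(m+2) = r^m * r^2 := by ring
  have e2 : r^(m+1) = r^m * r := by ring
  rw [this, e2]
  field_simp
  ring

theorem Adm.II1_deriv {m : ℕ} {ψ : ℝ → ℝ} (h : Adm m ψ) {r : ℝ} (hr : 0 < r) :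
    HasDerivAt (II1 m ψ) (((m:ℝ)+2) / r * ((r^(m+2))⁻¹ * JJ m ψ r) - ψ r) r := by
  have h1 : HasDerivAt (fun r : ℝ => (r^(m+2))⁻¹) (-(((m+2:ℕ):ℝ) * r^(m+1)) / (r^(m+2))^2) r :=
    (hasDerivAt_pow (m+2) r).inv (by positivity)
  have h2 := (h1.mul (h.JJ_deriv hr)).neg
  refine h2.congr_deriv ?_
  push_cast
  have : r^(m+2) = r^(m+1) * r := by ring
  rw [this]
  field_simp
  ring

theorem Adm.JJ_nonneg {m : ℕ} {ψ : ℝ → ℝ} (h : Adm m ψ) {r : ℝ} (hr : 0 ≤ r) : 0 ≤ JJ m ψ r := by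
  unfold JJ
  rw [intervalIntegral.integral_of_le hr]
  refine setIntegral_nonneg measurableSet_Ioc fun σ hσ => ?_
  have := h.nonneg σ hσ.1
  have := hσ.1
  positivity

theorem Adm.TT_nonneg {m : ℕ} {ψ : ℝ → ℝ} (h : Adm m ψ) {r : ℝ} (hr : 0 ≤ r) : 0 ≤ TT ψ r := by
  unfold TT
  refine setIntegral_nonneg measurableSet_Ioi fun σ hσ => ?_
  exact mul_nonneg (hr.trans (le_of_lt hσ)) (h.nonneg σ (hr.trans_lt hσ))

theorem Adm.II_nonneg {m : ℕ} {ψ : ℝ → ℝ} (h : Adm m ψ) {r : ℝ} (hr : 0 ≤ r) : 0 ≤ II m ψ r := by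
  have := h.JJ_nonneg hr
  have := h.TT_nonneg hr
  unfold II; positivity

theorem Adm.II1_nonpos {m : ℕ} {ψ : ℝ → ℝ} (h : Adm m ψ) {r : ℝ} (hr : 0 ≤ r) : II1 m ψ r ≤ 0 := by
  have := h.JJ_nonneg hr
  have : 0 ≤ (r^(m+2))⁻¹ * JJ m ψ r := by positivity
  unfold II1; linarith

theorem Adm.II_pos {m : ℕ} {ψ : ℝ → ℝ} (h : Adm m ψ) (hp : ∀ r, 0 < r → 0 < ψ r) {r : ℝ} (hr : 0 < r) : 0 < II m ψ r := by
  have h2 := h.TT_nonneg hr.le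
  have h1 : 0 < JJ m ψ r := by
    unfold JJ
    refine intervalIntegral.intervalIntegral_pos_of_pos_on ?_ ?_ hr
    · rw [intervalIntegrable_iff_integrableOn_Ioc_of_le hr.le]
      exact h.i0 r
    · intro x hx
      have := hp x hx.1
      have := hx.1
      positivity
  unfold II; positivity

theorem Adm.TT_tendsto {m : ℕ} {ψ : ℝ → ℝ} (h : Adm m ψ) : Tendsto (TT ψ) atTop (nhds 0) := by
  have h1 := intervalIntegral_tendsto_integral_Ioi (μ := volume) (1:ℝ) h.int1 tendsto_id
  have h2 := (tendsto_const_nhds (x := TT ψ 1)).sub h1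
  have h3 : TT ψ 1 - ∫ σ in Ioi 1, σ * ψ σ = 0 := sub_self _
  rw [h3] at h2
  refine h2.congr' ?_
  filter_upwards [eventually_ge_atTop (1:ℝ)] with r hr
  exact (h.TT_split one_pos hr).symm

theorem Adm.JJ_le {m : ℕ} {ψ : ℝ → ℝ} (h : Adm m ψ) {R r : ℝ} (hR : 0 < R) (hr : R ≤ r) : JJ m ψ r ≤ JJ m ψ R + r^(m+1) * TT ψ R := by
  have hr0 := hR.trans_le hr
  have i1 : IntervalIntegrable (fun σ => σ ^ (m+2) * ψ σ) volume 0 R := by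
    rw [intervalIntegrable_iff_integrableOn_Ioc_of_le hR.le]; exact h.i0 R
  have i2' : IntegrableOn (fun σ => σ ^ (m+2) * ψ σ) (Ioc R r) :=
    (h.i0 r).mono_set (Ioc_subset_Ioc_left hR.le)
  have i2 : IntervalIntegrable (fun σ => σ ^ (m+2) * ψ σ) volume R r := by
    rw [intervalIntegrable_iff_integrableOn_Ioc_of_le hr]; exact i2'
  have e : JJ m ψ r = JJ m ψ R + ∫ σ in R..r, σ ^ (m+2) * ψ σ :=
    (intervalIntegral.integral_add_adjacent_intervals i1 i2).symm
  rw [e]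
  gcongr
  rw [intervalIntegral.integral_of_le hr]
  calc ∫ σ in Ioc R r, σ ^ (m+2) * ψ σ ≤ ∫ σ in Ioc R r, r^(m+1) * (σ * ψ σ) := by
        refine setIntegral_mono_on i2' (((h.i1 hR).mono_set Ioc_subset_Ioi_self).const_mul _) measurableSet_Ioc ?_
        intro σ hσ
        have h0 := hR.trans hσ.1
        have := h.nonneg σ h0
        have h3 : σ^(m+1) ≤ r^(m+1) := pow_le_pow_left₀ h0.le hσ.2 _
        have : 0 ≤ σ * ψ σ := by positivity
        calc σ^(m+2) * ψ σ = σ^(m+1) * (σ * ψ σ) := by ring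
          _ ≤ _ := by gcongr
    _ ≤ ∫ σ in Ioi R, r^(m+1) * (σ * ψ σ) := by
        refine setIntegral_mono_set ((h.i1 hR).const_mul _) ?_ (LE.le.eventuallyLE Ioc_subset_Ioi_self)
        rw [EventuallyLE, ae_restrict_iff' measurableSet_Ioi]
        refine ae_of_all _ fun σ hσ => ?_
        have := h.nonneg σ (hR.trans hσ)
        have := hR.trans hσ
        simp only [Pi.zero_apply]
        positivity
    _ = _ := integral_const_mul _ _

theorem Adm.II_tendsto {m : ℕ} {ψ : ℝ → ℝ} (h : Adm m ψ) : Tendsto (II m ψ) atTop (nhds 0) := by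
  have h1 : Tendsto (fun r : ℝ => (r^(m+1))⁻¹ * JJ m ψ r) atTop (nhds 0) := by
    rw [Metric.tendsto_nhds]
    intro ε hε
    have h2 := h.TT_tendsto.eventually (gt_mem_nhds (half_pos hε))
    obtain ⟨R, hR, hR0⟩ := (h2.and (eventually_gt_atTop 0)).exists
    have h3 : Tendsto (fun r : ℝ => (r^(m+1))⁻¹ * JJ m ψ R) atTop (nhds (0 * JJ m ψ R)) :=
      (tendsto_inv_atTop_zero.comp (tendsto_pow_atTop (by omega))).mul_const _
    rw [zero_mul] at h3
    filter_upwards [h3.eventually (gt_mem_nhds (half_pos hε)), eventually_ge_atTop R] with r hr1 hr2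
    have hr0 := hR0.trans_le hr2
    have h4 := h.JJ_le hR0 hr2
    have h5 := h.JJ_nonneg hr0.le
    rw [Real.dist_eq, sub_zero, abs_of_nonneg (by positivity)]
    calc (r^(m+1))⁻¹ * JJ m ψ r ≤ (r^(m+1))⁻¹ * (JJ m ψ R + r^(m+1) * TT ψ R) := by gcongr
      _ = (r^(m+1))⁻¹ * JJ m ψ R + TT ψ R := by field_simp
      _ < ε := by linarith
  have := (h1.add h.TT_tendsto).const_mul (1 / ((m:ℝ)+1))
  rw [add_zero, mul_zero] at this
  exact this

theorem Adm.II_antitone {m : ℕ} {ψ : ℝ → ℝ} (h : Adm m ψ) : AntitoneOn (II m ψ) (Ioi 0) := by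
  refine antitoneOn_of_deriv_nonpos (convex_Ioi 0) (fun r hr => (h.II_deriv hr).continuousAt.continuousWithinAt)
    (fun r hr => ?_) (fun r hr => ?_)
  · rw [interior_Ioi] at hr
    exact (h.II_deriv hr).differentiableAt.differentiableWithinAt
  · rw [interior_Ioi] at hr
    rw [(h.II_deriv hr).deriv]
    exact h.II1_nonpos (le_of_lt hr)

theorem Adm.i2 {m : ℕ} {ψ : ℝ → ℝ} (h : Adm m ψ) (hb : IntegrableOn (fun σ => σ * ψ σ) (Ioo 0 1)) : IntegrableOn (fun σ => σ * ψ σ) (Ioi 0) := by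
  have h1 := intOn_extend h.c1 hb 1
  have := h1.union h.int1
  rwa [Ioc_union_Ioi_eq_Ioi zero_le_one] at this

theorem Adm.II_zero {m : ℕ} {ψ : ℝ → ℝ} (_h : Adm m ψ) : II m ψ 0 = (1 / ((m:ℝ)+1)) * TT ψ 0 := by
  simp [II]

theorem Adm.II_near {m : ℕ} {ψ : ℝ → ℝ} (h : Adm m ψ) (hb : IntegrableOn (fun σ => σ * ψ σ) (Ioo 0 1)) {r : ℝ} (hr : 0 < r) :
    II m ψ r ≤ II m ψ 0 ∧ II m ψ 0 - II m ψ r ≤ (1 / ((m:ℝ)+1)) * ∫ σ in (0:ℝ)..r, σ * ψ σ := by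
  have hi := h.i2 hb
  have e1 : TT ψ 0 = (∫ σ in (0:ℝ)..r, σ * ψ σ) + TT ψ r := by
    unfold TT
    rw [intervalIntegral.integral_of_le hr.le, ← Ioc_union_Ioi_eq_Ioi hr.le, 
      setIntegral_union (by rw [Set.disjoint_left]; intro x hx hx'; exact absurd hx' (not_lt.2 hx.2)) measurableSet_Ioi
        (hi.mono_set Ioc_subset_Ioi_self) (h.i1 hr)]
  have hm : 0 < 1 / ((m:ℝ)+1) := by positivity
  have e2 : (r^(m+1))⁻¹ * JJ m ψ r ≤ ∫ σ in (0:ℝ)..r, σ * ψ σ := by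
    have : JJ m ψ r ≤ r^(m+1) * ∫ σ in (0:ℝ)..r, σ * ψ σ := by
      unfold JJ
      rw [← intervalIntegral.integral_const_mul, intervalIntegral.integral_of_le hr.le, intervalIntegral.integral_of_le hr.le]
      refine setIntegral_mono_on (h.i0 r) ((hi.mono_set Ioc_subset_Ioi_self).const_mul _) measurableSet_Ioc ?_
      intro σ hσ
      have h0 := hσ.1
      have := h.nonneg σ h0
      have h3 : σ^(m+1) ≤ r^(m+1) := pow_le_pow_left₀ h0.le hσ.2 _
      have : 0 ≤ σ * ψ σ := by positivity
      calc σ^(m+2) * ψ σ = σ^(m+1) * (σ * ψ σ) := by ring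
        _ ≤ _ := by gcongr
    rw [inv_mul_le_iff₀ (by positivity)]
    exact this
  have e3 : 0 ≤ (r^(m+1))⁻¹ * JJ m ψ r := by
    have := h.JJ_nonneg hr.le
    positivity
  rw [h.II_zero]
  unfold II
  constructor
  · rw [e1]; gcongr
  · rw [← mul_sub, e1]
    gcongr
    linarith

theorem Adm.II_antitone' {m : ℕ} {ψ : ℝ → ℝ} (h : Adm m ψ) (hb : IntegrableOn (fun σ => σ * ψ σ) (Ioo 0 1)) : AntitoneOn (II m ψ) (Ici 0) := by
  intro a ha b hbb hab
  rcases eq_or_lt_of_le (show (0:ℝ) ≤ a from ha) with h0 | h0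
  · rcases eq_or_lt_of_le (show (0:ℝ) ≤ b from hbb) with h1 | h1
    · rw [← h0, ← h1]
    · rw [← h0]; exact (h.II_near hb h1).1
  · exact h.II_antitone h0 (h0.trans_le hab) hab

theorem Adm.II_contOn {m : ℕ} {ψ : ℝ → ℝ} (h : Adm m ψ) (hb : IntegrableOn (fun σ => σ * ψ σ) (Ioo 0 1)) : ContinuousOn (II m ψ) (Ici 0) := by
  intro a ha
  rcases eq_or_lt_of_le (show (0:ℝ) ≤ a from ha) with h0 | h0
  · rw [← h0]
    have hc : Tendsto (fun r => (1 / ((m:ℝ)+1)) * ∫ σ in (0:ℝ)..r, σ * ψ σ) (nhdsWithin 0 (Ici 0)) (nhds 0) := by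
      have hi : IntegrableOn (fun σ => σ * ψ σ) (uIcc (0:ℝ) 1) := by
        rw [uIcc_of_le zero_le_one, integrableOn_Icc_iff_integrableOn_Ioc]
        exact (h.i2 hb).mono_set Ioc_subset_Ioi_self
      have := intervalIntegral.continuousOn_primitive_interval hi
      have h2 := this 0 (by simp)
      rw [uIcc_of_le zero_le_one, ContinuousWithinAt, intervalIntegral.integral_same] at h2
      have h3 := h2.const_mul (1 / ((m:ℝ)+1))
      rw [mul_zero] at h3
      refine h3.mono_left ?_
      rw [nhdsWithin_le_iff]
      exact Icc_mem_nhdsGE one_pos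
    have h4 : Tendsto (fun r => II m ψ 0 - II m ψ r) (nhdsWithin 0 (Ici 0)) (nhds 0) := by
      refine tendsto_of_tendsto_of_tendsto_of_le_of_le' tendsto_const_nhds hc ?_ ?_
      · filter_upwards [self_mem_nhdsWithin] with r hr
        rcases eq_or_lt_of_le (show (0:ℝ) ≤ r from hr) with h1 | h1
        · rw [← h1]; simp
        · have := (h.II_near hb h1).1; linarith
      · filter_upwards [self_mem_nhdsWithin] with r hr
        rcases eq_or_lt_of_le (show (0:ℝ) ≤ r from hr) with h1 | h1
        · rw [← h1]; simp
        · exact (h.II_near hb h1).2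
    have h5 := (tendsto_const_nhds (x := II m ψ 0)).sub h4
    simpa [ContinuousWithinAt] using h5
  · exact (h.II_deriv h0).continuousAt.continuousWithinAt

theorem Adm.II_sub {m : ℕ} {ψ : ℝ → ℝ} (h : Adm m ψ) {ψ' : ℝ → ℝ} (h' : Adm m ψ') (hb : IntegrableOn (fun σ => σ * ψ σ) (Ioo 0 1))
    (hb' : IntegrableOn (fun σ => σ * ψ' σ) (Ioo 0 1)) {r : ℝ} (hr : 0 ≤ r) :
    II m (fun t => ψ t - ψ' t) r = II m ψ r - II m ψ' r := by
  unfold II JJ TT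
  simp only [mul_sub]
  rw [intervalIntegral.integral_sub, integral_sub ((h.i2 hb).mono_set (Ioi_subset_Ioi hr)) ((h'.i2 hb').mono_set (Ioi_subset_Ioi hr))]
  · ring
  · rw [intervalIntegrable_iff_integrableOn_Ioc_of_le hr]; exact h.i0 r
  · rw [intervalIntegrable_iff_integrableOn_Ioc_of_le hr]; exact h'.i0 r



structure Rad2 (g g1 g2 : ℝ → ℝ) : Prop where
  d1 : ∀ r, 0 < r → HasDerivAt g (g1 r) r
  d2 : ∀ r, 0 < r → HasDerivAt g1 (g2 r) r
  c2 : ContinuousOn g2 (Ioi 0)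

theorem Rad2.contDiffOn {g g1 g2 : ℝ → ℝ} (h : Rad2 g g1 g2) : ContDiffOn ℝ 2 g (Ioi 0) := by
  have e1 : ∀ r ∈ Ioi (0:ℝ), deriv g r = g1 r := fun r hr => (h.d1 r hr).deriv
  have e2 : ∀ r ∈ Ioi (0:ℝ), deriv g1 r = g2 r := fun r hr => (h.d2 r hr).deriv
  have h1 : ContDiffOn ℝ 1 g1 (Ioi 0) := by
    rw [show (1 : WithTop ℕ∞) = 0 + 1 from rfl, contDiffOn_succ_iff_deriv_of_isOpen isOpen_Ioi]
    refine ⟨fun r hr => (h.d2 r hr).differentiableAt.differentiableWithinAt, by simp, ?_⟩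
    rw [contDiffOn_zero]
    exact h.c2.congr e2
  rw [show (2 : WithTop ℕ∞) = 1 + 1 from by norm_num, contDiffOn_succ_iff_deriv_of_isOpen isOpen_Ioi]
  exact ⟨fun r hr => (h.d1 r hr).differentiableAt.differentiableWithinAt, by simp, h1.congr e1⟩

theorem Rad2.contDiffAt {N : ℕ} {g g1 g2 : ℝ → ℝ} (h : Rad2 g g1 g2) {x k : Eu N} (hx : x ≠ k) :
    ContDiffAt ℝ 2 (fun y => g ‖y - k‖) x := by
  have hpos := norm_pos_iff.2 (sub_ne_zero.2 hx)
  have h1 : ContDiffAt ℝ 2 g ‖x - k‖ := h.contDiffOn.contDiffAt (Ioi_mem_nhds hpos)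
  have h2 : ContDiffAt ℝ 2 (fun y => ‖y - k‖) x :=
    (contDiffAt_norm ℝ (sub_ne_zero.2 hx)).comp x (f := fun y => y - k) (contDiff_id.sub contDiff_const).contDiffAt
  exact h1.comp x h2

theorem Rad2.lap {m : ℕ} {g g1 g2 : ℝ → ℝ} (h : Rad2 g g1 g2) {x k : Eu (m+3)} (hx : x ≠ k) :
    laplacian (fun y => g ‖y - k‖) x = g2 ‖x - k‖ + ((m:ℝ)+2) / ‖x - k‖ * g1 ‖x - k‖ := by
  have hpos := norm_pos_iff.2 (sub_ne_zero.2 hx)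
  have e : (fun y : Eu (m+3) => g ‖y - k‖) = fun y => (fun s => g (Real.sqrt s)) (‖y - k‖^2) := by
    funext y; simp [Real.sqrt_sq (norm_nonneg _)]
  have hd1 : ∀ s : ℝ, 0 < s → HasDerivAt (fun s => g (Real.sqrt s)) (g1 (Real.sqrt s) * (1 / (2 * Real.sqrt s))) s := by
    intro s hs
    exact (h.d1 _ (Real.sqrt_pos.2 hs)).comp s (Real.hasDerivAt_sqrt hs.ne')
  set s := ‖x - k‖^2 with hs
  have hs0 : 0 < s := by positivity
  have hq : Real.sqrt s = ‖x - k‖ := Real.sqrt_sq (norm_nonneg _)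
  have hd2 : HasDerivAt (fun s => g1 (Real.sqrt s) * (1 / (2 * Real.sqrt s))) _ s :=
    ((h.d2 _ (Real.sqrt_pos.2 hs0)).comp s (Real.hasDerivAt_sqrt hs0.ne')).mul
      ((hasDerivAt_const s (1:ℝ)).div ((Real.hasDerivAt_sqrt hs0.ne').const_mul 2) (by positivity))
  rw [e, radial_laplacian hx hd1 hd2]
  rw [← hs, hq]
  simp only [Function.comp, hq]
  rw [hs]
  set t := ‖x - k‖
  push_cast
  field_simp
  ring

theorem Adm.rad2 {m : ℕ} {ψ : ℝ → ℝ} (h : Adm m ψ) :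
    Rad2 (II m ψ) (II1 m ψ) (fun r => ((m:ℝ)+2) / r * ((r^(m+2))⁻¹ * JJ m ψ r) - ψ r) where
  d1 := fun r hr => h.II_deriv hr
  d2 := fun r hr => h.II1_deriv hr
  c2 := by
    have hJ : ContinuousOn (JJ m ψ) (Ioi 0) := fun r hr => (h.JJ_deriv hr).continuousAt.continuousWithinAt
    have h0 : ∀ r ∈ Ioi (0:ℝ), r ≠ 0 := fun r hr => ne_of_gt hr
    refine ContinuousOn.sub (ContinuousOn.mul (continuousOn_const.div continuousOn_id h0) 
      (ContinuousOn.mul ((continuousOn_pow _).inv₀ fun r hr => pow_ne_zero _ (h0 r hr)) hJ)) h.cont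

theorem Adm.lap_id {m : ℕ} {ψ : ℝ → ℝ} (r : ℝ) :
    (((m:ℝ)+2) / r * ((r^(m+2))⁻¹ * JJ m ψ r) - ψ r) + ((m:ℝ)+2) / r * II1 m ψ r = - ψ r := by
  unfold II1; ring

theorem Rad2.add {g g1 g2 h h1 h2 : ℝ → ℝ} (hg : Rad2 g g1 g2) (hh : Rad2 h h1 h2) :
    Rad2 (fun r => g r + h r) (fun r => g1 r + h1 r) (fun r => g2 r + h2 r) where
  d1 := fun r hr => (hg.d1 r hr).add (hh.d1 r hr)
  d2 := fun r hr => (hg.d2 r hr).add (hh.d2 r hr)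
  c2 := hg.c2.add hh.c2

theorem Rad2.smul {g g1 g2 : ℝ → ℝ} (hg : Rad2 g g1 g2) (c : ℝ) :
    Rad2 (fun r => c * g r) (fun r => c * g1 r) (fun r => c * g2 r) where
  d1 := fun r hr => (hg.d1 r hr).const_mul c
  d2 := fun r hr => (hg.d2 r hr).const_mul c
  c2 := continuousOn_const.mul hg.c2

theorem Rad2.rpow {g g1 g2 : ℝ → ℝ} (hg : Rad2 g g1 g2) (hp : ∀ r, 0 < r → 0 < g r) (a : ℝ) :
    Rad2 (fun r => g r ^ a) (fun r => a * g r ^ (a-1) * g1 r) 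
      (fun r => a * (a-1) * g r ^ (a-2) * (g1 r)^2 + a * g r ^ (a-1) * g2 r) where
  d1 := fun r hr => by
    have := (hg.d1 r hr).rpow_const (p := a) (Or.inl (hp r hr).ne')
    exact this.congr_deriv (by ring)
  d2 := fun r hr => by
    have h1 := (hg.d1 r hr).rpow_const (p := a-1) (Or.inl (hp r hr).ne')
    have := (h1.const_mul a).mul (hg.d2 r hr)
    refine this.congr_deriv ?_
    have : a - 1 - 1 = a - 2 := by ring
    rw [this]; ring
  c2 := by
    have c0 : ContinuousOn g (Ioi 0) := fun r hr => (hg.d1 r hr).continuousAt.continuousWithinAt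
    have c1 : ContinuousOn g1 (Ioi 0) := fun r hr => (hg.d2 r hr).continuousAt.continuousWithinAt
    have cp : ∀ b : ℝ, ContinuousOn (fun r => g r ^ b) (Ioi 0) := fun b =>
      c0.rpow_const fun r hr => Or.inl (hp r hr).ne'
    exact ((continuousOn_const.mul (cp _)).mul (c1.pow 2)).add ((continuousOn_const.mul (cp _)).mul hg.c2)

theorem newton_rad2 (m : ℕ) : Rad2 (fun r => (r^(m+1))⁻¹) (fun r => -((m:ℝ)+1) * (r^(m+2))⁻¹)
    (fun r => ((m:ℝ)+1) * (m+2) * (r^(m+3))⁻¹) where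
  d1 := fun r hr => by
    have h1 := (hasDerivAt_pow (m+1) r).inv (by positivity)
    refine h1.congr_deriv ?_
    push_cast
    field_simp
    ring
  d2 := fun r hr => by
    have h1 := ((hasDerivAt_pow (m+2) r).inv (by positivity)).const_mul (-((m:ℝ)+1))
    refine h1.congr_deriv ?_
    push_cast
    field_simp
    ring
  c2 := continuousOn_const.mul ((continuousOn_pow _).inv₀ fun r hr => pow_ne_zero _ (ne_of_gt hr))

/-- supersolution from radial one -/
theorem sup_of_radial {m : ℕ} {K : Set (Eu (m+3))} (hK : K.Finite) (hne : K.Nonempty) {p : ℝ} (hp : 0 < p)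
    {φ : ℝ → ℝ} (hφ : ∀ r, 0 < r → 0 < φ r) {g g1 g2 : ℝ → ℝ} (hg : Rad2 g g1 g2) (hpos : ∀ r, 0 < r → 0 < g r)
    (hsup : ∀ r, 0 < r → φ r * g r ^ (-p) ≤ -(g2 r + ((m:ℝ)+2) / r * g1 r)) :
    ContDiffOn ℝ 2 (fun x => ∑ k ∈ hK.toFinset, g ‖x - k‖) Kᶜ ∧
    ∀ x ∈ Kᶜ, 0 < ∑ k ∈ hK.toFinset, g ‖x - k‖ ∧ 
      φ (infDist x K) * (∑ k ∈ hK.toFinset, g ‖x - k‖) ^ (-p) ≤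
        -laplacian (fun x => ∑ k ∈ hK.toFinset, g ‖x - k‖) x := by
  have hxk : ∀ x ∈ Kᶜ, ∀ k ∈ hK.toFinset, x ≠ k := by
    intro x hx k hk h
    rw [h] at hx
    exact hx (by simpa using hk)
  have hxp : ∀ x ∈ Kᶜ, ∀ k ∈ hK.toFinset, 0 < ‖x - k‖ := fun x hx k hk =>
    norm_pos_iff.2 (sub_ne_zero.2 (hxk x hx k hk))
  constructor
  · intro x hx
    exact (ContDiffAt.sum fun k hk => hg.contDiffAt (hxk x hx k hk)).contDiffWithinAt
  · intro x hx
    obtain ⟨k₀, hk₀, hd⟩ := hK.isCompact.exists_infDist_eq_dist hne x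
    have hk₀' : k₀ ∈ hK.toFinset := by simpa using hk₀
    rw [dist_eq_norm] at hd
    have hge : g ‖x - k₀‖ ≤ ∑ k ∈ hK.toFinset, g ‖x - k‖ :=
      Finset.single_le_sum (f := fun k => g ‖x - k‖) (fun k hk => (hpos _ (hxp x hx k hk)).le) hk₀'
    have h0 := hpos _ (hxp x hx k₀ hk₀')
    refine ⟨h0.trans_le hge, ?_⟩
    rw [laplacian_sum _ fun k hk => hg.contDiffAt (hxk x hx k hk), ← Finset.sum_neg_distrib, hd]
    have hl : ∀ k ∈ hK.toFinset, φ ‖x - k‖ * g ‖x - k‖ ^ (-p) ≤ -laplacian (fun y => g ‖y - k‖) x := by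
      intro k hk
      rw [hg.lap (hxk x hx k hk)]
      exact hsup _ (hxp x hx k hk)
    calc φ ‖x - k₀‖ * (∑ k ∈ hK.toFinset, g ‖x - k‖) ^ (-p) ≤ φ ‖x - k₀‖ * g ‖x - k₀‖ ^ (-p) := by
          refine mul_le_mul_of_nonneg_left ?_ (hφ _ (hxp x hx k₀ hk₀')).le
          exact Real.rpow_le_rpow_of_nonpos h0 hge (by linarith)
      _ ≤ -laplacian (fun y => g ‖y - k₀‖) x := hl k₀ hk₀'
      _ ≤ _ := by
          refine Finset.single_le_sum (f := fun k => -laplacian (fun y => g ‖y - k‖) x) (fun k hk => ?_) hk₀'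
          refine le_trans ?_ (hl k hk)
          exact mul_nonneg (hφ _ (hxp x hx k hk)).le (Real.rpow_nonneg (hpos _ (hxp x hx k hk)).le _)

theorem radial_tendsto {N : ℕ} (s : Finset (Eu N)) {g : ℝ → ℝ} (hg : Tendsto g atTop (nhds 0)) :
    Tendsto (fun x => ∑ k ∈ s, g ‖x - k‖) (cocompact (Eu N)) (nhds 0) := by
  have : ∀ k ∈ s, Tendsto (fun x => g ‖x - k‖) (cocompact (Eu N)) (nhds 0) := by
    intro k _
    refine hg.comp ?_
    refine tendsto_atTop_mono (fun x => norm_sub_norm_le x k) ?_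
    exact tendsto_atTop_add_const_right _ _ tendsto_norm_cocompact_atTop
  have h := tendsto_finsetSum s this
  simpa using h

/-- radial power of potential -/
theorem pow_super {m : ℕ} {ψ : ℝ → ℝ} (h : Adm m ψ) (hpos : ∀ r, 0 < r → 0 < ψ r) {p : ℝ} (hp : 0 < p) :
    ∃ g1 g2 : ℝ → ℝ, Rad2 (fun r => ((1+p) * II m ψ r) ^ (1/(1+p))) g1 g2 ∧
      ∀ r, 0 < r → ψ r * (((1+p) * II m ψ r) ^ (1/(1+p))) ^ (-p) ≤ -(g2 r + ((m:ℝ)+2) / r * g1 r) := by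
  have hU := h.rad2.smul (1+p)
  have hUp : ∀ r, 0 < r → 0 < (1+p) * II m ψ r := fun r hr => by
    have := h.II_pos hpos hr; positivity
  refine ⟨_, _, hU.rpow hUp (1/(1+p)), fun r hr => ?_⟩
  set a := 1/(1+p) with ha
  have hU0 := hUp r hr
  set U := (1+p) * II m ψ r
  have hid := Adm.lap_id (m := m) (ψ := ψ) r
  set U1 := II1 m ψ r
  set U2 := ((m:ℝ)+2) / r * ((r^(m+2))⁻¹ * JJ m ψ r) - ψ r
  have ha1 : a * (1+p) = 1 := by rw [ha]; field_simp
  have ha0 : 0 < a := by positivity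
  have ha2 : a < 1 := by rw [ha, div_lt_one (by positivity)]; linarith
  have e1 : (U ^ a) ^ (-p) = U ^ (a - 1) := by
    rw [← Real.rpow_mul hU0.le]; congr 1; linarith
  rw [e1]
  have e2 : -(a * (a - 1) * U ^ (a - 2) * ((1 + p) * U1) ^ 2 + a * U ^ (a - 1) * ((1 + p) * U2) + (m + 2) / r * (a * U ^ (a - 1) * ((1 + p) * U1)))
     = (1 - a) * a * U ^ (a-2) * ((1 + p) * U1) ^ 2 - (a * (1+p)) * U ^ (a-1) * (U2 + (m + 2) / r * U1) := by ring
  rw [e2, hid, ha1]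
  have : 0 ≤ (1 - a) * a * U ^ (a-2) * ((1 + p) * U1) ^ 2 := by
    have : 0 < 1 - a := by linarith
    positivity
  linarith

theorem pow_tendsto {m : ℕ} {ψ : ℝ → ℝ} (h : Adm m ψ) {p : ℝ} (hp : 0 < p) :
    Tendsto (fun r => ((1+p) * II m ψ r) ^ (1/(1+p))) atTop (nhds 0) := by
  have h1 := h.II_tendsto.const_mul (1+p)
  have h2 := h1.rpow_const (p := 1/(1+p)) (Or.inr (by positivity))
  rwa [mul_zero, Real.zero_rpow (by positivity)] at h2

set_option maxHeartbeats 2000000 in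
theorem exists_super {m : ℕ} {K : Set (Eu (m+3))} (hK : K.Finite) (hne : K.Nonempty) {p : ℝ} (hp : 0 < p)
    {φ : ℝ → ℝ} (hφ : ∀ r, 0 < r → 0 < φ r) (hφc : ContinuousOn φ (Ioi 0))
    (hint1 : IntegrableOn (fun r : ℝ => r * φ r) (Ioi (1:ℝ)) volume)
    (hint2 : IntegrableOn (fun r : ℝ => r ^ ((1 + p) * (((m+3:ℕ):ℝ) - 2) + 1) * φ r)
      (Ioo (0:ℝ) 1) volume) :
    ∃ V : Eu (m+3) → ℝ, ContDiffOn ℝ 2 V Kᶜ ∧ 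
      (∀ x ∈ Kᶜ, 0 < V x ∧ φ (infDist x K) * V x ^ (-p) ≤ -laplacian V x) ∧
      Tendsto V (cocompact (Eu (m+3))) (nhds 0) := by
  obtain ⟨ψ, hψ⟩ : ∃ ψ : ℝ → ℝ, ψ = fun r => φ r * min 1 (r ^ (p * (m+1))) := ⟨_, rfl⟩
  have hψp : ∀ r, 0 < r → 0 < ψ r := fun r hr => by
    have := hφ r hr
    have : 0 < r ^ (p * (m+1)) := Real.rpow_pos_of_pos hr _
    simp only [hψ]
    positivity
  have hA : Adm m ψ := by
    refine ⟨by rw [hψ]; exact hφc.mul (continuousOn_const.inf (continuousOn_id.rpow_const fun r hr => Or.inl (ne_of_gt hr))),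
      fun r hr => (hψp r hr).le, ?_, ?_⟩
    · refine hint2.congr_fun (fun r hr => ?_) measurableSet_Ioo
      have hr0 : 0 < r := hr.1
      simp only [hψ]
      rw [min_eq_right (Real.rpow_le_one hr0.le hr.2.le (by positivity))]
      have : (1 + p) * (((m+3:ℕ):ℝ) - 2) + 1 = ((m+2:ℕ):ℝ) + p * (m+1) := by push_cast; ring
      rw [this, Real.rpow_add hr0, Real.rpow_natCast]
      ring
    · refine hint1.congr_fun (fun r hr => ?_) measurableSet_Ioi
      simp only [hψ]
      rw [min_eq_left (Real.one_le_rpow (le_of_lt hr) (by positivity)), mul_one]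
  obtain ⟨g1, g2, hR, hS⟩ := pow_super hA hψp hp
  have hIp : ∀ r, 0 < r → 0 < II m ψ r := fun r hr => hA.II_pos hψp hr
  have hR3 := ((newton_rad2 m).add hA.rad2).add hR
  have hpos3 : ∀ r : ℝ, 0 < r → 0 < (r^(m+1))⁻¹ + II m ψ r + ((1+p) * II m ψ r) ^ (1/(1+p)) := fun r hr => by
    have := hIp r hr
    positivity
  have hsup3 : ∀ r : ℝ, 0 < r → φ r * ((r^(m+1))⁻¹ + II m ψ r + ((1+p) * II m ψ r) ^ (1/(1+p))) ^ (-p) ≤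
      -((((m:ℝ)+1) * (m+2) * (r^(m+3))⁻¹ + (((m:ℝ)+2) / r * ((r^(m+2))⁻¹ * JJ m ψ r) - ψ r) + g2 r) +
        ((m:ℝ)+2) / r * (-((m:ℝ)+1) * (r^(m+2))⁻¹ + II1 m ψ r + g1 r)) := by
    intro r hr
    have hI := hIp r hr
    have hs := hS r hr
    have hid := Adm.lap_id (m := m) (ψ := ψ) r
    have hnew : ((m:ℝ)+1) * (m+2) * (r^(m+3))⁻¹ + ((m:ℝ)+2) / r * (-((m:ℝ)+1) * (r^(m+2))⁻¹) = 0 := by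
      field_simp
      ring
    set G := ((1+p) * II m ψ r) ^ (1/(1+p)) with hG
    have hG0 : 0 < G := by positivity
    have hfp := hφ r hr
    have key : φ r * ((r^(m+1))⁻¹ + II m ψ r + G) ^ (-p) ≤ ψ r + ψ r * G ^ (-p) := by
      rcases le_or_gt r 1 with h | h
      · have e : ψ r = φ r * r ^ (p * (m+1)) := by
          simp only [hψ]
          rw [min_eq_right (Real.rpow_le_one hr.le h (by positivity))]
        have e2 : ((r^(m+1))⁻¹) ^ (-p) = r ^ (p * (m+1)) := by
          rw [Real.rpow_neg (by positivity), ← Real.inv_rpow (by positivity), inv_inv, ← Real.rpow_natCast,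
            ← Real.rpow_mul hr.le]
          congr 1; push_cast; ring
        have : ((r^(m+1))⁻¹ + II m ψ r + G) ^ (-p) ≤ ((r^(m+1))⁻¹) ^ (-p) :=
          Real.rpow_le_rpow_of_nonpos (by positivity) (by linarith) (by linarith)
        have h3 : φ r * ((r^(m+1))⁻¹ + II m ψ r + G) ^ (-p) ≤ ψ r := by
          rw [e, ← e2]
          exact mul_le_mul_of_nonneg_left this hfp.le
        have : 0 ≤ ψ r * G ^ (-p) := by have := hψp r hr; positivity
        linarith
      · have e : ψ r = φ r := by
          simp only [hψ]
          rw [min_eq_left (Real.one_le_rpow h.le (by positivity)), mul_one]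
        have : ((r^(m+1))⁻¹ + II m ψ r + G) ^ (-p) ≤ G ^ (-p) := by
          refine Real.rpow_le_rpow_of_nonpos hG0 ?_ (by linarith)
          have : 0 < (r^(m+1))⁻¹ := by positivity
          linarith
        rw [e]
        have := mul_le_mul_of_nonneg_left this hfp.le
        linarith
    refine key.trans ?_
    linarith
  obtain ⟨h1, h2⟩ := sup_of_radial hK hne hp hφ hR3 hpos3 hsup3
  refine ⟨_, h1, h2, radial_tendsto hK.toFinset (g := fun r => (r^(m+1))⁻¹ + II m ψ r + ((1+p) * II m ψ r) ^ (1/(1+p))) ?_⟩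
  have t1 : Tendsto (fun r : ℝ => (r^(m+1))⁻¹) atTop (nhds 0) :=
    tendsto_inv_atTop_zero.comp (tendsto_pow_atTop (by omega))
  have := (t1.add hA.II_tendsto).add (pow_tendsto hA hp)
  simpa using this

theorem adm_phi {m : ℕ} {φ : ℝ → ℝ} (hφ : ∀ r, 0 < r → 0 < φ r) (hφc : ContinuousOn φ (Ioi 0))
    (hint1 : IntegrableOn (fun r : ℝ => r * φ r) (Ioi (1:ℝ)) volume)
    (hb : IntegrableOn (fun r : ℝ => r * φ r) (Ioo (0:ℝ) 1) volume) : Adm m φ := by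
  refine ⟨hφc, fun r hr => (hφ r hr).le, ?_, hint1⟩
  refine hb.mono' ?_ ?_
  · exact (((continuousOn_pow _).mul hφc).mono fun r hr => hr.1).aestronglyMeasurable measurableSet_Ioo
  · rw [ae_restrict_iff' measurableSet_Ioo]
    refine ae_of_all _ fun r hr => ?_
    have := hφ r hr.1
    have h0 := hr.1
    rw [Real.norm_eq_abs, abs_of_nonneg (by positivity)]
    have : r^(m+1) ≤ 1 := pow_le_one₀ h0.le hr.2.le
    calc r^(m+2) * φ r = r^(m+1) * (r * φ r) := by ring
      _ ≤ 1 * (r * φ r) := by gcongr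
      _ = _ := one_mul _

theorem exists_super_bdd {m : ℕ} {K : Set (Eu (m+3))} (hK : K.Finite) (hne : K.Nonempty) {p : ℝ} (hp : 0 < p)
    {φ : ℝ → ℝ} (hφ : ∀ r, 0 < r → 0 < φ r) (hφc : ContinuousOn φ (Ioi 0))
    (hint1 : IntegrableOn (fun r : ℝ => r * φ r) (Ioi (1:ℝ)) volume)
    (hb : IntegrableOn (fun r : ℝ => r * φ r) (Ioo (0:ℝ) 1) volume) :
    ∃ V : Eu (m+3) → ℝ, ContDiffOn ℝ 2 V Kᶜ ∧ 
      (∀ x ∈ Kᶜ, 0 < V x ∧ φ (infDist x K) * V x ^ (-p) ≤ -laplacian V x) ∧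
      ∃ B, ∀ x, V x ≤ B := by
  have hA : Adm m φ := adm_phi hφ hφc hint1 hb
  obtain ⟨g1, g2, hR, hS⟩ := pow_super hA hφ hp
  have hIp : ∀ r, 0 < r → 0 < II m φ r := fun r hr => hA.II_pos hφ hr
  obtain ⟨h1, h2⟩ := sup_of_radial hK hne hp hφ hR (fun r hr => by
    have := hIp r hr
    positivity) hS
  refine ⟨_, h1, h2, ∑ k ∈ hK.toFinset, ((1+p) * II m φ 0) ^ (1/(1+p)), fun x => ?_⟩
  refine Finset.sum_le_sum fun k _ => ?_
  have hn := norm_nonneg (x - k)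
  have h3 := hA.II_nonneg hn
  refine Real.rpow_le_rpow (by positivity) ?_ (by positivity)
  have := hA.II_antitone' hb (show (0:ℝ) ∈ Ici 0 by simp) hn hn
  gcongr

theorem II_global {m : ℕ} {ψ : ℝ → ℝ} (h : Adm m ψ) (hc : Continuous ψ) {δ : ℝ} (hδ : 0 < δ)
    (h0 : ∀ t, t ≤ δ → ψ t = 0) (k : Eu (m+3)) : 
    ContDiff ℝ 2 (fun x => II m ψ ‖x - k‖) ∧ ∀ x, -laplacian (fun x => II m ψ ‖x - k‖) x = ψ ‖x - k‖ := by
  have hb : IntegrableOn (fun σ => σ * ψ σ) (Ioo 0 1) := 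
    ((continuous_id.mul hc).integrableOn_Icc (a := 0) (b := 1)).mono_set Ioo_subset_Icc_self
  have hconst : ∀ r, 0 ≤ r → r ≤ δ → II m ψ r = II m ψ 0 := by
    intro r hr0 hr
    rcases eq_or_lt_of_le hr0 with h1 | h1
    · rw [h1]
    · obtain ⟨h2, h3⟩ := h.II_near hb h1
      have : ∫ σ in (0:ℝ)..r, σ * ψ σ = 0 := by
        rw [intervalIntegral.integral_congr (g := fun _ => 0)]
        · simp
        · intro σ hσ
          rw [uIcc_of_le hr0] at hσ
          simp [h0 σ (hσ.2.trans hr)]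
      rw [this, mul_zero] at h3
      linarith
  have hev : (fun x => II m ψ ‖x - k‖) =ᶠ[nhds k] fun _ => II m ψ 0 := by
    filter_upwards [ball_mem_nhds k hδ] with x hx
    rw [mem_ball, dist_eq_norm] at hx
    exact hconst _ (norm_nonneg _) hx.le
  constructor
  · rw [contDiff_iff_contDiffAt]
    intro x
    by_cases hx : x = k
    · rw [hx]
      exact contDiffAt_const.congr_of_eventuallyEq hev
    · exact h.rad2.contDiffAt hx
  · intro x
    by_cases hx : x = k
    · rw [hx, laplacian_congr hev, laplacian_eq]
      simp [h0 0 hδ.le]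
    · rw [h.rad2.lap hx, Adm.lap_id, neg_neg]


/-- kernels: smooth, vanishing off the unit ball -/
structure Ker {N : ℕ} {F : Type*} [NormedAddCommGroup F] [NormedSpace ℝ F] (κ : Eu N → F) : Prop where
  cont : Continuous κ
  zero : ∀ z, 1 ≤ ‖z‖ → κ z = 0

noncomputable def VA {N : ℕ} {F : Type*} [NormedAddCommGroup F] [NormedSpace ℝ F] (κ : Eu N → F)
    (f : Eu N → ℝ) (s : ℝ) (x : Eu N) : F := ∫ z, f (x + s • z) • κ z

theorem Ker.compact {N : ℕ} {F : Type*} [NormedAddCommGroup F] [NormedSpace ℝ F] {κ : Eu N → F}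
    (h : Ker κ) : HasCompactSupport κ := by
  refine HasCompactSupport.intro (isCompact_closedBall (0 : Eu N) 1) fun z hz => h.zero z ?_
  simp at hz
  exact hz.le

theorem Ker.dd {N : ℕ} {F : Type*} [NormedAddCommGroup F] [NormedSpace ℝ F] {κ : Eu N → F}
    (h : Ker κ) (hd : ContDiff ℝ 1 κ) : Ker (fderiv ℝ κ) := by
  have hc := hd.continuous_fderiv one_ne_zero
  refine ⟨hc, ?_⟩
  have h1 : ∀ z : Eu N, z ∈ (closedBall (0 : Eu N) 1)ᶜ → fderiv ℝ κ z = 0 := by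
    intro z hz
    have : κ =ᶠ[nhds z] fun _ => 0 := by
      filter_upwards [isClosed_closedBall.isOpen_compl.mem_nhds hz] with y hy
      simp at hy
      exact h.zero y hy.le
    rw [this.fderiv_eq]; simp
  intro z hz
  have h2 : IsClosed {z | fderiv ℝ κ z = 0} := isClosed_eq hc continuous_const
  have h3 : closure ((closedBall (0 : Eu N) 1)ᶜ) ⊆ {z | fderiv ℝ κ z = 0} := h2.closure_subset_iff.2 h1
  apply h3
  rw [closure_compl, interior_closedBall _ one_ne_zero]
  simpa using hz

theorem Ker.integrable {N : ℕ} {F : Type*} [NormedAddCommGroup F] [NormedSpace ℝ F] {κ : Eu N → F}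
    (h : Ker κ) : Integrable κ := integrable_of_zero h.cont h.zero

theorem Ker.fint {N : ℕ} {F : Type*} [NormedAddCommGroup F] [NormedSpace ℝ F] {κ : Eu N → F}
    (h : Ker κ) {f : Eu N → ℝ} (hf : Continuous f) (s : ℝ) (x : Eu N) : 
    Integrable (fun z => f (x + s • z) • κ z) :=
  integrable_of_zero ((hf.comp (by fun_prop)).smul h.cont) fun z hz => by simp [h.zero z hz]

theorem Ker.cont2 {N : ℕ} {F : Type*} [NormedAddCommGroup F] [NormedSpace ℝ F] {κ : Eu N → F}
    (h : Ker κ) {f : Eu N → ℝ} (hf : Continuous f) : Continuous (fun q : ℝ × Eu N => VA κ f q.1 q.2) := by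
  refine av_continuous (k := fun (q : ℝ × Eu N) z => f (q.2 + q.1 • z) • κ z) ?_ ?_
  · exact (hf.comp (by fun_prop)).smul (h.cont.comp continuous_snd)
  · intro q z hz
    simp [h.zero z hz]

theorem Ker.bound {N : ℕ} {F : Type*} [NormedAddCommGroup F] [NormedSpace ℝ F] {κ : Eu N → F}
    (h : Ker κ) {f : Eu N → ℝ} {s : ℝ} {x : Eu N} {B : ℝ}
    (hB : ∀ z, ‖z‖ < 1 → |f (x + s • z)| ≤ B) : ‖VA κ f s x‖ ≤ B * ∫ z, ‖κ z‖ := by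
  rw [← integral_const_mul]
  refine norm_integral_le_of_norm_le (h.integrable.norm.const_mul B) (ae_of_all _ fun z => ?_)
  rw [norm_smul, Real.norm_eq_abs]
  rcases lt_or_ge ‖z‖ 1 with hz | hz
  · exact mul_le_mul_of_nonneg_right (hB z hz) (norm_nonneg _)
  · simp [h.zero z hz]

theorem Ker.hasFDerivAt {N : ℕ} {F : Type*} [NormedAddCommGroup F] [NormedSpace ℝ F] [CompleteSpace F] {κ : Eu N → F}
    (h : Ker κ) (hd : ContDiff ℝ 1 κ) {f : Eu N → ℝ} (hf : Continuous f) {s : ℝ} (hs : 0 < s) (x : Eu N) :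
    HasFDerivAt (VA κ f s) (-(s⁻¹ • VA (fderiv ℝ κ) f s x)) x := by
  set fs : Eu N → ℝ := fun y => f (s • y) with hfs
  have hfsc : Continuous fs := hf.comp (by fun_prop)
  set g : Eu N → F := fun u => κ (-u) with hg
  have hgd : ContDiff ℝ 1 g := hd.comp contDiff_neg
  have hgc : HasCompactSupport g := by
    refine HasCompactSupport.intro (isCompact_closedBall (0 : Eu N) 1) fun z hz => h.zero _ ?_
    simp at hz
    simpa using hz.le
  have key := hgc.hasFDerivAt_convolution_right (ContinuousLinearMap.lsmul ℝ ℝ) (μ := volume)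
    hfsc.locallyIntegrable hgd (s⁻¹ • x)
  have hlin : HasFDerivAt (fun y : Eu N => s⁻¹ • y) (s⁻¹ • ContinuousLinearMap.id ℝ (Eu N)) x :=
    (hasFDerivAt_id x).const_smul s⁻¹
  have hcomp := key.comp x hlin
  have e1 : (fun y => convolution fs g (ContinuousLinearMap.lsmul ℝ ℝ) volume (s⁻¹ • y)) = VA κ f s := by
    funext y
    rw [convolution_def, VA, ← integral_add_left_eq_self _ (s⁻¹ • y)]
    refine integral_congr_ae (ae_of_all _ fun z => ?_)
    simp only [hfs, hg, ContinuousLinearMap.lsmul_apply, smul_add, smul_smul, mul_inv_cancel₀ hs.ne', one_smul]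
    congr 2
    abel
  have e2 : convolution fs (fderiv ℝ g) ((ContinuousLinearMap.lsmul ℝ ℝ : ℝ →L[ℝ] F →L[ℝ] F).precompR (Eu N)) volume (s⁻¹ • x)
      = - VA (fderiv ℝ κ) f s x := by
    rw [convolution_def, VA, ← integral_add_left_eq_self _ (s⁻¹ • x), ← integral_neg]
    refine integral_congr_ae (ae_of_all _ fun z => ?_)
    have : fderiv ℝ g (s⁻¹ • x - (s⁻¹ • x + z)) = -fderiv ℝ κ z := by
      have h1 : s⁻¹ • x - (s⁻¹ • x + z) = -z := by abel
      rw [h1]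
      have h2 := ((hd.differentiable one_ne_zero) (- -z)).hasFDerivAt.comp (-z) ((hasFDerivAt_id (-z)).neg)
      have h3 : HasFDerivAt g _ (-z) := h2
      rw [h3.fderiv, neg_neg]
      ext v
      simp
    simp only [hfs, this, smul_add, smul_smul, mul_inv_cancel₀ hs.ne', one_smul]
    ext v
    simp [ContinuousLinearMap.precompR_apply]
  rw [e2] at hcomp
  have e3 : convolution fs g (ContinuousLinearMap.lsmul ℝ ℝ) volume ∘ HSMul.hSMul s⁻¹ = VA κ f s := e1
  rw [e3] at hcomp
  refine hcomp.congr_fderiv ?_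
  ext v
  simp

theorem Ker.int_zero {N : ℕ} {F : Type*} [NormedAddCommGroup F] [NormedSpace ℝ F] [CompleteSpace F] {κ : Eu N → F}
    (h : Ker κ) (hd : ContDiff ℝ 1 κ) : ∫ z, fderiv ℝ κ z = 0 := by
  have h1 := h.hasFDerivAt hd (f := fun _ => 1) continuous_const one_pos 0
  have e : VA κ (fun _ => 1) 1 = fun _ => ∫ z, κ z := by
    funext y; simp [VA]
  rw [e] at h1
  have := h1.unique (hasFDerivAt_const _ _)
  simpa [VA] using this

theorem theta_ker {N : ℕ} : Ker (theta (N := N)) := ⟨theta_continuous, fun _ hz => theta_zero hz⟩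
theorem rho_ker {N : ℕ} : Ker (rho (N := N)) := ⟨rho_continuous, fun _ hz => rho_zero hz⟩

theorem smooth_fderiv {N : ℕ} {F : Type*} [NormedAddCommGroup F] [NormedSpace ℝ F] {κ : Eu N → F} {n : ℕ}
    (h : ContDiff ℝ (n+1 : ℕ) κ) : ContDiff ℝ n (fderiv ℝ κ) :=
  h.fderiv_right (by norm_cast)

theorem theta_d1 {N : ℕ} : ContDiff ℝ 1 (theta (N := N)) := theta_contDiff (n := 1)
theorem rho_d1 {N : ℕ} : ContDiff ℝ 1 (rho (N := N)) := rho_contDiff (n := 1)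
theorem theta_d2 {N : ℕ} : ContDiff ℝ 1 (fderiv ℝ (theta (N := N))) := 
  smooth_fderiv (n := 1) (theta_contDiff (n := 2))
theorem rho_d2 {N : ℕ} : ContDiff ℝ 1 (fderiv ℝ (rho (N := N))) := 
  smooth_fderiv (n := 1) (rho_contDiff (n := 2))

theorem MM_VA {N : ℕ} {r : ℝ} (hr : 0 < r) (f : Eu N → ℝ) : MM r f = VA rho f r := by
  funext x
  rw [MM_eq hr, VA]
  simp [mul_comm]

theorem QQ_VA {N : ℕ} {r : ℝ} (hr : 0 < r) {f : Eu N → ℝ} (hf : Continuous f) :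
    QQ r f = fun x => ∫ s in (0)..r, s * VA theta f s x := by
  funext x
  rw [QQ_eq hr hf]
  simp [VA, mul_comm]

theorem contDiff_two_of {N : ℕ} {Ω : Set (Eu N)} (hΩ : IsOpen Ω) {g : Eu N → ℝ} {g1 : Eu N → (Eu N →L[ℝ] ℝ)}
    {g2 : Eu N → (Eu N →L[ℝ] Eu N →L[ℝ] ℝ)} (h1 : ∀ x ∈ Ω, HasFDerivAt g (g1 x) x)
    (h2 : ∀ x ∈ Ω, HasFDerivAt g1 (g2 x) x) (h3 : ContinuousOn g2 Ω) : ContDiffOn ℝ 2 g Ω := by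
  have k1 : ContDiffOn ℝ 1 g1 Ω := by
    rw [show (1 : WithTop ℕ∞) = 0 + 1 from rfl, contDiffOn_succ_iff_fderiv_of_isOpen hΩ]
    refine ⟨fun x hx => (h2 x hx).differentiableAt.differentiableWithinAt, by simp, ?_⟩
    rw [contDiffOn_zero]
    exact h3.congr fun x hx => (h2 x hx).fderiv
  rw [show (2 : WithTop ℕ∞) = 1 + 1 from by norm_num, contDiffOn_succ_iff_fderiv_of_isOpen hΩ]
  exact ⟨fun x hx => (h1 x hx).differentiableAt.differentiableWithinAt, by simp,
    k1.congr fun x hx => (h1 x hx).fderiv⟩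

theorem MM_contDiff {N : ℕ} {r : ℝ} (hr : 0 < r) {f : Eu N → ℝ} (hf : Continuous f) : ContDiff ℝ 2 (MM r f) := by
  rw [MM_VA hr, ← contDiffOn_univ]
  have hK1 := rho_ker (N := N) |>.dd rho_d1
  have hK2 := hK1.dd rho_d2
  refine contDiff_two_of isOpen_univ (fun x _ => rho_ker.hasFDerivAt rho_d1 hf hr x)
    (fun x _ => ((hK1.hasFDerivAt rho_d2 hf hr x).const_smul r⁻¹).neg) ?_
  have := (hK2.cont2 hf).comp (Continuous.prodMk_right r)
  exact (((this.const_smul r⁻¹).neg).const_smul r⁻¹).neg.continuousOn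

theorem MM_lip {N : ℕ} {r : ℝ} (hr : 0 < r) : ∃ L, 0 ≤ L ∧ ∀ (f : Eu N → ℝ) (B : ℝ), Continuous f → (∀ x, |f x| ≤ B) →
    ∀ x y, |MM r f x - MM r f y| ≤ B * L * ‖x - y‖ := by
  have hK1 := rho_ker (N := N) |>.dd rho_d1
  refine ⟨r⁻¹ * ∫ z, ‖fderiv ℝ (rho (N := N)) z‖, 
    mul_nonneg (by positivity) (integral_nonneg fun z => norm_nonneg _), fun f B hf hB x y => ?_⟩
  rw [MM_VA hr]
  have := Convex.norm_image_sub_le_of_norm_hasFDerivWithin_le (𝕜 := ℝ) (s := univ) (f := VA rho f r) 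
    (fun x _ => (rho_ker.hasFDerivAt rho_d1 hf hr x).hasFDerivWithinAt) (C := r⁻¹ * (B * ∫ z, ‖fderiv ℝ (rho (N := N)) z‖))
    (fun x _ => ?_) convex_univ (mem_univ y) (mem_univ x)
  · rw [Real.norm_eq_abs] at this
    convert this using 2
    ring
  · rw [norm_neg, norm_smul, Real.norm_eq_abs, abs_of_pos (inv_pos.2 hr)]
    exact mul_le_mul_of_nonneg_left (hK1.bound fun z _ => hB _) (by positivity)


theorem QQ_d1 {N : ℕ} {r : ℝ} (hr : 0 < r) {f : Eu N → ℝ} (hf : Continuous f) {B : ℝ} (hB : ∀ x, |f x| ≤ B)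
    (x : Eu N) : HasFDerivAt (QQ r f) (∫ s in (0)..r, -VA (fderiv ℝ theta) f s x) x := by
  have hK1 := theta_ker (N := N) |>.dd theta_d1
  rw [QQ_VA hr hf]
  refine intervalIntegral.hasFDerivAt_integral_of_dominated_of_fderiv_le (𝕜 := ℝ) (s := univ) 
    (F := fun x s => s * VA theta f s x) (F' := fun x s => -VA (fderiv ℝ theta) f s x)
    (bound := fun _ => B * ∫ z, ‖fderiv ℝ (theta (N := N)) z‖) univ_mem ?_ ?_ ?_ ?_ ?_ ?_
  · refine Eventually.of_forall fun y => Continuous.aestronglyMeasurable ?_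
    exact continuous_id.mul ((theta_ker.cont2 hf).comp (Continuous.prodMk_left y))
  · exact (continuous_id.mul ((theta_ker.cont2 hf).comp (Continuous.prodMk_left x))).intervalIntegrable _ _
  · exact (((hK1.cont2 hf).comp (Continuous.prodMk_left x)).neg).aestronglyMeasurable
  · refine ae_of_all _ fun s _ y _ => ?_
    rw [norm_neg]
    exact hK1.bound fun z _ => hB _
  · exact intervalIntegrable_const
  · refine ae_of_all _ fun s hs y _ => ?_
    rw [uIoc_of_le hr.le] at hs
    have := (theta_ker.hasFDerivAt theta_d1 hf hs.1 y).const_mul s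
    refine this.congr_fderiv ?_
    rw [smul_neg, smul_smul, mul_inv_cancel₀ hs.1.ne', one_smul]

theorem QQ_lip {N : ℕ} {r : ℝ} (hr : 0 < r) : ∃ L, 0 ≤ L ∧ ∀ (f : Eu N → ℝ) (B : ℝ), Continuous f → (∀ x, |f x| ≤ B) →
    ∀ x y, |QQ r f x - QQ r f y| ≤ B * L * ‖x - y‖ := by
  have hK1 := theta_ker (N := N) |>.dd theta_d1
  refine ⟨r * ∫ z, ‖fderiv ℝ (theta (N := N)) z‖, 
    mul_nonneg (by positivity) (integral_nonneg fun z => norm_nonneg _), fun f B hf hB x y => ?_⟩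
  have := Convex.norm_image_sub_le_of_norm_hasFDerivWithin_le (𝕜 := ℝ) (s := univ) (f := QQ r f) 
    (fun x _ => (QQ_d1 hr hf hB x).hasFDerivWithinAt) (C := (B * ∫ z, ‖fderiv ℝ (theta (N := N)) z‖) * r)
    (fun x _ => ?_) convex_univ (mem_univ y) (mem_univ x)
  · rw [Real.norm_eq_abs] at this
    convert this using 2
    ring
  · have := intervalIntegral.norm_integral_le_of_norm_le_const (a := 0) (b := r) (f := fun s => -VA (fderiv ℝ theta) f s x)
      (C := B * ∫ z, ‖fderiv ℝ (theta (N := N)) z‖) fun s _ => by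
        rw [norm_neg]
        exact hK1.bound fun z _ => hB _
    rwa [sub_zero, abs_of_pos hr] at this

theorem Ker.holder {N : ℕ} {F : Type*} [NormedAddCommGroup F] [NormedSpace ℝ F] {κ : Eu N → F}
    (h : Ker κ) (h0 : ∫ z, κ z = 0) {r γ : ℝ} (hγ : 0 < γ) {f : Eu N → ℝ} (hf : Continuous f) {C : ℝ} (hC0 : 0 ≤ C)
    {x₀ : Eu N} (hC : ∀ x ∈ ball x₀ (2*r), ∀ y ∈ ball x₀ (2*r), |f x - f y| ≤ C * ‖x - y‖ ^ γ)
    {s : ℝ} (hs : s ∈ Ioc 0 r) {x : Eu N} (hx : x ∈ ball x₀ r) :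
    ‖s⁻¹ • VA κ f s x‖ ≤ (C * ∫ z, ‖κ z‖) * s ^ (γ - 1) := by
  have e : VA κ f s x = VA κ (fun y => f y - f x) s x := by
    unfold VA
    simp only [sub_smul]
    rw [integral_sub (h.fint hf s x) (h.integrable.smul (f x) : Integrable (fun z => f x • κ z)), integral_smul, h0]
    simp
  have hb : ‖VA κ f s x‖ ≤ (C * s ^ γ) * ∫ z, ‖κ z‖ := by
    rw [e]
    refine h.bound fun z hz => ?_
    have hsz : ‖s • z‖ ≤ s := by
      rw [norm_smul, Real.norm_eq_abs, abs_of_pos hs.1]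
      nlinarith [hs.1]
    rw [mem_ball, dist_eq_norm] at hx
    refine (hC _ ?_ _ ?_).trans ?_
    · rw [mem_ball, dist_eq_norm]
      calc ‖x + s • z - x₀‖ = ‖(x - x₀) + s • z‖ := by congr 1; abel
        _ ≤ _ := norm_add_le _ _
        _ < _ := by linarith [hs.2]
    · rw [mem_ball, dist_eq_norm]; linarith [hs.1, hs.2]
    · rw [add_sub_cancel_left]
      exact mul_le_mul_of_nonneg_left (Real.rpow_le_rpow (norm_nonneg _) hsz hγ.le) hC0
  rw [norm_smul, Real.norm_eq_abs, abs_of_pos (inv_pos.2 hs.1)]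
  refine (mul_le_mul_of_nonneg_left hb (inv_pos.2 hs.1).le).trans (le_of_eq ?_)
  rw [Real.rpow_sub hs.1, Real.rpow_one]
  field_simp

theorem QQ_contDiffOn {N : ℕ} {r γ : ℝ} (hr : 0 < r) (hγ : 0 < γ) {f : Eu N → ℝ} (hf : Continuous f) {B C : ℝ} (hB : ∀ x, |f x| ≤ B) (hC0 : 0 ≤ C)
    {x₀ : Eu N} (hC : ∀ x ∈ ball x₀ (2*r), ∀ y ∈ ball x₀ (2*r), |f x - f y| ≤ C * ‖x - y‖ ^ γ) :
    ContDiffOn ℝ 2 (QQ r f) (ball x₀ r) := by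
  have hK1 := theta_ker (N := N) |>.dd theta_d1
  have hK2 := hK1.dd theta_d2
  have hbd : ∀ s ∈ Ioc 0 r, ∀ x ∈ ball x₀ r, ‖s⁻¹ • VA (fderiv ℝ (fderiv ℝ theta)) f s x‖ ≤ 
      (C * ∫ z, ‖fderiv ℝ (fderiv ℝ (theta (N := N))) z‖) * s ^ (γ - 1) := by
    exact fun s hs x hx => hK2.holder (hK1.int_zero theta_d2) hγ hf hC0 hC hs hx
  have hcont : ∀ x, ContinuousOn (fun s => s⁻¹ • VA (fderiv ℝ (fderiv ℝ theta)) f s x) (Ioc 0 r) := fun x =>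
    (continuousOn_id.inv₀ fun s hs => hs.1.ne').smul ((hK2.cont2 hf).comp (Continuous.prodMk_left x)).continuousOn
  have hInt : IntervalIntegrable (fun s : ℝ => (C * ∫ z, ‖fderiv ℝ (fderiv ℝ (theta (N := N))) z‖) * s ^ (γ - 1)) volume 0 r :=
    (intervalIntegral.intervalIntegrable_rpow' (by linarith)).const_mul _
  have hmeas : ∀ x, AEStronglyMeasurable (fun s => s⁻¹ • VA (fderiv ℝ (fderiv ℝ theta)) f s x) (volume.restrict (uIoc 0 r)) := by
    intro x
    rw [uIoc_of_le hr.le]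
    exact (hcont x).aestronglyMeasurable measurableSet_Ioc
  refine contDiff_two_of isOpen_ball (fun x _ => QQ_d1 hr hf hB x) 
    (g2 := fun x => ∫ s in (0)..r, s⁻¹ • VA (fderiv ℝ (fderiv ℝ theta)) f s x) (fun x hx => ?_) (fun x hx => ?_)
  · refine intervalIntegral.hasFDerivAt_integral_of_dominated_of_fderiv_le (𝕜 := ℝ) (s := ball x₀ r) 
      (F := fun x s => -VA (fderiv ℝ theta) f s x) (F' := fun x s => s⁻¹ • VA (fderiv ℝ (fderiv ℝ theta)) f s x)
      (bound := fun s => (C * ∫ z, ‖fderiv ℝ (fderiv ℝ (theta (N := N))) z‖) * s ^ (γ - 1)) 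
      (isOpen_ball.mem_nhds hx) ?_ ?_ ?_ ?_ ?_ ?_
    · refine Eventually.of_forall fun y => Continuous.aestronglyMeasurable ?_
      exact ((hK1.cont2 hf).comp (Continuous.prodMk_left y)).neg
    · exact (((hK1.cont2 hf).comp (Continuous.prodMk_left x)).neg).intervalIntegrable _ _
    · exact hmeas x
    · refine ae_of_all _ fun s hs y hy => ?_
      rw [uIoc_of_le hr.le] at hs
      exact hbd s hs y hy
    · exact hInt
    · refine ae_of_all _ fun s hs y _ => ?_
      rw [uIoc_of_le hr.le] at hs
      have := (hK1.hasFDerivAt theta_d2 hf hs.1 y).neg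
      refine this.congr_fderiv ?_
      rw [neg_neg]
  · refine ContinuousAt.continuousWithinAt ?_
    refine intervalIntegral.continuousAt_of_dominated_interval
      (bound := fun s => (C * ∫ z, ‖fderiv ℝ (fderiv ℝ (theta (N := N))) z‖) * s ^ (γ - 1)) 
      (Eventually.of_forall fun y => hmeas y) ?_ hInt ?_
    · filter_upwards [isOpen_ball.mem_nhds hx] with y hy
      refine ae_of_all _ fun s hs => ?_
      rw [uIoc_of_le hr.le] at hs
      exact hbd s hs y hy
    · refine ae_of_all _ fun s hs => ?_
      exact (((hK2.cont2 hf).comp (Continuous.prodMk_right s)).const_smul s⁻¹).continuousAt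


theorem exists_clamp {N : ℕ} (x₀ : Eu N) {ρ : ℝ} (hρ : 0 < ρ) : ∃ P : Eu N → Eu N, Continuous P ∧
    (∀ y, P y ∈ closedBall x₀ ρ) ∧ ∀ y ∈ closedBall x₀ ρ, P y = y := by
  have hm : ∀ y : Eu N, 0 < max ρ ‖y - x₀‖ := fun y => lt_of_lt_of_le hρ (le_max_left _ _)
  refine ⟨fun y => x₀ + (ρ / max ρ ‖y - x₀‖) • (y - x₀), ?_, fun y => ?_, fun y hy => ?_⟩
  · refine continuous_const.add (Continuous.smul (continuous_const.div (by fun_prop) fun y => (hm y).ne') (by fun_prop))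
  · rw [mem_closedBall, dist_eq_norm, add_sub_cancel_left, norm_smul, Real.norm_eq_abs, 
      abs_of_pos (div_pos hρ (hm y)), div_mul_eq_mul_div, div_le_iff₀ (hm y)]
    exact mul_le_mul_of_nonneg_left (le_max_right _ _) hρ.le
  · rw [mem_closedBall, dist_eq_norm] at hy
    simp only [max_eq_left hy, div_self hρ.ne', one_smul]
    abel

/-- a locally bounded sequence satisfying the mean value identity -/
structure MVSeq {N : ℕ} (Ω : Set (Eu N)) (W f : ℕ → Eu N → ℝ) (w g : Eu N → ℝ) : Prop where
  op : IsOpen Ω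
  Wc : ∀ n, Continuous (W n)
  fc : ∀ n, Continuous (f n)
  mv : ∀ n r x, 0 < r → W n x = MM r (W n) x + QQ r (f n) x
  bd : ∀ S, IsCompact S → S ⊆ Ω → ∃ B, ∀ n, ∀ x ∈ S, |W n x| ≤ B ∧ |f n x| ≤ B
  Wl : ∀ x ∈ Ω, Tendsto (fun n => W n x) atTop (nhds (w x))
  fl : ∀ x ∈ Ω, Tendsto (fun n => f n x) atTop (nhds (g x))

theorem cball_two {N : ℕ} {x₀ x : Eu N} {R : ℝ} (hx : x ∈ ball x₀ R) : closedBall x R ⊆ closedBall x₀ (2*R) := by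
  intro y hy
  rw [mem_closedBall] at hy ⊢
  rw [mem_ball] at hx
  linarith [dist_triangle y x x₀]

theorem MVSeq.lip {N : ℕ} {Ω : Set (Eu N)} {W f : ℕ → Eu N → ℝ} {w g : Eu N → ℝ} (h : MVSeq Ω W f w g)
    {x₀ : Eu N} {R : ℝ} (hR : 0 < R) (hx : closedBall x₀ (2*R) ⊆ Ω) :
    ∃ L, 0 ≤ L ∧ ∀ x ∈ ball x₀ R, ∀ y ∈ ball x₀ R, |w x - w y| ≤ L * ‖x - y‖ := by
  obtain ⟨P, hPc, hP1, hP2⟩ := exists_clamp x₀ (show 0 < 2*R by linarith)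
  obtain ⟨B, hB⟩ := h.bd _ (isCompact_closedBall x₀ (2*R)) hx
  obtain ⟨L1, hL1, h1⟩ := MM_lip (N := N) hR
  obtain ⟨L2, hL2, h2⟩ := QQ_lip (N := N) hR
  have hB0 : 0 ≤ B := (abs_nonneg _).trans (hB 0 x₀ (mem_closedBall_self (by linarith))).1
  have key : ∀ n, ∀ x ∈ ball x₀ R, W n x = MM R (fun y => W n (P y)) x + QQ R (fun y => f n (P y)) x := by
    intro n x hxR
    rw [h.mv n R x hR]
    congr 1
    · exact MM_congr hR fun y hy => by rw [hP2 y (cball_two hxR hy)]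
    · exact QQ_congr fun y hy => by rw [hP2 y (cball_two hxR hy)]
  refine ⟨B * L1 + B * L2, by positivity, fun x hxR y hyR => ?_⟩
  have hn : ∀ n, |W n x - W n y| ≤ (B * L1 + B * L2) * ‖x - y‖ := by
    intro n
    rw [key n x hxR, key n y hyR]
    have a1 := h1 (fun y => W n (P y)) B ((h.Wc n).comp hPc) (fun y => (hB n _ (hP1 y)).1) x y
    have a2 := h2 (fun y => f n (P y)) B ((h.fc n).comp hPc) (fun y => (hB n _ (hP1 y)).2) x y
    rw [abs_le] at *
    constructor <;> linarith [a1.1, a1.2, a2.1, a2.2]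
  have hxΩ : x ∈ Ω := hx (ball_subset_closedBall.trans (closedBall_subset_closedBall (by linarith)) hxR)
  have hyΩ : y ∈ Ω := hx (ball_subset_closedBall.trans (closedBall_subset_closedBall (by linarith)) hyR)
  exact le_of_tendsto ((h.Wl x hxΩ).sub (h.Wl y hyΩ)).abs (Eventually.of_forall hn)

theorem exists_two {N : ℕ} {Ω : Set (Eu N)} (hΩ : IsOpen Ω) {x : Eu N} (hx : x ∈ Ω) : 
    ∃ R > 0, closedBall x (2*R) ⊆ Ω := by
  obtain ⟨ε, he, h⟩ := Metric.isOpen_iff.1 hΩ x hx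
  refine ⟨ε/4, by positivity, (closedBall_subset_ball (by linarith)).trans h⟩

theorem MVSeq.cont {N : ℕ} {Ω : Set (Eu N)} {W f : ℕ → Eu N → ℝ} {w g : Eu N → ℝ} (h : MVSeq Ω W f w g) :
    ContinuousOn w Ω := by
  intro x hx
  obtain ⟨R, hR, hR2⟩ := exists_two h.op hx
  obtain ⟨L, hL, hl⟩ := h.lip hR hR2
  refine ContinuousAt.continuousWithinAt ?_
  have hlip : LipschitzOnWith (Real.toNNReal L) w (ball x R) := by
    refine LipschitzOnWith.of_dist_le_mul fun y hy z hz => ?_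
    rw [Real.coe_toNNReal _ hL, Real.dist_eq, dist_eq_norm]
    exact hl y hy z hz
  exact hlip.continuousOn.continuousAt (ball_mem_nhds x hR)

theorem MVSeq.mvlim {N : ℕ} {Ω : Set (Eu N)} {W f : ℕ → Eu N → ℝ} {w g : Eu N → ℝ} (h : MVSeq Ω W f w g)
    {x : Eu N} {r : ℝ} (hr : 0 < r) (hx : closedBall x r ⊆ Ω) : w x = MM r w x + QQ r g x := by
  obtain ⟨B, hB⟩ := h.bd _ (isCompact_closedBall x r) hx
  have t1 := (mm_SB (N := N) hr).dct (x := x) (F := W) (f := w) (B := B) (fun n => (h.Wc n).continuousOn)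
    (fun n y hy => (hB n y hy).1) (fun y hy => h.Wl y (hx hy))
  have t2 := (qq_SB (N := N) (r := r)).dct (x := x) (F := f) (f := g) (B := B) (fun n => (h.fc n).continuousOn)
    (fun n y hy => (hB n y hy).2) (fun y hy => h.fl y (hx hy))
  have t3 := t1.add t2
  refine tendsto_nhds_unique (h.Wl x (hx (mem_closedBall_self hr.le))) ?_
  refine t3.congr fun n => ?_
  rw [h.mv n r x hr]; rfl

theorem MVSeq.contDiffOn {N : ℕ} {Ω : Set (Eu N)} {W f : ℕ → Eu N → ℝ} {w g : Eu N → ℝ} (h : MVSeq Ω W f w g)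
    {γ : ℝ} (hγ : 0 < γ) (hg : ContinuousOn g Ω)
    (hH : ∀ x₀ ∈ Ω, ∃ R > 0, ∃ C, 0 ≤ C ∧ ∀ x ∈ ball x₀ R, ∀ y ∈ ball x₀ R, |g x - g y| ≤ C * ‖x - y‖ ^ γ) :
    ContDiffOn ℝ 2 w Ω := by
  intro x₀ hx₀
  obtain ⟨R₁, hR₁, h1⟩ := exists_two h.op hx₀
  obtain ⟨R₂, hR₂, C, hC0, hC⟩ := hH x₀ hx₀
  set R := min R₁ (R₂/2) with hRdef
  have hR : 0 < R := by positivity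
  have hRR1 : R ≤ R₁ := min_le_left _ _
  have hRR2 : 2 * R ≤ R₂ := by have := min_le_right R₁ (R₂/2); linarith
  have hsub : closedBall x₀ (2*R) ⊆ Ω := (closedBall_subset_closedBall (by linarith)).trans h1
  obtain ⟨P, hPc, hP1, hP2⟩ := exists_clamp x₀ (show 0 < 2*R by linarith)
  have key : ∀ x ∈ ball x₀ R, w x = MM R (fun y => w (P y)) x + QQ R (fun y => g (P y)) x := by
    intro x hxR
    rw [h.mvlim hR ((cball_two hxR).trans hsub)]
    congr 1
    · exact MM_congr hR fun y hy => by rw [hP2 y (cball_two hxR hy)]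
    · exact QQ_congr fun y hy => by rw [hP2 y (cball_two hxR hy)]
  have cw : Continuous fun y => w (P y) := h.cont.comp_continuous hPc fun y => hsub (hP1 y)
  have cg : Continuous fun y => g (P y) := hg.comp_continuous hPc fun y => hsub (hP1 y)
  obtain ⟨B, hB⟩ := (isCompact_closedBall x₀ (2*R)).exists_bound_of_continuousOn (hg.mono hsub)
  have hQ : ContDiffOn ℝ 2 (QQ R (fun y => g (P y))) (ball x₀ R) := by
    refine QQ_contDiffOn hR hγ cg (B := B) (C := C) (fun y => hB _ (hP1 y)) hC0 fun x hx y hy => ?_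
    rw [hP2 x (ball_subset_closedBall hx), hP2 y (ball_subset_closedBall hy)]
    exact hC x (ball_subset_ball hRR2 hx) y (ball_subset_ball hRR2 hy)
  have := ((MM_contDiff hR cw).contDiffOn.add hQ).congr key
  exact (this.contDiffAt (ball_mem_nhds x₀ hR)).contDiffWithinAt

theorem QQ_zero_of {N : ℕ} {Ω : Set (Eu N)} (hΩ : IsOpen Ω) {h : Eu N → ℝ} (hh : ContinuousOn h Ω) {x : Eu N} (hx : x ∈ Ω)
    {r₀ : ℝ} (hr₀ : 0 < r₀) (hq : ∀ r, 0 < r → r < r₀ → QQ r h x ≤ 0) : h x ≤ 0 := by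
  by_contra hcon
  push Not at hcon
  have hc := hh.continuousAt (hΩ.mem_nhds hx)
  have : ∀ᶠ y in nhds x, h x / 2 < h y ∧ y ∈ Ω := 
    (hc.eventually (lt_mem_nhds (by linarith))).and (hΩ.mem_nhds hx)
  obtain ⟨ε, he, hε⟩ := Metric.eventually_nhds_iff_ball.1 this
  set r := min (r₀/2) (ε/2) with hr
  have hr0 : 0 < r := by positivity
  have hrε : r < ε := lt_of_le_of_lt (min_le_right _ _) (by linarith)
  have hrr : r < r₀ := lt_of_le_of_lt (min_le_left _ _) (by linarith)
  have hs : closedBall x r ⊆ ball x ε := closedBall_subset_ball hrε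
  have h1 := QQ_mono (r := r) (x := x) (f := fun _ => h x / 2) (g := h) continuousOn_const
    (hh.mono fun y hy => (hε y (hs hy)).2) (fun y hy => (hε y (hs hy)).1.le)
  rw [QQ_const] at h1
  have h2 := qq_univ_pos (N := N) hr0
  have h3 := hq r hr0 hrr
  nlinarith

theorem MVSeq.lap {N : ℕ} {Ω : Set (Eu N)} {W f : ℕ → Eu N → ℝ} {w g : Eu N → ℝ} (h : MVSeq Ω W f w g)
    (hg : ContinuousOn g Ω) (hw : ContDiffOn ℝ 2 w Ω) {x : Eu N} (hx : x ∈ Ω) : -laplacian w x = g x := by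
  obtain ⟨R, hR, hR2⟩ := exists_two h.op hx
  have hlc : ContinuousOn (fun y => -laplacian w y) Ω := (laplacian_continuousOn h.op hw).neg
  have hq : ∀ r, 0 < r → r < R → QQ r (fun y => -laplacian w y) x = QQ r g x := by
    intro r hr hrR
    have e1 := h.mvlim (x := x) hr ((closedBall_subset_closedBall (by linarith)).trans hR2)
    have e2 := mv_local h.op hw (x := x) hr ((closedBall_subset_closedBall (by linarith)).trans hR2)
    linarith
  have hs : ∀ r, r < R → closedBall x r ⊆ Ω := fun r hr => 
    (closedBall_subset_closedBall (by linarith)).trans hR2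
  have a1 := QQ_zero_of h.op (h := fun y => -laplacian w y - g y) (hlc.sub hg) hx hR fun r hr hrR => by
    rw [QQ_sub (hlc.mono (hs r hrR)) (hg.mono (hs r hrR)), hq r hr hrR]; simp
  have a2 := QQ_zero_of h.op (h := fun y => g y - -laplacian w y) (hg.sub hlc) hx hR fun r hr hrR => by
    rw [QQ_sub (hg.mono (hs r hrR)) (hlc.mono (hs r hrR)), hq r hr hrR]; simp
  linarith


structure AS {N : ℕ} (K : Set (Eu N)) (p : ℝ) (φ : ℝ → ℝ) (W f : ℕ → Eu N → ℝ) (w : Eu N → ℝ) : Prop where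
  Wc : ∀ n, Continuous (W n)
  fc : ∀ n, Continuous (f n)
  fn : ∀ n x, 0 ≤ f n x
  mv : ∀ n r x, 0 < r → W n x = MM r (W n) x + QQ r (f n) x
  pos : ∀ n x, 0 < W n x
  mono : ∀ x, Monotone fun n => W n x
  eq : ∀ n x, f n x = psi φ n (infDist x K) * (W n x + 1 / ((n:ℝ)+1)) ^ (-p)
  le : ∀ u : Eu N → ℝ, ContDiffOn ℝ 2 u Kᶜ → 
    (∀ x ∈ Kᶜ, 0 < u x ∧ φ (infDist x K) * u x ^ (-p) ≤ -laplacian u x) → ∀ n, ∀ x ∈ Kᶜ, W n x ≤ u x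
  sup : ∀ x, w x = ⨆ n, W n x

theorem exists_AS {N : ℕ} (hN : 3 ≤ N) {K : Set (Eu N)} (hK : K.Finite) (hne : K.Nonempty) {p : ℝ} (hp : 0 < p)
    {φ : ℝ → ℝ} (hφ : ∀ r, 0 < r → 0 < φ r) (hφc : ContinuousOn φ (Ioi 0)) : ∃ W f w, AS K p φ W f w := by
  obtain ⟨W, f, h1, h2, h3, h4, h5, h6, h7, h8, h9⟩ := approx_seq hN hK hne hp hφ hφc
  refine ⟨W, f, fun x => ⨆ n, W n x, h1, h2, h5, fun n r x hr => ?_, h6, 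
    fun x => monotone_nat_of_le_succ fun n => h7 n x, h8, h9, fun x => rfl⟩
  have : W n = GG (f n) := funext (h4 n)
  rw [this]
  exact GG_mv hN (h2 n) (h3 n) hr x

theorem AS.lim {N : ℕ} {K : Set (Eu N)} {p : ℝ} {φ : ℝ → ℝ} {W f : ℕ → Eu N → ℝ} {w : Eu N → ℝ} (h : AS K p φ W f w)
    {x : Eu N} {b : ℝ} (hb : ∀ n, W n x ≤ b) : Tendsto (fun n => W n x) atTop (nhds (w x)) ∧ (∀ n, W n x ≤ w x) ∧ w x ≤ b ∧
      0 < w x := by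
  have hbd : BddAbove (range fun n => W n x) := ⟨b, by rintro _ ⟨n, rfl⟩; exact hb n⟩
  rw [h.sup x]
  refine ⟨tendsto_atTop_ciSup (h.mono x) hbd, fun n => le_ciSup hbd n, ciSup_le hb, 
    (h.pos 0 x).trans_le (le_ciSup hbd 0)⟩

theorem rpow_lip {p c : ℝ} (hp : 0 < p) (hc : 0 < c) {a b : ℝ} (ha : c ≤ a) (hb : c ≤ b) :
    |a ^ (-p) - b ^ (-p)| ≤ p * c ^ (-p-1) * |a - b| := by
  have := Convex.norm_image_sub_le_of_norm_hasDerivWithin_le (f := fun t : ℝ => t ^ (-p)) (s := Ici c)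
    (f' := fun t => -p * t ^ (-p - 1)) (C := p * c ^ (-p-1)) (fun t ht => ?_) (fun t ht => ?_) (convex_Ici c) hb ha
  · simpa [Real.norm_eq_abs] using this
  · exact (Real.hasDerivAt_rpow_const (Or.inl (hc.trans_le ht).ne')).hasDerivWithinAt
  · have ht0 : 0 < t := hc.trans_le ht
    rw [norm_mul, norm_neg, Real.norm_eq_abs, Real.norm_eq_abs, abs_of_pos hp, abs_of_pos (Real.rpow_pos_of_pos ht0 _)]
    exact mul_le_mul_of_nonneg_left (Real.rpow_le_rpow_of_nonpos hc ht (by linarith)) hp.le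

theorem phi_cont {γ : NNReal} (hγ0 : 0 < γ) {φ : ℝ → ℝ}
    (hφhold : ∀ s : Set ℝ, IsCompact s → s ⊆ Ioi (0:ℝ) → ∃ C : NNReal, HolderOnWith C γ φ s) : 
    ContinuousOn φ (Ioi 0) := by
  intro t ht
  have ht0 : (0:ℝ) < t := ht
  obtain ⟨C, hC⟩ := hφhold (Icc (t/2) (2*t)) isCompact_Icc fun s hs => (show (0:ℝ) < s by linarith [hs.1])
  exact ((hC.continuousOn hγ0).continuousAt (Icc_mem_nhds (by linarith) (by linarith))).continuousWithinAt

theorem phid_cont {N : ℕ} {K : Set (Eu N)} (hK : K.Finite) (hne : K.Nonempty) {φ : ℝ → ℝ} (hφc : ContinuousOn φ (Ioi 0)) :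
    ContinuousOn (fun x => φ (infDist x K)) Kᶜ :=
  hφc.comp (continuous_infDist_pt K).continuousOn fun _ hx => infDist_pos_compl hK hne hx

section
variable {N : ℕ} {K : Set (Eu N)} {p : ℝ} {φ : ℝ → ℝ} {W f : ℕ → Eu N → ℝ} {w : Eu N → ℝ}

theorem AS.f_le (h : AS K p φ W f w) (hp : 0 < p) (hφ : ∀ r, 0 < r → 0 < φ r) {x : Eu N} {c : ℝ} (hc : 0 < c)
    (hcW : c ≤ W 0 x) (n : ℕ) : f n x ≤ psi φ n (infDist x K) * c ^ (-p) := by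
  rw [h.eq n x]
  refine mul_le_mul_of_nonneg_left ?_ (psi_nonneg hφ n _)
  refine Real.rpow_le_rpow_of_nonpos hc ?_ (by linarith)
  have : W 0 x ≤ W n x := h.mono x (Nat.zero_le n)
  have : 0 < 1 / ((n:ℝ)+1) := by positivity
  linarith

theorem AS.mvseq (h : AS K p φ W f w) (hK : K.Finite) (hne : K.Nonempty) (hp : 0 < p) (hφ : ∀ r, 0 < r → 0 < φ r)
    (hφc : ContinuousOn φ (Ioi 0)) {V : Eu N → ℝ} (hV : ContinuousOn V Kᶜ) (hWV : ∀ n, ∀ x ∈ Kᶜ, W n x ≤ V x) :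
    MVSeq Kᶜ W f w (fun x => φ (infDist x K) * w x ^ (-p)) where
  op := hK.isClosed.isOpen_compl
  Wc := h.Wc
  fc := h.fc
  mv := h.mv
  bd := by
    intro S hS hSK
    obtain ⟨B1, hB1⟩ := hS.exists_bound_of_continuousOn (hV.mono hSK)
    have hc : ContinuousOn (fun x => φ (infDist x K) * W 0 x ^ (-p)) Kᶜ := (phid_cont hK hne hφc).mul 
      ((h.Wc 0).continuousOn.rpow_const fun x _ => Or.inl (h.pos 0 x).ne')
    obtain ⟨B2, hB2⟩ := hS.exists_bound_of_continuousOn (hc.mono hSK)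
    refine ⟨max B1 B2, fun n x hx => ⟨?_, ?_⟩⟩
    · rw [abs_of_pos (h.pos n x)]
      exact ((hWV n x (hSK hx)).trans (le_abs_self _)).trans ((hB1 x hx).trans (le_max_left _ _))
    · rw [abs_of_nonneg (h.fn n x)]
      refine (h.f_le hp hφ (h.pos 0 x) le_rfl n).trans ?_
      refine le_trans ?_ ((le_abs_self _).trans ((hB2 x hx).trans (le_max_right _ _)))
      exact mul_le_mul_of_nonneg_right (psi_le hφ n (infDist_pos_compl hK hne (hSK hx)))
        (Real.rpow_nonneg (h.pos 0 x).le _)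
  Wl := fun x hx => (h.lim fun n => hWV n x hx).1
  fl := by
    intro x hx
    obtain ⟨h1, h2, h3, h4⟩ := h.lim fun n => hWV n x hx
    have t1 : Tendsto (fun n => psi φ n (infDist x K)) atTop (nhds (φ (infDist x K))) := by
      refine tendsto_const_nhds.congr' ?_
      filter_upwards [chi_tendsto (infDist_pos_compl hK hne hx)] with n hn
      rw [psi, hn, mul_one]
    have t2 : Tendsto (fun n : ℕ => W n x + 1 / ((n:ℝ)+1)) atTop (nhds (w x + 0)) :=
      h1.add tendsto_one_div_add_atTop_nhds_zero_nat
    rw [add_zero] at t2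
    refine (t1.mul (t2.rpow_const (p := -p) (Or.inl h4.ne'))).congr fun n => ?_
    rw [h.eq n x]

theorem AS.holder (h : AS K p φ W f w) (hK : K.Finite) (hne : K.Nonempty) (hp : 0 < p) (hφ : ∀ r, 0 < r → 0 < φ r)
    {γ : NNReal} (hγ0 : 0 < γ) (hγ1 : γ < 1) 
    (hφhold : ∀ s : Set ℝ, IsCompact s → s ⊆ Ioi (0:ℝ) → ∃ C : NNReal, HolderOnWith C γ φ s)
    {V : Eu N → ℝ} (hV : ContinuousOn V Kᶜ) (hWV : ∀ n, ∀ x ∈ Kᶜ, W n x ≤ V x) {x₀ : Eu N} (hx₀ : x₀ ∈ Kᶜ) :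
    ∃ R > 0, ∃ C, 0 ≤ C ∧ ∀ x ∈ ball x₀ R, ∀ y ∈ ball x₀ R, 
      |φ (infDist x K) * w x ^ (-p) - φ (infDist y K) * w y ^ (-p)| ≤ C * ‖x - y‖ ^ (γ:ℝ) := by
  have hφc := phi_cont hγ0 hφhold
  have hM := h.mvseq hK hne hp hφ hφc hV hWV
  obtain ⟨R₁, hR₁, hs₁⟩ := exists_two hM.op hx₀
  set R := min R₁ (1/2) with hRd
  have hR : 0 < R := by positivity
  have hR2 : R ≤ 1/2 := min_le_right _ _
  have hs : closedBall x₀ (2*R) ⊆ Kᶜ := (closedBall_subset_closedBall 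
    (by have := min_le_left R₁ (1/2); linarith)).trans hs₁
  obtain ⟨L, hL0, hL⟩ := hM.lip hR hs
  have hcb := isCompact_closedBall x₀ (2*R)
  obtain ⟨C, hC⟩ := hφhold ((fun x => infDist x K) '' closedBall x₀ (2*R)) 
    (hcb.image (continuous_infDist_pt K)) (by
      rintro _ ⟨x, hx, rfl⟩
      exact infDist_pos_compl hK hne (hs hx))
  obtain ⟨B, hB⟩ := hcb.exists_bound_of_continuousOn ((phid_cont hK hne hφc).mono hs)
  obtain ⟨z, hz, hmin⟩ := hcb.exists_isMinOn ⟨x₀, mem_closedBall_self (by linarith)⟩ (h.Wc 0).continuousOn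
  have hc := h.pos 0 z
  set c := W 0 z
  have hB0 : 0 ≤ B := (norm_nonneg _).trans (hB z hz)
  refine ⟨R, hR, C * c ^ (-p) + B * (p * c ^ (-p-1) * L), by positivity, fun x hx y hy => ?_⟩
  have hbb : ball x₀ R ⊆ closedBall x₀ (2*R) := 
    ball_subset_closedBall.trans (closedBall_subset_closedBall (by linarith))
  have hwc : ∀ x ∈ ball x₀ R, c ≤ w x := fun x hx => 
    (isMinOn_iff.1 hmin x (hbb hx)).trans ((h.lim fun n => hWV n x (hs (hbb hx))).2.1 0)
  have hxy1 : ‖x - y‖ ≤ 1 := by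
    rw [← dist_eq_norm]
    rw [mem_ball] at hx hy
    linarith [dist_triangle_right x y x₀]
  have hle : ‖x - y‖ ≤ ‖x - y‖ ^ (γ:ℝ) := by
    have hγ : (γ:ℝ) ≤ 1 := by exact_mod_cast hγ1.le
    have := Real.rpow_le_rpow_of_exponent_ge' (norm_nonneg (x-y)) hxy1 γ.coe_nonneg hγ
    rwa [Real.rpow_one] at this
  have hp1 : |φ (infDist x K) - φ (infDist y K)| ≤ C * ‖x - y‖ ^ (γ:ℝ) := by
    rw [← Real.dist_eq, ← dist_eq_norm]
    refine hC.dist_le_of_le (mem_image_of_mem _ (hbb hx)) (mem_image_of_mem _ (hbb hy)) ?_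
    have := (lipschitz_infDist_pt K).dist_le_mul x y
    simpa using this
  have hp2 := rpow_lip hp hc (hwc x hx) (hwc y hy)
  have hp3 := hL x hx y hy
  have hp4 : w x ^ (-p) ≤ c ^ (-p) := Real.rpow_le_rpow_of_nonpos hc (hwc x hx) (by linarith)
  have hp5 : 0 ≤ w x ^ (-p) := Real.rpow_nonneg (hc.le.trans (hwc x hx)) _
  have hp6 := hB y (hbb hy)
  rw [Real.norm_eq_abs] at hp6
  have hcp : 0 ≤ c ^ (-p) := by positivity
  have hcp1 : 0 ≤ c ^ (-p-1) := by positivity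
  calc |φ (infDist x K) * w x ^ (-p) - φ (infDist y K) * w y ^ (-p)| 
      = |(φ (infDist x K) - φ (infDist y K)) * w x ^ (-p) + φ (infDist y K) * (w x ^ (-p) - w y ^ (-p))| := by
        congr 1; ring
    _ ≤ |φ (infDist x K) - φ (infDist y K)| * w x ^ (-p) + |φ (infDist y K)| * |w x ^ (-p) - w y ^ (-p)| := by
        refine (abs_add_le _ _).trans ?_
        rw [abs_mul, abs_mul, abs_of_nonneg hp5]
    _ ≤ (C * ‖x - y‖ ^ (γ:ℝ)) * c ^ (-p) + B * (p * c ^ (-p-1) * (L * ‖x - y‖ ^ (γ:ℝ))) := by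
        have : L * ‖x - y‖ ≤ L * ‖x - y‖ ^ (γ:ℝ) := mul_le_mul_of_nonneg_left hle hL0
        have h7 : |w x ^ (-p) - w y ^ (-p)| ≤ p * c ^ (-p-1) * (L * ‖x - y‖ ^ (γ:ℝ)) :=
          hp2.trans (mul_le_mul_of_nonneg_left (hp3.trans this) (by positivity))
        gcongr
    _ = _ := by ring

theorem AS.sol (h : AS K p φ W f w) (hK : K.Finite) (hne : K.Nonempty) (hp : 0 < p) (hφ : ∀ r, 0 < r → 0 < φ r)
    {γ : NNReal} (hγ0 : 0 < γ) (hγ1 : γ < 1) 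
    (hφhold : ∀ s : Set ℝ, IsCompact s → s ⊆ Ioi (0:ℝ) → ∃ C : NNReal, HolderOnWith C γ φ s)
    {V : Eu N → ℝ} (hV : ContinuousOn V Kᶜ) (hWV : ∀ n, ∀ x ∈ Kᶜ, W n x ≤ V x) :
    ContDiffOn ℝ 2 w Kᶜ ∧ ∀ x ∈ Kᶜ, 0 < w x ∧ -laplacian w x = φ (infDist x K) * w x ^ (-p) := by
  have hφc := phi_cont hγ0 hφhold
  have hM := h.mvseq hK hne hp hφ hφc hV hWV
  have hpos : ∀ x ∈ Kᶜ, 0 < w x := fun x hx => (h.lim fun n => hWV n x hx).2.2.2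
  have hg : ContinuousOn (fun x => φ (infDist x K) * w x ^ (-p)) Kᶜ := 
    (phid_cont hK hne hφc).mul (hM.cont.rpow_const fun x hx => Or.inl (hpos x hx).ne')
  have hγ : (0:ℝ) < γ := by exact_mod_cast hγ0
  have h1 := hM.contDiffOn hγ hg (fun x₀ hx₀ => h.holder hK hne hp hφ hγ0 hγ1 hφhold hV hWV hx₀)
  exact ⟨h1, fun x hx => ⟨hpos x hx, hM.lap hg h1 hx⟩⟩
end


theorem adm_compact {m : ℕ} {ψ : ℝ → ℝ} (hc : Continuous ψ) (hn : ∀ r, 0 < r → 0 ≤ ψ r) {R : ℝ}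
    (hR : ∀ t, R ≤ t → ψ t = 0) :
    Adm m ψ ∧ IntegrableOn (fun σ => σ * ψ σ) (Ioo 0 1) := by
  have h1 : Continuous (fun σ => σ * ψ σ) := by fun_prop
  have h2 : Continuous (fun σ => σ ^ (m+2) * ψ σ) := by fun_prop
  refine ⟨⟨hc.continuousOn, hn, ?_, ?_⟩, ?_⟩
  · exact (h2.integrableOn_Icc (a := 0) (b := 1)).mono_set Ioo_subset_Icc_self
  · refine (h1.integrableOn_Icc (a := 1) (b := R)).of_forall_sdiff_eq_zero measurableSet_Ioi ?_
    rintro x ⟨hx, hx'⟩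
    have : R ≤ x := by
      by_contra hlt
      exact hx' ⟨le_of_lt hx, by linarith⟩
    simp [hR x this]
  · exact (h1.integrableOn_Icc (a := 0) (b := 1)).mono_set Ioo_subset_Icc_self

theorem Adm.of_le {m : ℕ} {φ ψ : ℝ → ℝ} (h : Adm m φ) (hb : IntegrableOn (fun σ => σ * φ σ) (Ioo 0 1))
    (hc : ContinuousOn ψ (Ioi 0)) (hn : ∀ r, 0 < r → 0 ≤ ψ r) (hle : ∀ r, 0 < r → ψ r ≤ φ r) :
    Adm m ψ ∧ IntegrableOn (fun σ => σ * ψ σ) (Ioo 0 1) := by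
  have h1 : ContinuousOn (fun σ => σ * ψ σ) (Ioi 0) := continuousOn_id.mul hc
  have h2 : ContinuousOn (fun σ => σ ^ (m+2) * ψ σ) (Ioi 0) := (continuousOn_id.pow _).mul hc
  have key : ∀ (e : ℕ) (s : Set ℝ), MeasurableSet s → s ⊆ Ioi 0 → 
      ContinuousOn (fun σ => σ ^ e * ψ σ) (Ioi 0) → IntegrableOn (fun σ => σ ^ e * φ σ) s → 
      IntegrableOn (fun σ => σ ^ e * ψ σ) s := by
    intro e s hs hs0 hcc hi
    refine Integrable.mono' hi ((hcc.mono hs0).aestronglyMeasurable hs) ?_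
    refine (ae_restrict_iff' hs).2 (Eventually.of_forall fun x hx => ?_)
    have hx0 : 0 < x := hs0 hx
    have := hn x hx0
    rw [Real.norm_of_nonneg (by positivity)]
    exact mul_le_mul_of_nonneg_left (hle x hx0) (by positivity)
  refine ⟨⟨hc, hn, ?_, ?_⟩, ?_⟩
  · exact key (m+2) _ measurableSet_Ioo (fun x hx => hx.1) h2 h.int0
  · have := key 1 (Ioi 1) measurableSet_Ioi (fun x hx => lt_trans one_pos (show (1:ℝ) < x from hx)) (by simpa using h1) (by simpa using h.int1)
    simpa using this
  · have := key 1 (Ioo 0 1) measurableSet_Ioo (fun x hx => hx.1) (by simpa using h1) (by simpa using hb)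
    simpa using this

theorem near_point {N : ℕ} {K : Set (Eu N)} (hK : K.Finite) {k : Eu N} (hk : k ∈ K) :
    ∃ δ > 0, ∀ x ∈ ball k δ, infDist x K = ‖x - k‖ := by
  have hcl : IsClosed (K \ {k}) := (hK.subset sdiff_subset).isClosed
  obtain ⟨ε, hε, hb⟩ := Metric.isOpen_iff.1 hcl.isOpen_compl k (by simp)
  refine ⟨ε/2, by positivity, fun x hx => ?_⟩
  rw [mem_ball] at hx
  rw [← dist_eq_norm]
  refine le_antisymm (infDist_le_dist_of_mem hk) ?_
  refine (le_infDist ⟨k, hk⟩).2 fun y hy => ?_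
  by_cases hyk : y = k
  · rw [hyk]
  · have : ¬ y ∈ ball k ε := fun h => hb h ⟨hy, hyk⟩
    rw [mem_ball, not_lt] at this
    have := dist_triangle y x k
    rw [dist_comm y x] at this
    linarith

theorem dense_compl_fin {m : ℕ} {K : Set (Eu (m+3))} (hK : K.Finite) : Dense Kᶜ :=
  hK.countable.dense_compl ℝ

theorem int_of_ext {m : ℕ} {K : Set (Eu (m+3))} (hK : K.Finite) (hne : K.Nonempty) {p : ℝ} (hp : 0 < p)
    {φ : ℝ → ℝ} (hφ : ∀ r, 0 < r → 0 < φ r) (hφc : ContinuousOn φ (Ioi 0)) {w v : Eu (m+3) → ℝ}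
    (hwC : ContDiffOn ℝ 2 w Kᶜ)
    (hw : ∀ x ∈ Kᶜ, 0 < w x ∧ -laplacian w x = φ (infDist x K) * w x ^ (-p))
    (hv : Continuous v) (hvp : ∀ x, 0 < v x) (hvw : ∀ x ∈ Kᶜ, v x = w x) :
    IntegrableOn (fun r : ℝ => r * φ r) (Ioo (0:ℝ) 1) volume := by
  obtain ⟨k, hk⟩ := hne
  obtain ⟨δ₁, hδ₁, hd⟩ := near_point hK hk
  obtain ⟨δ₂, hδ₂, hvk⟩ := Metric.continuousAt_iff.1 (hv.continuousAt (x := k)) 1 one_pos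
  set δ := min (min δ₁ δ₂) 1 with hδdef
  have hδ : 0 < δ := by positivity
  have hδ1 : δ ≤ 1 := min_le_right _ _
  have hδa : δ ≤ δ₁ := (min_le_left _ _).trans (min_le_left _ _)
  have hδb : δ ≤ δ₂ := (min_le_left _ _).trans (min_le_right _ _)
  have hvk0 := hvp k
  set c := (v k + 1) ^ (-p) with hcdef
  have hc : 0 < c := by positivity
  have hlow : ∀ x ∈ Kᶜ, ‖x - k‖ < δ → c * φ ‖x - k‖ ≤ -laplacian w x := by
    intro x hx hxk
    have hxk' : dist x k < δ := by rwa [dist_eq_norm]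
    have h1 := hvk (lt_of_lt_of_le hxk' hδb)
    rw [Real.dist_eq, abs_lt] at h1
    rw [(hw x hx).2, hd x (mem_ball.2 (lt_of_lt_of_le hxk' hδa)), mul_comm]
    have hne' : x ≠ k := fun h => hx (h ▸ hk)
    refine mul_le_mul_of_nonneg_left ?_ (hφ _ (norm_pos_iff.2 (sub_ne_zero.2 hne'))).le
    refine Real.rpow_le_rpow_of_nonpos (hw x hx).1 ?_ (by linarith)
    rw [← hvw x hx]; linarith
  let cut : ℝ → ℝ := fun t => max 0 (min 1 (2 - 2 * t / δ))
  have cutc : Continuous cut := by fun_prop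
  have cut0 : ∀ t, 0 ≤ cut t := fun t => le_max_left _ _
  have cut1 : ∀ t, cut t ≤ 1 := fun t => max_le zero_le_one (min_le_left _ _)
  have cutz : ∀ t, δ ≤ t → cut t = 0 := fun t ht => by
    refine max_eq_left ((min_le_right _ _).trans ?_)
    have : 1 ≤ t / δ := (one_le_div hδ).2 ht
    rw [mul_div_assoc]; linarith
  have cuto : ∀ t, t ≤ δ/2 → cut t = 1 := fun t ht => by
    have : t / δ ≤ 1/2 := by rw [div_le_iff₀ hδ]; linarith
    have h2 : 1 ≤ 2 - 2 * t / δ := by rw [mul_div_assoc]; linarith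
    show max 0 (min 1 _) = 1
    rw [min_eq_left h2]; simp
  let Ψ : ℕ → ℝ → ℝ := fun n t => c * (psi φ n t * cut t)
  have Ψc : ∀ n, Continuous (Ψ n) := fun n => continuous_const.mul ((psi_cont hφc n).mul cutc)
  have Ψn : ∀ n t, 0 ≤ Ψ n t := fun n t => mul_nonneg hc.le (mul_nonneg (psi_nonneg hφ n t) (cut0 t))
  have Ψz : ∀ n t, δ ≤ t → Ψ n t = 0 := fun n t ht => by simp [Ψ, cutz t ht]
  have hadm : ∀ n, Adm m (Ψ n) ∧ IntegrableOn (fun σ => σ * Ψ n σ) (Ioo 0 1) := fun n =>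
    adm_compact (Ψc n) (fun t _ => Ψn n t) (Ψz n)
  have hU : ∀ n, ContDiff ℝ 2 (fun x => II m (Ψ n) ‖x - k‖) ∧ 
      ∀ x, -laplacian (fun x => II m (Ψ n) ‖x - k‖) x = Ψ n ‖x - k‖ := fun n => by
    refine II_global (hadm n).1 (Ψc n) (δ := 1/((n:ℝ)+1)) (by positivity) (fun t ht => ?_) k
    have : chi n t = 0 := chi_zero_left (by
      rw [le_div_iff₀ (by positivity)] at ht; linarith)
    simp [Ψ, psi, this]
  have hle : ∀ n, ∀ x ∈ Kᶜ, II m (Ψ n) ‖x - k‖ ≤ w x := by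
    intro n
    refine cmp2 (by omega) hK ⟨k, hk⟩ (hU n).1.contDiffOn hwC (B := II m (Ψ n) 0) ?_ ?_ ?_
    · intro x hx
      have h1 := (hadm n).1.II_antitone' (hadm n).2 (mem_Ici.2 le_rfl) (mem_Ici.2 (norm_nonneg (x - k))) (norm_nonneg _)
      have := (hw x hx).1
      linarith
    · intro ε hε
      have h1 := radial_tendsto {k} (hadm n).1.II_tendsto
      simp only [Finset.sum_singleton] at h1
      filter_upwards [h1.eventually (gt_mem_nhds hε), hK.isCompact.compl_mem_cocompact] with x hx hxK
      have := (hw x hxK).1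
      linarith
    · intro x hx
      rw [(hU n).2 x]
      have hne' : x ≠ k := fun h => hx (h ▸ hk)
      have hpos := norm_pos_iff.2 (sub_ne_zero.2 hne')
      rcases lt_or_ge ‖x - k‖ δ with h1 | h1
      · refine le_trans (mul_le_mul_of_nonneg_left ?_ hc.le) (hlow x hx h1)
        calc psi φ n ‖x - k‖ * cut ‖x - k‖ ≤ psi φ n ‖x - k‖ * 1 := 
              mul_le_mul_of_nonneg_left (cut1 _) (psi_nonneg hφ n _)
          _ ≤ _ := by rw [mul_one]; exact psi_le hφ n hpos
      · rw [Ψz n _ h1, (hw x hx).2]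
        have := hφ _ (infDist_pos_compl hK ⟨k, hk⟩ hx)
        have := (hw x hx).1
        positivity
  have hlek : ∀ n, TT (Ψ n) 0 ≤ ((m:ℝ)+1) * v k := by
    intro n
    have hcl : IsClosed {x : Eu (m+3) | II m (Ψ n) ‖x - k‖ ≤ v x} := isClosed_le (hU n).1.continuous hv
    have hs : Kᶜ ⊆ {x : Eu (m+3) | II m (Ψ n) ‖x - k‖ ≤ v x} := fun x hx => by
      show _ ≤ v x
      rw [hvw x hx]; exact hle n x hx
    have := hcl.closure_subset_iff.2 hs (dense_compl_fin hK k)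
    simp only [mem_setOf_eq, sub_self, norm_zero] at this
    rw [(hadm n).1.II_zero, one_div, inv_mul_le_iff₀ (by positivity)] at this
    exact this
  have h1c : ContinuousOn (fun r : ℝ => r * φ r) (Ioi 0) := continuousOn_id.mul hφc
  have hIoc : ∀ a b : ℝ, 0 < a → IntegrableOn (fun r : ℝ => r * φ r) (Ioc a b) := fun a b ha =>
    ((h1c.mono (fun x hx => lt_of_lt_of_le ha hx.1)).integrableOn_Icc (b := b)).mono_set Ioc_subset_Icc_self
  have hmain : IntegrableOn (fun r : ℝ => r * φ r) (Ioc 0 (δ/2)) := by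
    refine integrableOn_Ioc_of_intervalIntegral_norm_bounded_left (l := atTop) (a := fun n : ℕ => 2 * (1 / ((n:ℝ)+1)))
      (I := c⁻¹ * (((m:ℝ)+1) * v k)) (fun n => hIoc _ _ (by positivity)) ?_ (Eventually.of_forall fun n => ?_)
    · simpa using (tendsto_one_div_add_atTop_nhds_zero_nat (𝕜 := ℝ)).const_mul 2
    · rw [le_inv_mul_iff₀ hc, ← integral_const_mul]
      refine le_trans ?_ (hlek n)
      have ha : (0:ℝ) < 2 * (1 / ((n:ℝ)+1)) := by positivity
      have e : ∫ x in Ioc (2 * (1 / ((n:ℝ)+1))) (δ/2), c * ‖x * φ x‖ = 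
          ∫ x in Ioc (2 * (1 / ((n:ℝ)+1))) (δ/2), x * Ψ n x := by
        refine setIntegral_congr_fun measurableSet_Ioc fun x hx => ?_
        have hx0 : 0 < x := lt_trans ha hx.1
        have hφx := hφ x hx0
        have hchi : chi n x = 1 := by
          refine chi_eq_one ?_ ?_
          · have := hx.1.le
            rw [mul_one_div, div_le_iff₀ (by positivity)] at this
            linarith
          · have := hx.2
            have : (0:ℝ) ≤ n := by positivity
            linarith
        show c * ‖x * φ x‖ = x * (c * (φ x * chi n x * cut x))
        rw [Real.norm_of_nonneg (by positivity), hchi, cuto x hx.2]; ring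
      rw [e]
      refine setIntegral_mono_set ((hadm n).1.i2 (hadm n).2) ?_ ?_
      · exact (ae_restrict_iff' measurableSet_Ioi).2 (Eventually.of_forall fun x hx => 
          mul_nonneg (le_of_lt hx) (Ψn n x))
      · exact HasSubset.Subset.eventuallyLE fun x hx => lt_trans ha hx.1
  refine (hmain.union (hIoc (δ/2) 1 (by positivity))).mono_set fun x hx => ?_
  rcases le_or_gt x (δ/2) with h | h
  · exact Or.inl ⟨hx.1, h⟩
  · exact Or.inr ⟨h, hx.2.le⟩


theorem psi_adm {m : ℕ} {φ : ℝ → ℝ} (hφ : ∀ r, 0 < r → 0 < φ r) (hφc : ContinuousOn φ (Ioi 0)) (n : ℕ) :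
    Adm m (psi φ n) ∧ IntegrableOn (fun σ => σ * psi φ n σ) (Ioo 0 1) :=
  adm_compact (R := (n:ℝ) + 2) (psi_cont hφc n) (fun t _ => psi_nonneg hφ n t) fun t ht => by
    simp [psi, chi_zero_right ht]

theorem II_osc {m : ℕ} {φ : ℝ → ℝ} (hφ : ∀ r, 0 < r → 0 < φ r) (hφc : ContinuousOn φ (Ioi 0))
    (hA : Adm m φ) (hb : IntegrableOn (fun σ => σ * φ σ) (Ioo 0 1)) (n : ℕ) {s t : ℝ} (hs : 0 ≤ s) (ht : 0 ≤ t) :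
    |II m (psi φ n) s - II m (psi φ n) t| ≤ |II m φ s - II m φ t| := by
  wlog hst : s ≤ t generalizing s t
  · rw [abs_sub_comm, abs_sub_comm (II m φ s)]
    exact this ht hs (le_of_not_ge hst)
  have hp := psi_adm (m := m) hφ hφc n
  have hd := hA.of_le hb (ψ := fun t => φ t - psi φ n t) (hφc.sub (psi_cont hφc n).continuousOn)
    (fun r hr => sub_nonneg.2 (psi_le hφ n hr)) (fun r _ => sub_le_self _ (psi_nonneg hφ n r))
  have a1 := hp.1.II_antitone' hp.2 (mem_Ici.2 hs) (mem_Ici.2 ht) hst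
  have a2 := hd.1.II_antitone' hd.2 (mem_Ici.2 hs) (mem_Ici.2 ht) hst
  rw [hA.II_sub hp.1 hb hp.2 hs, hA.II_sub hp.1 hb hp.2 ht] at a2
  rw [abs_of_nonneg (by linarith), abs_of_nonneg (by linarith)]
  linarith

theorem AS.cont_at {m : ℕ} {K : Set (Eu (m+3))} {p : ℝ} {φ : ℝ → ℝ} {W f : ℕ → Eu (m+3) → ℝ} {w : Eu (m+3) → ℝ}
    (h : AS K p φ W f w) (hK : K.Finite) (hp : 0 < p) (hφ : ∀ r, 0 < r → 0 < φ r) (hφc : ContinuousOn φ (Ioi 0))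
    (hA : Adm m φ) (hb : IntegrableOn (fun σ => σ * φ σ) (Ioo 0 1)) {B : ℝ} (hB : ∀ n x, W n x ≤ B)
    {k : Eu (m+3)} (hk : k ∈ K) : ContinuousAt w k := by
  have hlim : ∀ x, Tendsto (fun n => W n x) atTop (nhds (w x)) := fun x => (h.lim fun n => hB n x).1
  have hB0 : 0 < B := (h.pos 0 k).trans_le (hB 0 k)
  obtain ⟨δ₁, hδ₁, hd⟩ := near_point hK hk
  set c := W 0 k / 2 with hcdef
  have hWk := h.pos 0 k
  have hc : 0 < c := by positivity
  obtain ⟨δ₂, hδ₂, hW0⟩ := Metric.continuousAt_iff.1 ((h.Wc 0).continuousAt (x := k)) c hc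
  set C := c ^ (-p) with hC
  have hC0 : 0 < C := by positivity
  have hf : ∀ n, ∀ x, dist x k < min δ₁ δ₂ → f n x ≤ C * psi φ n ‖x - k‖ := by
    intro n x hx
    have h1 := hW0 (lt_of_lt_of_le hx (min_le_right _ _))
    rw [Real.dist_eq, abs_lt] at h1
    have := h.f_le hp hφ hc (x := x) (by linarith) n
    rw [hd x (mem_ball.2 (lt_of_lt_of_le hx (min_le_left _ _)))] at this
    linarith
  rw [Metric.continuousAt_iff]
  intro ε hε
  have hUc := hA.II_contOn hb 0 (mem_Ici.2 le_rfl)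
  obtain ⟨η₁, hη₁, hη⟩ := Metric.continuousWithinAt_iff.1 hUc (ε / (8 * C)) (by positivity)
  set η := min η₁ (min δ₁ δ₂) with hηdef
  have hη0 : 0 < η := by positivity
  have hr : 0 < η / 4 := by positivity
  have hQ : ∀ n x, dist x k ≤ η / 4 → 0 ≤ QQ (η/4) (f n) x ∧ QQ (η/4) (f n) x ≤ ε / 4 := by
    intro n x hx
    have hin : ∀ y ∈ closedBall x (η/4), dist y k < η := fun y hy => by
      have := dist_triangle y x k
      rw [mem_closedBall] at hy
      linarith
    have hpa := psi_adm (m := m) hφ hφc n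
    have hU := II_global hpa.1 (psi_cont hφc n) (δ := 1/((n:ℝ)+1)) (by positivity) (fun t ht => by
      have : chi n t = 0 := chi_zero_left (by
        rw [le_div_iff₀ (by positivity)] at ht; linarith)
      simp [psi, this]) k
    have hmv := mv_global hU.1 hr x
    have hfn : (fun y => -laplacian (fun x => II m (psi φ n) ‖x - k‖) y) = fun y => psi φ n ‖y - k‖ := funext hU.2
    rw [hfn] at hmv
    have hMM : |MM (η/4) (fun _ => II m (psi φ n) ‖x - k‖) x - MM (η/4) (fun x => II m (psi φ n) ‖x - k‖) x| ≤ 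
        2 * (ε / (8 * C)) := by
      refine MM_abs_sub hr continuousOn_const hU.1.continuous.continuousOn fun y hy => ?_
      refine (II_osc hφ hφc hA hb n (norm_nonneg _) (norm_nonneg _)).trans ?_
      have hz : ∀ z, dist z k < η → |II m φ ‖z - k‖ - II m φ 0| < ε / (8 * C) := fun z hz => by
        have := hη (mem_Ici.2 (norm_nonneg (z - k))) (by
          rw [Real.dist_eq, sub_zero, abs_of_nonneg (norm_nonneg _), ← dist_eq_norm]
          exact lt_of_lt_of_le hz (min_le_left _ _))
        rwa [Real.dist_eq] at this
      have h1 := abs_lt.1 (hz x (by linarith))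
      have h2 := abs_lt.1 (hz y (hin y hy))
      rw [abs_le]
      constructor <;> linarith
    rw [MM_const hr] at hMM
    have hpc : Continuous fun y : Eu (m+3) => psi φ n ‖y - k‖ := (psi_cont hφc n).comp (by fun_prop)
    refine ⟨?_, ?_⟩
    · have := QQ_mono (r := η/4) (x := x) (f := fun _ => (0:ℝ)) continuousOn_const (h.fc n).continuousOn (fun y _ => h.fn n y)
      rw [QQ_const, mul_zero] at this
      exact this
    · have := QQ_mono (r := η/4) (x := x) (f := f n) (g := fun y => C * psi φ n ‖y - k‖) (h.fc n).continuousOn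
        (continuous_const.mul hpc).continuousOn (fun y hy => hf n y ((hin y hy).trans_le (min_le_right _ _)))
      rw [QQ_smul] at this
      refine this.trans ?_
      have h3 : QQ (η/4) (fun y => psi φ n ‖y - k‖) x ≤ 2 * (ε / (8 * C)) := by
        have := (abs_le.1 hMM).2
        linarith
      calc C * QQ (η/4) (fun y => psi φ n ‖y - k‖) x ≤ C * (2 * (ε / (8 * C))) := mul_le_mul_of_nonneg_left h3 hC0.le
        _ = ε / 4 := by field_simp; ring
  obtain ⟨L, hL, hlip⟩ := MM_lip (N := m+3) hr
  refine ⟨min (η/4) (ε / (4 * (B * L + 1))), by positivity, fun {x} hx => ?_⟩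
  have hx1 : dist x k ≤ η / 4 := (lt_of_lt_of_le hx (min_le_left _ _)).le
  have hx2 : dist x k ≤ ε / (4 * (B * L + 1)) := (lt_of_lt_of_le hx (min_le_right _ _)).le
  have hfin : ∀ n, |W n x - W n k| ≤ ε / 2 := by
    intro n
    have e1 := h.mv n _ x hr
    have e2 := h.mv n _ k hr
    have q1 := hQ n x hx1
    have q2 := hQ n k (by rw [dist_self]; positivity)
    have l1 := hlip (W n) B (h.Wc n) (fun y => by rw [abs_of_pos (h.pos n y)]; exact hB n y) x k
    rw [← dist_eq_norm] at l1
    have l2 : B * L * dist x k ≤ ε / 4 := by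
      have h4 : (B * L + 1) * dist x k ≤ (B * L + 1) * (ε / (4 * (B * L + 1))) :=
        mul_le_mul_of_nonneg_left hx2 (by positivity)
      have h5 : (B * L + 1) * (ε / (4 * (B * L + 1))) = ε / 4 := by field_simp
      have : 0 ≤ dist x k := dist_nonneg
      linarith
    have l3 := abs_le.1 (l1.trans l2)
    rw [abs_le]
    constructor <;> linarith
  have : |w x - w k| ≤ ε / 2 :=
    le_of_tendsto ((hlim x).sub (hlim k)).abs (Eventually.of_forall hfin)
  rw [Real.dist_eq]
  linarith

/-- Theorem 4.1 (minimal solution part): under the integral conditions, there exists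
a minimal ground-state solution, which extends continuously and positively to `ℝ^N`
iff `∫₀¹ r φ(r) dr < ∞`. -/
theorem statement_12 {N : ℕ} (hN : 3 ≤ N) (K : Set (EuclideanSpace ℝ (Fin N)))
    (hKfin : K.Finite) (hKne : K.Nonempty) (p : ℝ) (hp : 0 < p)
    (γ : NNReal) (hγ0 : 0 < γ) (hγ1 : γ < 1) (φ : ℝ → ℝ)
    (hφpos : ∀ r : ℝ, 0 < r → 0 < φ r)
    (hφhold : ∀ s : Set ℝ, IsCompact s → s ⊆ Ioi (0:ℝ) → ∃ C : NNReal, HolderOnWith C γ φ s)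
    (hmono : ∃ r₁ : ℝ, 0 < r₁ ∧ (MonotoneOn φ (Ici r₁) ∨ AntitoneOn φ (Ici r₁)))
    (hint1 : IntegrableOn (fun r : ℝ => r * φ r) (Ioi (1:ℝ)) volume)
    (hint2 : IntegrableOn (fun r : ℝ => r ^ ((1 + p) * ((N:ℝ) - 2) + 1) * φ r)
      (Ioo (0:ℝ) 1) volume) :
    ∃ w : EuclideanSpace ℝ (Fin N) → ℝ,
      ContDiffOn ℝ 2 w Kᶜ ∧
      (∀ x ∈ Kᶜ, 0 < w x ∧ -laplacian w x = φ (infDist x K) * w x ^ (-p)) ∧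
      Tendsto w (Filter.cocompact (EuclideanSpace ℝ (Fin N))) (nhds 0) ∧
      (∀ u : EuclideanSpace ℝ (Fin N) → ℝ,
        ContDiffOn ℝ 2 u Kᶜ →
        (∀ x ∈ Kᶜ, 0 < u x ∧ φ (infDist x K) * u x ^ (-p) ≤ -laplacian u x) →
        ∀ x ∈ Kᶜ, w x ≤ u x) ∧
      ((∃ v : EuclideanSpace ℝ (Fin N) → ℝ, Continuous v ∧ (∀ x, 0 < v x) ∧
          ∀ x ∈ Kᶜ, v x = w x) ↔
        IntegrableOn (fun r : ℝ => r * φ r) (Ioo (0:ℝ) 1) volume) := by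
  obtain ⟨m, rfl⟩ : ∃ m, N = m + 3 := ⟨N - 3, by omega⟩
  have hφc := phi_cont hγ0 hφhold
  obtain ⟨V, hV1, hV2, hV3⟩ := exists_super hKfin hKne hp hφpos hφc hint1 hint2
  obtain ⟨W, f, w, h⟩ := exists_AS hN hKfin hKne hp hφpos hφc
  obtain ⟨s1, s2⟩ := h.sol hKfin hKne hp hφpos hγ0 hγ1 hφhold hV1.continuousOn (h.le V hV1 hV2)
  refine ⟨w, s1, s2, ?_, ?_, ?_, ?_⟩
  · refine squeeze_zero' ?_ ?_ hV3
    · filter_upwards [hKfin.isCompact.compl_mem_cocompact] with x hx using (s2 x hx).1.le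
    · filter_upwards [hKfin.isCompact.compl_mem_cocompact] with x hx
      exact (h.lim fun n => h.le V hV1 hV2 n x hx).2.2.1
  · intro u hu1 hu2 x hx
    exact (h.lim fun n => h.le u hu1 hu2 n x hx).2.2.1
  · rintro ⟨v, hv1, hv2, hv3⟩
    exact int_of_ext hKfin hKne hp hφpos hφc s1 s2 hv1 hv2 hv3
  · intro hb
    obtain ⟨V', hV1', hV2', B, hB⟩ := exists_super_bdd hKfin hKne hp hφpos hφc hint1 hb
    have hWB : ∀ n x, W n x ≤ B := by
      intro n x
      have hcl : IsClosed {x : Eu (m+3) | W n x ≤ B} := isClosed_le (h.Wc n) continuous_const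
      exact hcl.closure_subset_iff.2 (fun x hx => (h.le V' hV1' hV2' n x hx).trans (hB x)) (dense_compl_fin hKfin x)
    refine ⟨w, continuous_iff_continuousAt.2 fun x => ?_, fun x => (h.lim fun n => hWB n x).2.2.2, fun x _ => rfl⟩
    by_cases hx : x ∈ K
    · exact h.cont_at hKfin hp hφpos hφc (adm_phi hφpos hφc hint1 hb) hb hWB hx
    · exact s1.continuousOn.continuousAt (hKfin.isClosed.isOpen_compl.mem_nhds hx)
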